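/- arXiv:2206.01574 — 2 statements merged into one kernel-verified Lean document; each statement's English description precedes it below -/
import Mathlib

section
/- For every ε > 0 and c ≥ 1 there is a constant C = C(ε, c, φ₁, φ₂) > 0 such that the following holds. Let R ≥ 2, β ∈ [1/3,1], and let r, r' be integers with R^{1/3} ≤ r ≤ min(R^{1/2}, R^β), r ≤ r' ≤ R^β, and r' ≤ R^ε r; set β₁ = log r / log(R/r) ∈ [1/2,1]. For each small cap γ at scale r for R, let h_γ : ℝ³ → ℂ be a Schwartz function whose Fourier transform is supported in cγ, and let ω_γ : ℝ³ → [0,∞) be an integrable function with ∫ ω_γ ≤ c whose Fourier transform is supported in the translate of γ by minus its centroid. Set g = ∑_γ |h_γ|² * ω_γ and g^h = g − g * ρ̌_{≤(r')^{−1}}. Then ∫_{ℝ³} |g^h|^{2 + 2/β₁} ≤ C R^{Cε} r R ∑_γ ‖h_γ‖_{L^{4 + 4/β₁}(ℝ³)}^{4 + 4/β₁}. -/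
open MeasureTheory Real Complex Set Finset
open scoped FourierTransform Convolution Pointwise

noncomputable section

abbrev R3 : Type := EuclideanSpace ℝ (Fin 3)

/-- The `l`-th small cap at scale `r` for `R`. -/
def smallCapI (R : ℝ) (r l : ℕ) : Set R3 :=
  {ξ | (l : ℝ) / r ≤ ξ 0 ∧ ξ 0 < ((l : ℝ) + 1) / r ∧
       |ξ 1 - (ξ 0)^2| ≤ ((r:ℝ)⁻¹)^2 ∧
       |ξ 2 - 3*(ξ 0)*(ξ 1) + 2*(ξ 0)^3| ≤ R⁻¹}

/-- The centroid (center of mass) of a set `A ⊆ ℝ³`. -/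
def ctr (A : Set R3) : R3 := (volume A).toReal⁻¹ • ∫ x in A, x

/-- The dilate of `A` by the factor `c` about its centroid. -/
def dilate (c : ℝ) (A : Set R3) : Set R3 :=
  (fun x => ctr A + c • (x - ctr A)) '' A

/-- The translate of `A` by minus its centroid. -/
def recenter (A : Set R3) : Set R3 := (fun ξ => ξ - ctr A) '' A

/-- The low-frequency cutoff `ρ_{≤s⁻¹}(ξ) = φ₂(s(ξ₁,ξ₂)) φ₁(ξ₃)`. -/
def cutoff (φ₁ : ℝ → ℝ) (φ₂ : ℝ × ℝ → ℝ) (s : ℝ) : R3 → ℂ :=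
  fun ξ => ((φ₂ (s * ξ 0, s * ξ 1) * φ₁ (ξ 2) : ℝ) : ℂ)

/-- The square-function piece `|h|² ∗ ω` (as a complex-valued function). -/
def piece (h : R3 → ℂ) (ω : R3 → ℝ) : R3 → ℂ :=
  convolution (fun x => ((‖h x‖ ^ 2 : ℝ) : ℂ)) (fun x => ((ω x : ℝ) : ℂ))
    (ContinuousLinearMap.mul ℂ ℂ) volume

/-- The low part `g ∗ ρ̌_{≤s⁻¹}` of a function `g`. -/
def lowPart (φ₁ : ℝ → ℝ) (φ₂ : ℝ × ℝ → ℝ) (s : ℝ) (g : R3 → ℂ) : R3 → ℂ :=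
  convolution g (𝓕⁻ (cutoff φ₁ φ₂ s)) (ContinuousLinearMap.mul ℂ ℂ) volume

lemma planch (f : R3 → ℂ) (h1 : Integrable f) (h2 : MemLp f 2) :
    ∫⁻ ξ, ‖𝓕 f ξ‖ₑ ^ 2 = ∫⁻ x, ‖f x‖ₑ ^ 2 := by
  set F : Lp (α := R3) ℂ 2 := h2.toLp f with hF
  have hcont : Continuous (𝓕 f) :=
    VectorFourier.fourierIntegral_continuous Real.continuous_fourierChar
      continuous_inner h1
  have key : ((𝓕 F : Lp (α := R3) ℂ 2 volume) : R3 → ℂ) =ᵐ[volume] 𝓕 f := by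
    apply ae_eq_of_integral_contDiff_smul_eq
    · exact (Lp.memLp _).locallyIntegrable (by norm_num)
    · exact hcont.locallyIntegrable
    · intro g g_smooth g_cpt
      have hg₁ : HasCompactSupport (Complex.ofRealCLM ∘ g) := g_cpt.comp_left rfl
      have hg₂ : ContDiff ℝ (⊤ : ℕ∞) (Complex.ofRealCLM ∘ g) := by fun_prop
      set G := hg₁.toSchwartzMap hg₂ with hG
      have e1 := congrArg (fun T => T G) (MeasureTheory.Lp.fourier_toTemperedDistribution_eq F)
      simp only [TemperedDistribution.fourier_apply, Lp.toTemperedDistribution_apply] at e1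
      have e2 : ∫ x, (𝓕 G) x • F x = ∫ x, (𝓕 (G : R3 → ℂ)) x • f x := by
        rw [← SchwartzMap.fourier_coe]
        apply integral_congr_ae
        filter_upwards [h2.coeFn_toLp] with x hx
        rw [hx]
      have e3 : ∫ x, (𝓕 (G : R3 → ℂ)) x • f x = ∫ x, G x • 𝓕 f x := by
        simpa using! VectorFourier.integral_bilin_fourierIntegral_eq_flip (ContinuousLinearMap.lsmul ℂ ℂ)
          (L := innerₗ R3) Real.continuous_fourierChar continuous_inner G.integrable h1
      rw [e2, e3] at e1
      simpa [hG] using e1.symm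
  have e : eLpNorm (𝓕 f) 2 volume = eLpNorm f 2 volume := by
    have hn := Lp.norm_fourier_eq F
    rw [Lp.norm_def, Lp.norm_def, ENNReal.toReal_eq_toReal_iff' (Lp.eLpNorm_ne_top _) (Lp.eLpNorm_ne_top _)] at hn
    rw [← eLpNorm_congr_ae key, hn, eLpNorm_congr_ae h2.coeFn_toLp]
  have e' := congrArg (fun t => t ^ (2:ℝ)) e
  simp only [eLpNorm_eq_lintegral_rpow_enorm_toReal (p := 2) (by norm_num) (by norm_num)] at e'
  simp only [ENNReal.toReal_ofNat, ← ENNReal.rpow_mul] at e'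
  norm_num at e'
  exact e'

lemma l2bound (s : Finset ℕ) (u K : ℕ → R3 → ℂ) (κ B : ℝ) (A : ℕ) 
    (hu : ∀ l, Integrable (u l)) (huB : ∀ l x, ‖u l x‖ ≤ B) (hK : ∀ l, Integrable (K l))
    (hκ : ∀ l, ∫ x, ‖K l x‖ ≤ κ)
    (hA : ∀ ξ, (s.filter (fun l => 𝓕 (K l) ξ ≠ 0)).card ≤ A) :
    ∫⁻ x, ‖∑ l ∈ s, convolution (u l) (K l) (ContinuousLinearMap.mul ℂ ℂ) volume x‖ₑ ^ 2 ≤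
      ENNReal.ofReal (A * κ ^ 2) * ∑ l ∈ s, ∫⁻ x, ‖u l x‖ₑ ^ 2 := by
  have hmem : ∀ f : R3 → ℂ, ∀ M : ℝ, Integrable f → (∀ x, ‖f x‖ ≤ M) → MemLp f 2 := by
    intro f M hf hM
    rw [memLp_two_iff_integrable_sq_norm hf.1]
    apply (hf.norm.const_mul M).mono' (hf.1.norm.pow 2)
    filter_upwards with x
    rw [show ((fun x => ‖f x‖) ^ 2) x = ‖f x‖ ^ 2 from rfl, Real.norm_of_nonneg (sq_nonneg _), sq]
    exact mul_le_mul_of_nonneg_right (hM x) (norm_nonneg _)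
  have hB : 0 ≤ B := (norm_nonneg _).trans (huB 0 0)
  have hS1 : ∀ l, Integrable (convolution (u l) (K l) (ContinuousLinearMap.mul ℂ ℂ) volume) :=
    fun l => (hu l).integrable_convolution _ (hK l)
  have hS : Integrable (fun x => ∑ l ∈ s, convolution (u l) (K l) (ContinuousLinearMap.mul ℂ ℂ) volume x) :=
    integrable_finsetSum _ (fun l _ => hS1 l)
  have hSb : ∀ l x, ‖convolution (u l) (K l) (ContinuousLinearMap.mul ℂ ℂ) volume x‖ ≤ B * κ := by
    intro l x
    unfold MeasureTheory.convolution
    calc ‖∫ t, (ContinuousLinearMap.mul ℂ ℂ) (u l t) (K l (x - t))‖ 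
        ≤ ∫ t, B * ‖K l (x - t)‖ := by
          apply norm_integral_le_of_norm_le
          · exact ((hK l).comp_sub_left x).norm.const_mul B
          · filter_upwards with t
            simp only [ContinuousLinearMap.mul_apply', norm_mul]
            exact mul_le_mul_of_nonneg_right (huB l t) (norm_nonneg _)
      _ = B * ∫ t, ‖K l t‖ := by
          rw [integral_const_mul, integral_sub_left_eq_self (fun t => ‖K l t‖) volume x]
      _ ≤ B * κ := mul_le_mul_of_nonneg_left (hκ l) hB
  have hSm : MemLp (fun x => ∑ l ∈ s, convolution (u l) (K l) (ContinuousLinearMap.mul ℂ ℂ) volume x) 2 := by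
    apply hmem _ (∑ l ∈ s, B * κ) hS
    intro x
    exact (norm_sum_le _ _).trans (Finset.sum_le_sum fun l _ => hSb l x)
  have hFS : ∀ ξ, 𝓕 (fun x => ∑ l ∈ s, convolution (u l) (K l) (ContinuousLinearMap.mul ℂ ℂ) volume x) ξ
      = ∑ l ∈ s, 𝓕 (u l) ξ * 𝓕 (K l) ξ := by
    intro ξ
    simp_rw [← Real.fourier_mul_convolution_eq (hu _) (hK _)]
    simp only [Real.fourier_eq]
    simp_rw [Finset.smul_sum]
    rw [integral_finsetSum]
    intro l _
    simpa using (Real.fourierIntegral_convergent_iff ξ).2 (hS1 l)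
  have hFK : ∀ l ξ, ‖𝓕 (K l) ξ‖ ≤ κ := fun l ξ =>
    (VectorFourier.norm_fourierIntegral_le_integral_norm _ _ _ _ _).trans (hκ l)
  have hκ0 : 0 ≤ κ := (integral_nonneg fun _ => norm_nonneg _).trans (hκ 0)
  have hFuc : ∀ l, Continuous (𝓕 (u l)) := fun l =>
    VectorFourier.fourierIntegral_continuous Real.continuous_fourierChar continuous_inner (hu l)
  have hpt : ∀ ξ, ‖∑ l ∈ s, 𝓕 (u l) ξ * 𝓕 (K l) ξ‖ ^ 2 ≤ A * κ ^ 2 * ∑ l ∈ s, ‖𝓕 (u l) ξ‖ ^ 2 := by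
    intro ξ
    set s' := s.filter (fun l => 𝓕 (K l) ξ ≠ 0)
    have e1 : ∑ l ∈ s, 𝓕 (u l) ξ * 𝓕 (K l) ξ = ∑ l ∈ s', 𝓕 (u l) ξ * 𝓕 (K l) ξ := by
      rw [Finset.sum_filter_of_ne]
      intro l _ h
      exact right_ne_zero_of_mul h
    rw [e1]
    calc ‖∑ l ∈ s', 𝓕 (u l) ξ * 𝓕 (K l) ξ‖ ^ 2 ≤ (∑ l ∈ s', ‖𝓕 (u l) ξ‖ * κ) ^ 2 := by
          gcongr
          refine (norm_sum_le _ _).trans (Finset.sum_le_sum fun l _ => ?_)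
          rw [norm_mul]
          exact mul_le_mul_of_nonneg_left (hFK l ξ) (norm_nonneg _)
      _ ≤ s'.card * ∑ l ∈ s', (‖𝓕 (u l) ξ‖ * κ) ^ 2 := sq_sum_le_card_mul_sum_sq
      _ ≤ A * ∑ l ∈ s, (‖𝓕 (u l) ξ‖ * κ) ^ 2 := by
          gcongr
          · exact hA ξ
          · exact Finset.filter_subset _ _
      _ = _ := by
          simp_rw [mul_pow]
          rw [← Finset.sum_mul]; ring
  rw [← planch _ hS hSm]
  calc _ ≤ ∫⁻ ξ, ENNReal.ofReal (A * κ ^ 2) * ∑ l ∈ s, ‖𝓕 (u l) ξ‖ₑ ^ 2 := by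
        apply lintegral_mono
        intro ξ
        simp only
        rw [hFS ξ]
        have := ENNReal.ofReal_le_ofReal (hpt ξ)
        rw [ENNReal.ofReal_mul (by positivity), ENNReal.ofReal_sum_of_nonneg (fun _ _ => by positivity)] at this
        simpa [ENNReal.ofReal_pow] using this
    _ = _ := by
        rw [lintegral_const_mul _ (by
          refine Finset.measurable_sum _ fun l _ => ?_
          exact (hFuc l).enorm.measurable.pow_const 2)]
        rw [lintegral_finsetSum _ (fun l _ => (hFuc l).enorm.measurable.pow_const 2)]
        congr 1
        apply Finset.sum_congr rfl
        intro l _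
        exact planch _ (hu l) (hmem _ B (hu l) (huB l))

lemma conv_exists (u K : R3 → ℂ) (B : ℝ) (hu : AEStronglyMeasurable u volume) (huB : ∀ x, ‖u x‖ ≤ B)
    (hK : Integrable K) (x : R3) : ConvolutionExistsAt u K x (ContinuousLinearMap.mul ℂ ℂ) volume := by
  unfold ConvolutionExistsAt
  simp only [ContinuousLinearMap.mul_apply']
  exact (hK.comp_sub_left x).bdd_mul hu (Filter.Eventually.of_forall huB)

lemma conv_bound (u K : R3 → ℂ) (B κ : ℝ) (huB : ∀ x, ‖u x‖ ≤ B)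
    (hK : Integrable K) (hκ : ∫ x, ‖K x‖ ≤ κ) (x : R3) :
    ‖MeasureTheory.convolution u K (ContinuousLinearMap.mul ℂ ℂ) volume x‖ ≤ B * κ := by
  have hB : 0 ≤ B := (norm_nonneg _).trans (huB 0)
  unfold MeasureTheory.convolution
  calc ‖∫ t, (ContinuousLinearMap.mul ℂ ℂ) (u t) (K (x - t))‖ 
      ≤ ∫ t, B * ‖K (x - t)‖ := by
        apply norm_integral_le_of_norm_le
        · exact (hK.comp_sub_left x).norm.const_mul B
        · filter_upwards with t
          simp only [ContinuousLinearMap.mul_apply', norm_mul]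
          exact mul_le_mul_of_nonneg_right (huB t) (norm_nonneg _)
    _ = B * ∫ t, ‖K t‖ := by
        rw [integral_const_mul, integral_sub_left_eq_self (fun t => ‖K t‖) volume x]
    _ ≤ B * κ := mul_le_mul_of_nonneg_left hκ hB

lemma weak (s : Finset ℕ) (f : ℕ → R3 → ℝ) (K : ℕ → R3 → ℂ) (κ B N : ℝ) (A : ℕ) 
    (hfm : ∀ l, Measurable (f l)) (hf0 : ∀ l x, 0 ≤ f l x)
    (hf : ∀ l, Integrable (f l)) (hfB : ∀ l x, f l x ≤ B) (hK : ∀ l, Integrable (K l))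
    (hκ : ∀ l, ∫ x, ‖K l x‖ ≤ κ) (hκ0 : 0 < κ) (hN : s.card ≤ N) (hN0 : 0 < N)
    (hA : ∀ ξ, (s.filter (fun l => 𝓕 (K l) ξ ≠ 0)).card ≤ A) (t : ℝ) (ht : 0 < t) :
    volume {x | t < ‖∑ l ∈ s, MeasureTheory.convolution (fun x => (f l x : ℂ)) (K l)
        (ContinuousLinearMap.mul ℂ ℂ) volume x‖} ≤
      ENNReal.ofReal (4 * (A * κ ^ 2) / t ^ 2) *
        ∑ l ∈ s, ∫⁻ x in {x | t < 2 * κ * N * f l x}, ENNReal.ofReal (f l x ^ 2) := by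
  set S : ℕ → Set R3 := fun l => {x | t < 2 * κ * N * f l x} with hS
  have hSm : ∀ l, MeasurableSet (S l) := fun l =>
    measurableSet_lt measurable_const ((hfm l).const_mul _)
  set u : ℕ → R3 → ℂ := fun l => (S l).indicator (fun x => (f l x : ℂ)) with hu
  set v : ℕ → R3 → ℂ := fun l => (S l)ᶜ.indicator (fun x => (f l x : ℂ)) with hv
  have hfi : ∀ l, Integrable (fun x => (f l x : ℂ)) := fun l => (hf l).ofReal
  have hui : ∀ l, Integrable (u l) := fun l => (hfi l).indicator (hSm l)
  have hvi : ∀ l, Integrable (v l) := fun l => (hfi l).indicator (hSm l).compl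
  have huB : ∀ l x, ‖u l x‖ ≤ B := by
    intro l x
    refine (norm_indicator_le_norm_self _ _).trans ?_
    rw [Complex.norm_real, Real.norm_of_nonneg (hf0 l x)]; exact hfB l x
  have hvB : ∀ l x, ‖v l x‖ ≤ t / (2 * κ * N) := by
    intro l x
    simp only [hv, Set.indicator]
    split_ifs with h
    · rw [Complex.norm_real, Real.norm_of_nonneg (hf0 l x)]
      simp only [hS, Set.mem_compl_iff, Set.mem_ofPred_eq, not_lt] at h
      rw [le_div_iff₀ (by positivity)]; linarith
    · simp; positivity
  have hsplit : ∀ l x, MeasureTheory.convolution (fun x => (f l x : ℂ)) (K l)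
        (ContinuousLinearMap.mul ℂ ℂ) volume x = 
        MeasureTheory.convolution (u l) (K l) (ContinuousLinearMap.mul ℂ ℂ) volume x + 
        MeasureTheory.convolution (v l) (K l) (ContinuousLinearMap.mul ℂ ℂ) volume x := by
    intro l x
    have : (fun x => (f l x : ℂ)) = u l + v l := by
      simp only [hu, hv]; rw [Set.indicator_self_add_compl]
    rw [this]
    exact (conv_exists _ _ B (hui l).1 (huB l) (hK l) x).add_distrib
      (conv_exists _ _ _ (hvi l).1 (hvB l) (hK l) x)
  have hsub : {x | t < ‖∑ l ∈ s, MeasureTheory.convolution (fun x => (f l x : ℂ)) (K l)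
        (ContinuousLinearMap.mul ℂ ℂ) volume x‖} ⊆ 
      {x | ENNReal.ofReal (t ^ 2 / 4) ≤ ‖∑ l ∈ s, MeasureTheory.convolution (u l) (K l)
        (ContinuousLinearMap.mul ℂ ℂ) volume x‖ₑ ^ 2} := by
    intro x hx
    simp only [Set.mem_ofPred_eq] at hx ⊢
    simp_rw [hsplit, Finset.sum_add_distrib] at hx
    have h1 : ‖∑ l ∈ s, MeasureTheory.convolution (v l) (K l)
        (ContinuousLinearMap.mul ℂ ℂ) volume x‖ ≤ t / 2 := by
      calc _ ≤ ∑ l ∈ s, t / (2 * κ * N) * κ := (norm_sum_le _ _).trans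
            (Finset.sum_le_sum fun l _ => conv_bound _ _ _ _ (hvB l) (hK l) (hκ l) x)
        _ = s.card * (t / (2 * N)) := by
            rw [Finset.sum_const, nsmul_eq_mul]; field_simp
        _ ≤ N * (t / (2 * N)) := by gcongr
        _ = t / 2 := by field_simp
    have h2 := norm_add_le (∑ l ∈ s, MeasureTheory.convolution (u l) (K l)
        (ContinuousLinearMap.mul ℂ ℂ) volume x) (∑ l ∈ s, MeasureTheory.convolution (v l) (K l)
        (ContinuousLinearMap.mul ℂ ℂ) volume x)
    have h3 : t / 2 ≤ ‖∑ l ∈ s, MeasureTheory.convolution (u l) (K l)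
        (ContinuousLinearMap.mul ℂ ℂ) volume x‖ := by linarith
    rw [← ofReal_norm, ← ENNReal.ofReal_pow (norm_nonneg _)]
    apply ENNReal.ofReal_le_ofReal
    nlinarith
  have hL := l2bound s u K κ B A hui huB hK hκ hA
  have hcheb := meas_ge_le_lintegral_div (μ := volume) (f := fun x => ‖∑ l ∈ s, MeasureTheory.convolution (u l) (K l)
        (ContinuousLinearMap.mul ℂ ℂ) volume x‖ₑ ^ 2) (by
      refine AEMeasurable.pow_const ?_ 2
      refine AEStronglyMeasurable.enorm ?_
      exact (integrable_finsetSum _ fun l _ => (hui l).integrable_convolution _ (hK l)).1)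
      (ε := ENNReal.ofReal (t ^ 2 / 4)) (by positivity) ENNReal.ofReal_ne_top
  refine (measure_mono hsub).trans (hcheb.trans ?_)
  have hu2 : ∀ l, ∫⁻ x, ‖u l x‖ₑ ^ 2 = ∫⁻ x in S l, ENNReal.ofReal (f l x ^ 2) := by
    intro l
    rw [← lintegral_indicator (hSm l)]
    congr 1 with x
    simp only [hu, Set.indicator]
    split_ifs with h
    · rw [← ofReal_norm, ← ENNReal.ofReal_pow (norm_nonneg _), Complex.norm_real, Real.norm_of_nonneg (hf0 l x)]
    · simp
  simp_rw [hu2] at hL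
  rw [ENNReal.div_eq_inv_mul, ← ENNReal.ofReal_inv_of_pos (by positivity)]
  calc _ ≤ ENNReal.ofReal (t ^ 2 / 4)⁻¹ * (ENNReal.ofReal (A * κ ^ 2) * ∑ l ∈ s, ∫⁻ x in S l, ENNReal.ofReal (f l x ^ 2)) := by
        gcongr
    _ = _ := by
        rw [← mul_assoc, ← ENNReal.ofReal_mul (by positivity)]
        congr 2
        field_simp

lemma strong (s : Finset ℕ) (f : ℕ → R3 → ℝ) (K : ℕ → R3 → ℂ) (κ B N p : ℝ) (A : ℕ) 
    (hfm : ∀ l, Measurable (f l)) (hf0 : ∀ l x, 0 ≤ f l x)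
    (hf : ∀ l, Integrable (f l)) (hfB : ∀ l x, f l x ≤ B) (hK : ∀ l, Integrable (K l))
    (hκ : ∀ l, ∫ x, ‖K l x‖ ≤ κ) (hκ0 : 0 < κ) (hN : s.card ≤ N) (hN0 : 0 < N)
    (hA : ∀ ξ, (s.filter (fun l => 𝓕 (K l) ξ ≠ 0)).card ≤ A) (hp : 2 < p) :
    ∫⁻ x, ENNReal.ofReal (‖∑ l ∈ s, MeasureTheory.convolution (fun x => (f l x : ℂ)) (K l)
        (ContinuousLinearMap.mul ℂ ℂ) volume x‖ ^ p) ≤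
      ENNReal.ofReal (p / (p - 2) * (4 * (A * κ ^ 2)) * (2 * κ * N) ^ (p - 2)) *
        ∑ l ∈ s, ∫⁻ x, ENNReal.ofReal (f l x ^ p) := by
  have hq : 0 < p - 2 := by linarith
  rw [lintegral_rpow_eq_lintegral_meas_lt_mul volume (Filter.Eventually.of_forall fun x => norm_nonneg _) (by
      refine AEStronglyMeasurable.aemeasurable ?_
      refine AEStronglyMeasurable.norm ?_
      exact (integrable_finsetSum _ fun l _ => (hf l).ofReal.integrable_convolution _ (hK l)).1) (by linarith)]
  set ν : ℕ → Measure R3 := fun l => volume.withDensity (fun x => ENNReal.ofReal (f l x ^ 2)) with hν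
  have hfm2 : ∀ l, Measurable (fun x => ENNReal.ofReal (f l x ^ 2)) := fun l =>
    ((hfm l).pow_const 2).ennreal_ofReal
  have hgm : ∀ l, Measurable (fun x => 2 * κ * N * f l x) := fun l => (hfm l).const_mul _
  have hνS : ∀ l t, ν l {x | t < 2 * κ * N * f l x} = ∫⁻ x in {x | t < 2 * κ * N * f l x}, ENNReal.ofReal (f l x ^ 2) := by
    intro l t
    simp only [hν]
    rw [withDensity_apply _ (measurableSet_lt measurable_const (hgm l))]
  have hanti : ∀ l, Measurable (fun t => ν l {x | t < 2 * κ * N * f l x}) := by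
    intro l
    apply Antitone.measurable
    intro a b hab
    apply measure_mono
    intro x hx
    exact lt_of_le_of_lt hab hx
  have hint : ∀ l, ∫⁻ t in Ioi (0:ℝ), ν l {x | t < 2 * κ * N * f l x} * ENNReal.ofReal (t ^ (p - 2 - 1))
      = ENNReal.ofReal (1 / (p-2)  * (2 * κ * N) ^ (p - 2)) * ∫⁻ x, ENNReal.ofReal (f l x ^ p) := by
    intro l
    have h := lintegral_rpow_eq_lintegral_meas_lt_mul (μ := ν l) (f := fun x => 2 * κ * N * f l x) 
      (Filter.Eventually.of_forall fun x => by have := hf0 l x; positivity) (hgm l).aemeasurable hq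
    have h' : ∫⁻ x, ENNReal.ofReal ((2 * κ * N * f l x) ^ (p - 2)) ∂(ν l) = 
        ENNReal.ofReal ((2 * κ * N) ^ (p - 2)) * ∫⁻ x, ENNReal.ofReal (f l x ^ p) := by
      simp only [hν]
      rw [lintegral_withDensity_eq_lintegral_mul _ (hfm2 l) ((hgm l).pow_const _).ennreal_ofReal]
      rw [← lintegral_const_mul _ ((hfm l).pow_const p).ennreal_ofReal]
      congr 1 with x
      have h0 := hf0 l x
      rw [Pi.mul_apply, ← ENNReal.ofReal_mul (by positivity), ← ENNReal.ofReal_mul (by positivity)]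
      congr 1
      rw [Real.mul_rpow (by positivity) h0]
      rcases h0.eq_or_lt with h0 | h0
      · rw [← h0, Real.zero_rpow (by linarith), Real.zero_rpow (by linarith)]; simp
      · have : f l x ^ p = f l x ^ (2:ℝ) * f l x ^ (p - 2) := by
          rw [← Real.rpow_add h0]; congr 1; ring
        rw [this, Real.rpow_two]; ring
    rw [h'] at h
    have h2 : ENNReal.ofReal (1 / (p - 2)) * ENNReal.ofReal (p - 2) = 1 := by
      rw [← ENNReal.ofReal_mul (by positivity), one_div, inv_mul_cancel₀ hq.ne', ENNReal.ofReal_one]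
    rw [ENNReal.ofReal_mul (by positivity), mul_assoc (ENNReal.ofReal _), h, ← mul_assoc (ENNReal.ofReal _), h2, one_mul]
  calc _ ≤ ENNReal.ofReal p * ∫⁻ t in Ioi (0:ℝ), ENNReal.ofReal (4 * (A * κ ^ 2)) * 
        ∑ l ∈ s, ν l {x | t < 2 * κ * N * f l x} * ENNReal.ofReal (t ^ (p - 2 - 1)) := by
        gcongr ENNReal.ofReal p * ?_
        apply setLIntegral_mono' measurableSet_Ioi
        intro t ht
        have ht' : 0 < t := ht
        have hw := weak s f K κ B N A hfm hf0 hf hfB hK hκ hκ0 hN hN0 hA t ht'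
        simp_rw [← hνS] at hw
        refine (mul_le_mul_left hw _).trans (le_of_eq ?_)
        rw [← Finset.sum_mul, mul_right_comm, ← ENNReal.ofReal_mul (by positivity)]
        rw [mul_comm (∑ l ∈ s, _) (ENNReal.ofReal _), ← mul_assoc (ENNReal.ofReal _) (ENNReal.ofReal _), ← ENNReal.ofReal_mul (by positivity)]
        congr 2
        have : t ^ (p - 1) = t ^ (2:ℝ) * t ^ (p - 2 - 1) := by
          rw [← Real.rpow_add ht']; congr 1; ring
        rw [this, Real.rpow_two]; field_simp
    _ = _ := by
        have hm : ∀ l, Measurable fun t : ℝ => ν l {x | t < 2 * κ * N * f l x} * ENNReal.ofReal (t ^ (p - 2 - 1)) :=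
          fun l => (hanti l).mul (measurable_id.pow_const _).ennreal_ofReal
        rw [lintegral_const_mul _ (Finset.measurable_sum _ fun l _ => hm l)]
        rw [lintegral_finsetSum _ fun l _ => hm l]
        simp_rw [hint]
        rw [← Finset.mul_sum, ← mul_assoc, ← mul_assoc, ← ENNReal.ofReal_mul (by linarith), ← ENNReal.ofReal_mul (by positivity)]
        congr 2
        ring

lemma ctr_mem (S : Set R3) (M : ℝ) (hM : S ⊆ Metric.closedBall 0 M) (h0 : volume S ≠ 0)
    (L : R3 →L[ℝ] ℝ) (a b : ℝ) (hL : ∀ x ∈ S, L x ∈ Set.Icc a b) : L (ctr S) ∈ Set.Icc a b := by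
  have hfin : volume S ≠ ⊤ := ne_top_of_le_ne_top measure_closedBall_lt_top.ne (measure_mono hM)
  have hint : IntegrableOn (fun x : R3 => x) S :=
    (continuous_id.continuousOn.integrableOn_compact (isCompact_closedBall 0 M)).mono_set hM
  have hLi : IntegrableOn (fun x : R3 => L x) S := L.integrable_comp hint
  have e : L (ctr S) = ⨍ x in S, L x := by
    rw [setAverage_eq, ctr, map_smul, L.integral_comp_comm hint]; rfl
  rw [e]
  have := Convex.set_average_mem (convex_Icc (𝕜 := ℝ) a b) isClosed_Icc h0 hfin (f := fun x => L x) 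
    (by
      have : ∀ x ∈ S, L x ∈ Set.Icc a b := hL
      have hcl : S ⊆ L ⁻¹' (Set.Icc a b) := hL
      have : ∀ᵐ x ∂(volume.restrict (L ⁻¹' (Set.Icc a b))), L x ∈ Set.Icc a b := 
        ae_restrict_mem (isClosed_Icc.preimage L.continuous).measurableSet
      exact ae_mono (Measure.restrict_mono hcl le_rfl) this) hLi
  exact this

lemma cap_coord (R : ℝ) (r l : ℕ) (hr : 1 ≤ r) (hl : l < r) (hR : (r:ℝ) ^ 2 ≤ R) (x : R3)
    (hx : x ∈ smallCapI R r l) :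
    x 0 ∈ Set.Icc ((l:ℝ)/r) ((l:ℝ)/r + (r:ℝ)⁻¹) ∧
    x 1 - 2 * ((l:ℝ)/r) * x 0 ∈ Set.Icc (-((l:ℝ)/r)^2 - 2 * ((r:ℝ)⁻¹)^2) (-((l:ℝ)/r)^2 + 2 * ((r:ℝ)⁻¹)^2) ∧
    x 2 ∈ Set.Icc (((l:ℝ)/r)^3 - 14 * (r:ℝ)⁻¹) (((l:ℝ)/r)^3 + 14 * (r:ℝ)⁻¹) := by
  obtain ⟨h1, h2, h3, h4⟩ := hx
  have hr0 : (1:ℝ) ≤ r := by exact_mod_cast hr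
  have ht0 : 0 ≤ (l:ℝ)/r := by positivity
  have ht1 : (l:ℝ)/r ≤ 1 := by
    rw [div_le_one (by linarith)]; exact_mod_cast hl.le
  have hd0 : 0 < (r:ℝ)⁻¹ := by positivity
  have hd1 : (r:ℝ)⁻¹ ≤ 1 := inv_le_one_of_one_le₀ hr0
  have hRd : R⁻¹ ≤ (r:ℝ)⁻¹ := by
    apply inv_anti₀ (by linarith); nlinarith
  rw [add_div, one_div] at h2
  set t := (l:ℝ)/r
  set d := (r:ℝ)⁻¹
  rw [abs_le] at h3 h4
  obtain ⟨a, ha⟩ : ∃ a, x 0 = t + a := ⟨x 0 - t, by ring⟩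
  obtain ⟨e, he⟩ : ∃ e, x 1 = x 0 ^ 2 + e := ⟨x 1 - x 0 ^ 2, by ring⟩
  have ha0 : 0 ≤ a := by linarith
  have had : a ≤ d := by linarith
  have he1 : -d^2 ≤ e := by linarith
  have he2 : e ≤ d^2 := by linarith
  have hdd : d ^ 2 ≤ d := by nlinarith
  have haa : a ^ 2 ≤ d ^ 2 := by gcongr
  have h5 : x 2 - t ^ 3 = a * (3 * t^2 + 3 * t * a + a^2) + 3 * (t + a) * e + (x 2 - 3*(x 0)*(x 1) + 2*(x 0)^3) := by
    rw [he, ha]; ring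
  have h6 : a * (3 * t^2 + 3 * t * a + a^2) ≤ 7 * d := by
    have : 3 * t^2 + 3 * t * a + a^2 ≤ 7 := by nlinarith
    calc _ ≤ a * 7 := by gcongr
      _ ≤ _ := by linarith
  have h6' : 0 ≤ a * (3 * t^2 + 3 * t * a + a^2) := by positivity
  have h7 : |3 * (t + a) * e| ≤ 6 * d := by
    rw [abs_mul, abs_of_nonneg (by positivity : 0 ≤ 3 * (t + a))]
    have : |e| ≤ d := abs_le.2 ⟨by linarith, by linarith⟩
    calc _ ≤ 6 * |e| := by gcongr; linarith
      _ ≤ _ := by gcongr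
  rw [abs_le] at h7
  refine ⟨⟨h1, h2.le⟩, ⟨?_, ?_⟩, ⟨?_, ?_⟩⟩
  · rw [he, ha]; nlinarith
  · rw [he, ha]; nlinarith
  · linarith
  · linarith

lemma cap_vol (R : ℝ) (r l : ℕ) (hr : 1 ≤ r) (hR : 0 < R) : volume (smallCapI R r l) ≠ 0 := by
  have hr0 : (1:ℝ) ≤ r := by exact_mod_cast hr
  set U : Set R3 := {ξ | (l : ℝ) / r < ξ 0 ∧ ξ 0 < ((l : ℝ) + 1) / r ∧
       |ξ 1 - (ξ 0)^2| < ((r:ℝ)⁻¹)^2 ∧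
       |ξ 2 - 3*(ξ 0)*(ξ 1) + 2*(ξ 0)^3| < R⁻¹} with hU
  have hsub : U ⊆ smallCapI R r l := fun x hx => ⟨hx.1.le, hx.2.1, hx.2.2.1.le, hx.2.2.2.le⟩
  have ho : IsOpen U := by
    have h1 : IsOpen {ξ : R3 | (l : ℝ) / r < ξ 0} := isOpen_lt (by fun_prop) (by fun_prop)
    have h2 : IsOpen {ξ : R3 | ξ 0 < ((l : ℝ) + 1) / r} := isOpen_lt (by fun_prop) (by fun_prop)
    have h3 : IsOpen {ξ : R3 | |ξ 1 - (ξ 0)^2| < ((r:ℝ)⁻¹)^2} :=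
      isOpen_lt (by fun_prop) (by fun_prop)
    have h4 : IsOpen {ξ : R3 | |ξ 2 - 3*(ξ 0)*(ξ 1) + 2*(ξ 0)^3| < R⁻¹} :=
      isOpen_lt (by fun_prop) (by fun_prop)
    exact h1.inter (h2.inter (h3.inter h4))
  have hne : U.Nonempty := by
    set a : ℝ := (l + 1/2) / r
    refine ⟨!₂[a, a^2, a^3], ?_, ?_, ?_, ?_⟩
    · simp only [a]; simp; gcongr; linarith
    · simp only [a]; simp; gcongr; norm_num
    · simp; positivity
    · simp
      rw [show a ^ 3 - 3 * a * a ^ 2 + 2 * a ^ 3 = 0 by ring]; simpa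
  exact ((ho.measure_pos volume hne).trans_le (measure_mono hsub)).ne'

lemma cap_bdd (R : ℝ) (r l : ℕ) (hr : 1 ≤ r) (hl : l < r) (hR : (r:ℝ) ^ 2 ≤ R) :
    smallCapI R r l ⊆ Metric.closedBall 0 100 := by
  intro x hx
  obtain ⟨⟨h1, h2⟩, ⟨h3, h4⟩, ⟨h5, h6⟩⟩ := cap_coord R r l hr hl hR x hx
  have hr0 : (1:ℝ) ≤ r := by exact_mod_cast hr
  have ht0 : 0 ≤ (l:ℝ)/r := by positivity
  have ht1 : (l:ℝ)/r ≤ 1 := by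
    rw [div_le_one (by linarith)]; exact_mod_cast hl.le
  have hd0 : 0 < (r:ℝ)⁻¹ := by positivity
  have hd1 : (r:ℝ)⁻¹ ≤ 1 := inv_le_one_of_one_le₀ hr0
  set t := (l:ℝ)/r
  set d := (r:ℝ)⁻¹
  have ht2 : t ^ 2 ≤ 1 := pow_le_one₀ ht0 ht1
  have ht3 : t ^ 3 ≤ 1 := pow_le_one₀ ht0 ht1
  have ht3' : 0 ≤ t ^ 3 := by positivity
  have ht2' : 0 ≤ t ^ 2 := by positivity
  have hd2 : d ^ 2 ≤ 1 := pow_le_one₀ hd0.le hd1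
  have h7 : 0 ≤ t * x 0 := mul_nonneg ht0 (by linarith)
  have h8 : t * x 0 ≤ 2 := by nlinarith
  have a0 : x 0 ^ 2 ≤ 4 := by nlinarith
  have a1 : x 1 ^ 2 ≤ 100 := by nlinarith
  have a2 : x 2 ^ 2 ≤ 225 := by nlinarith
  rw [mem_closedBall_zero_iff, EuclideanSpace.norm_eq, Fin.sum_univ_three]
  simp only [Real.norm_eq_abs, sq_abs]
  rw [Real.sqrt_le_left (by norm_num)]
  linarith

lemma recenter_coord (R : ℝ) (r l : ℕ) (hr : 1 ≤ r) (hl : l < r) (hR : (r:ℝ) ^ 2 ≤ R) (ξ : R3)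
    (hξ : ξ ∈ recenter (smallCapI R r l)) :
    |ξ 0| ≤ (r:ℝ)⁻¹ ∧ |ξ 1 - 2 * ((l:ℝ)/r) * ξ 0| ≤ 4 * ((r:ℝ)⁻¹)^2 ∧ |ξ 2| ≤ 28 * (r:ℝ)⁻¹ := by
  obtain ⟨x, hx, rfl⟩ := hξ
  have hr0 : (1:ℝ) ≤ r := by exact_mod_cast hr
  have hc := cap_coord R r l hr hl hR
  obtain ⟨⟨h1, h2⟩, ⟨h3, h4⟩, ⟨h5, h6⟩⟩ := hc x hx
  have hv := cap_vol R r l hr (by nlinarith)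
  have hb := cap_bdd R r l hr hl hR
  obtain ⟨k1, k2⟩ := ctr_mem _ _ hb hv (EuclideanSpace.proj 0) _ _ (fun x hx => (hc x hx).1)
  obtain ⟨k3, k4⟩ := ctr_mem _ _ hb hv (EuclideanSpace.proj 1 - (2 * ((l:ℝ)/r)) • EuclideanSpace.proj 0) _ _
    (fun x hx => (hc x hx).2.1)
  obtain ⟨k5, k6⟩ := ctr_mem _ _ hb hv (EuclideanSpace.proj 2) _ _ (fun x hx => (hc x hx).2.2)
  set m := ctr (smallCapI R r l)
  change (l:ℝ)/r ≤ m 0 at k1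
  change m 0 ≤ _ at k2
  change _ ≤ m 1 - 2 * ((l:ℝ)/r) * m 0 at k3
  change m 1 - 2 * ((l:ℝ)/r) * m 0 ≤ _ at k4
  change _ ≤ m 2 at k5
  change m 2 ≤ _ at k6
  simp only [PiLp.sub_apply]
  refine ⟨abs_le.2 ⟨?_, ?_⟩, abs_le.2 ⟨?_, ?_⟩, abs_le.2 ⟨?_, ?_⟩⟩ <;> linarith

lemma card_le_of_diam (T : Finset ℕ) (D : ℝ) (hD : 0 ≤ D) (h : ∀ a ∈ T, ∀ b ∈ T, |(a:ℝ) - b| ≤ D) :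
    (T.card : ℝ) ≤ D + 1 := by
  rcases T.eq_empty_or_nonempty with rfl | hne
  · simp; linarith
  · set m := T.min' hne
    have hsub : T ⊆ Finset.Icc m (m + ⌊D⌋₊) := by
      intro a ha
      rw [Finset.mem_Icc]
      have hma : m ≤ a := T.min'_le a ha
      refine ⟨hma, ?_⟩
      have h1 := (abs_le.1 (h a ha m (T.min'_mem hne))).2
      have : a - m ≤ ⌊D⌋₊ := by
        apply Nat.le_floor
        rw [Nat.cast_sub hma]; exact h1
      omega
    have := Finset.card_le_card hsub
    rw [Nat.card_Icc] at this
    have h2 : T.card ≤ ⌊D⌋₊ + 1 := by omega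
    have h3 : (T.card : ℝ) ≤ (⌊D⌋₊ : ℝ) + 1 := by exact_mod_cast h2
    have := Nat.floor_le hD
    linarith

lemma overlap (φ₁ : ℝ → ℝ) (φ₂ : ℝ × ℝ → ℝ) (hφ₁ : ∀ x : ℝ, |x| ≤ 1 → φ₁ x = 1)
    (hφ₂ : ∀ x : ℝ × ℝ, ‖x‖ ≤ 1 → φ₂ x = 1)
    (R E : ℝ) (r r' : ℕ) (hr : 1 ≤ r) (hR : (r:ℝ) ^ 2 ≤ R) (hE : 1 ≤ E) (hrr : (r:ℝ) ≤ r')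
    (hr' : (r':ℝ) ≤ E * r) (ξ : R3) (T : Finset ℕ)
    (hT : ∀ l ∈ T, l < r ∧ ξ ∈ recenter (smallCapI R r l) ∧ cutoff φ₁ φ₂ r' ξ ≠ 1) :
    (T.card : ℝ) ≤ 28 * E := by
  have hr0 : (1:ℝ) ≤ r := by exact_mod_cast hr
  have hr'0 : (1:ℝ) ≤ r' := hr0.trans hrr
  have hcard : (T.card : ℝ) ≤ r := by
    have : T ⊆ Finset.range r := fun l hl => Finset.mem_range.2 (hT l hl).1
    have := Finset.card_le_card this
    rw [Finset.card_range] at this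
    exact_mod_cast this
  rcases lt_or_ge (r:ℝ) 28 with h28 | h28
  · linarith
  have hbd : ∀ l ∈ T, 1 < r' * |ξ 0| ∨ 1 < r' * |ξ 1| := by
    intro l hl
    obtain ⟨h1, h2, h3⟩ := hT l hl
    by_contra hcon
    push Not at hcon
    apply h3
    have hc := (recenter_coord R r l hr h1 hR ξ h2).2.2
    have : 28 * (r:ℝ)⁻¹ ≤ 1 := by
      rw [← div_eq_mul_inv, div_le_one (by linarith)]; exact h28
    unfold cutoff
    rw [hφ₁ _ (hc.trans this), hφ₂]
    · simp
    · rw [Prod.norm_def]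
      simp only [Real.norm_eq_abs, abs_mul, Nat.abs_cast]
      exact max_le hcon.1 hcon.2
  rcases le_or_gt (1 / 4) (r' * |ξ 0|) with h0 | h0
  · have := card_le_of_diam T (16 * E) (by linarith) (by
      intro a ha b hb
      obtain ⟨ha1, ha2, -⟩ := hT a ha
      obtain ⟨hb1, hb2, -⟩ := hT b hb
      have ka := (recenter_coord R r a hr ha1 hR ξ ha2).2.1
      have kb := (recenter_coord R r b hr hb1 hR ξ hb2).2.1
      have k : |2 * (((a:ℝ) - b)/r) * ξ 0| ≤ 8 * ((r:ℝ)⁻¹)^2 := by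
        rw [show 2 * (((a:ℝ) - b)/r) * ξ 0 = (ξ 1 - 2 * ((b:ℝ)/r) * ξ 0) - (ξ 1 - 2 * ((a:ℝ)/r) * ξ 0) by ring]
        refine (abs_sub _ _).trans ?_
        linarith
      rw [abs_mul, abs_mul, abs_div, Nat.abs_cast, abs_two] at k
      have k2 : |(a:ℝ) - b| * (r * |ξ 0|) ≤ 4 := by
        have := mul_le_mul_of_nonneg_left k (by positivity : 0 ≤ (r:ℝ)^2)
        field_simp at this
        nlinarith
      have k3 : 1 ≤ 4 * E * (r * |ξ 0|) := by
        have : r' * |ξ 0| ≤ E * r * |ξ 0| := by gcongr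
        linarith
      calc |(a:ℝ) - b| ≤ |(a:ℝ) - b| * (4 * E * (r * |ξ 0|)) := le_mul_of_one_le_right (abs_nonneg _) k3
        _ = 4 * E * (|(a:ℝ) - b| * (r * |ξ 0|)) := by ring
        _ ≤ 4 * E * 4 := by gcongr
        _ = _ := by ring)
    linarith
  · rcases T.eq_empty_or_nonempty with rfl | ⟨l, hl⟩
    · simp; linarith
    obtain ⟨h1, h2, -⟩ := hT l hl
    have k := (recenter_coord R r l hr h1 hR ξ h2).2.1
    have hx1 : 1 < r' * |ξ 1| := by
      rcases hbd l hl with h | h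
      · linarith
      · exact h
    have ht0 : 0 ≤ (l:ℝ)/r := by positivity
    have ht1 : (l:ℝ)/r ≤ 1 := by
      rw [div_le_one (by linarith)]; exact_mod_cast h1.le
    have k1 : |ξ 1| ≤ 2 * |ξ 0| + 4 * ((r:ℝ)⁻¹)^2 := by
      have : |2 * ((l:ℝ)/r) * ξ 0| ≤ 2 * |ξ 0| := by
        rw [abs_mul, abs_of_nonneg (by positivity : 0 ≤ 2 * ((l:ℝ)/r))]
        gcongr; linarith
      have h := abs_add_le (ξ 1 - 2 * ((l:ℝ)/r) * ξ 0) (2 * ((l:ℝ)/r) * ξ 0)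
      rw [sub_add_cancel] at h
      linarith
    have k2 : 1 < 1/2 + 4 * (r' * ((r:ℝ)⁻¹)^2) := by
      have := mul_le_mul_of_nonneg_left k1 (by linarith : (0:ℝ) ≤ r')
      linarith
    have k3 : r' * ((r:ℝ)⁻¹)^2 ≤ E * (r:ℝ)⁻¹ := by
      calc r' * ((r:ℝ)⁻¹)^2 ≤ (E * r) * ((r:ℝ)⁻¹)^2 := by gcongr
        _ = _ := by field_simp
    have k4 : 1 < 8 * (E * (r:ℝ)⁻¹) := by linarith
    rw [← div_eq_mul_inv, ← mul_div_assoc, lt_div_iff₀ (by linarith)] at k4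
    linarith

/-- The anisotropic scaling `(x₁,x₂,x₃) ↦ (s x₁, s x₂, x₃)`. -/
def dil3 (s : ℝ) : R3 →ₗ[ℝ] R3 where
  toFun x := !₂[s * x 0, s * x 1, x 2]
  map_add' x y := by
    ext i; fin_cases i <;> simp <;> ring
  map_smul' a x := by
    ext i; fin_cases i <;> simp <;> ring

lemma dil3_apply (s : ℝ) (x : R3) : dil3 s x = !₂[s * x 0, s * x 1, x 2] := rfl

lemma dil3_inv (s t : ℝ) (h : s * t = 1) (x : R3) : dil3 s (dil3 t x) = x := by
  ext i; fin_cases i <;> simp [dil3_apply, ← mul_assoc, h]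

lemma dil3_symm (s : ℝ) (x y : R3) : inner ℝ (dil3 s x) y = inner ℝ x (dil3 s y) := by
  simp [dil3_apply, PiLp.inner_apply, Fin.sum_univ_three]; ring

lemma dil3_int {F : Type*} [NormedAddCommGroup F] [NormedSpace ℝ F] (s t : ℝ) (h : s * t = 1)
    (g : R3 → F) : ∫ x, g (dil3 s x) = |(LinearMap.det (dil3 s))⁻¹| • ∫ x, g x := by
  have h' : t * s = 1 := by rw [mul_comm]; exact h
  have hd : LinearMap.det (dil3 s) ≠ 0 := by
    have : LinearMap.det (dil3 s) * LinearMap.det (dil3 t) = 1 := by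
      rw [← LinearMap.det_comp, show dil3 s ∘ₗ dil3 t = LinearMap.id from
        LinearMap.ext (dil3_inv s t h), LinearMap.det_id]
    exact left_ne_zero_of_mul_eq_one this
  have hm := Measure.map_linearMap_addHaar_eq_smul_addHaar (volume : Measure R3) hd
  have he : MeasurableEmbedding (dil3 s) := by
    let e : R3 ≃ₜ R3 := 
      { toFun := dil3 s, invFun := dil3 t, left_inv := dil3_inv t s h', right_inv := dil3_inv s t h
        continuous_toFun := (dil3 s).continuous_of_finiteDimensional
        continuous_invFun := (dil3 t).continuous_of_finiteDimensional }
    exact e.measurableEmbedding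
  rw [← he.integral_map, hm, integral_smul_measure, ENNReal.toReal_ofReal (abs_nonneg _)]

lemma cutoff_scale (φ₁ : ℝ → ℝ) (φ₂ : ℝ × ℝ → ℝ) (s : ℝ) (ξ : R3) :
    cutoff φ₁ φ₂ s ξ = cutoff φ₁ φ₂ 1 (dil3 s ξ) := by
  simp [cutoff, dil3_apply]

lemma cutoff_inv_norm (φ₁ : ℝ → ℝ) (φ₂ : ℝ × ℝ → ℝ) (s : ℝ) (hs : 0 < s) :
    ∫ x, ‖𝓕⁻ (cutoff φ₁ φ₂ s) x‖ = ∫ x, ‖𝓕⁻ (cutoff φ₁ φ₂ 1) x‖ := by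
  have h1 : s * s⁻¹ = 1 := mul_inv_cancel₀ hs.ne'
  have h2 : s⁻¹ * s = 1 := inv_mul_cancel₀ hs.ne'
  set a := |(LinearMap.det (dil3 s))⁻¹| with ha
  set b := |(LinearMap.det (dil3 s⁻¹))⁻¹| with hb
  have hab : a * b = 1 := by
    rw [ha, hb, ← abs_mul, ← mul_inv, ← LinearMap.det_comp, show dil3 s ∘ₗ dil3 s⁻¹ = LinearMap.id from
        LinearMap.ext (dil3_inv s _ h1), LinearMap.det_id]; simp
  have key : ∀ x, 𝓕⁻ (cutoff φ₁ φ₂ s) x = a • 𝓕⁻ (cutoff φ₁ φ₂ 1) (dil3 s⁻¹ x) := by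
    intro x
    rw [Real.fourierInv_eq, Real.fourierInv_eq, ← dil3_int s s⁻¹ h1]
    congr 1
    ext v
    rw [← dil3_symm, dil3_inv _ _ h2, cutoff_scale]
  simp_rw [key, norm_smul, integral_const_mul]
  rw [dil3_int s⁻¹ s h2 (fun x => ‖𝓕⁻ (cutoff φ₁ φ₂ 1) x‖), smul_eq_mul, ← mul_assoc, ← hb,
    Real.norm_of_nonneg (abs_nonneg _), hab, one_mul]

lemma cutoff_schwartz (φ₁ : ℝ → ℝ) (φ₂ : ℝ × ℝ → ℝ) 
    (h1 : ContDiff ℝ (⊤ : ℕ∞) φ₁) (h2 : Function.support φ₁ ⊆ Metric.closedBall 0 2)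
    (h3 : ContDiff ℝ (⊤ : ℕ∞) φ₂) (h4 : Function.support φ₂ ⊆ Metric.closedBall 0 2)
    (s : ℝ) (hs : 1 ≤ s) : ∃ ψ : SchwartzMap R3 ℂ, ⇑ψ = cutoff φ₁ φ₂ s := by
  have hc : HasCompactSupport (cutoff φ₁ φ₂ s) := by
    apply HasCompactSupport.of_support_subset_isCompact (isCompact_closedBall (0:R3) 10)
    intro x hx
    have hx' : φ₂ (s * x 0, s * x 1) * φ₁ (x 2) ≠ 0 := by
      intro h; apply hx; simp [cutoff, h]
    have hb := h4 (left_ne_zero_of_mul hx')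
    have ha := h2 (right_ne_zero_of_mul hx')
    rw [mem_closedBall_zero_iff] at ha hb
    rw [Prod.norm_def, max_le_iff] at hb
    simp only [Real.norm_eq_abs, abs_mul, abs_of_nonneg (by linarith : 0 ≤ s)] at ha hb
    have b0 : |x 0| ≤ 2 := by nlinarith [abs_nonneg (x 0)]
    have b1 : |x 1| ≤ 2 := by nlinarith [abs_nonneg (x 1)]
    rw [mem_closedBall_zero_iff, EuclideanSpace.norm_eq, Fin.sum_univ_three]
    simp only [Real.norm_eq_abs]
    rw [Real.sqrt_le_left (by norm_num)]
    nlinarith [abs_nonneg (x 0), abs_nonneg (x 1), abs_nonneg (x 2)]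
  have hd : ContDiff ℝ (⊤ : ℕ∞) (cutoff φ₁ φ₂ s) := by
    unfold cutoff
    apply Complex.ofRealCLM.contDiff.comp
    apply ContDiff.mul
    · apply h3.comp; fun_prop
    · apply h1.comp; fun_prop
  exact ⟨hc.toSchwartzMap hd, by ext; rfl⟩

lemma cutoff_inv (φ₁ : ℝ → ℝ) (φ₂ : ℝ × ℝ → ℝ) 
    (h1 : ContDiff ℝ (⊤ : ℕ∞) φ₁) (h2 : Function.support φ₁ ⊆ Metric.closedBall 0 2)
    (h3 : ContDiff ℝ (⊤ : ℕ∞) φ₂) (h4 : Function.support φ₂ ⊆ Metric.closedBall 0 2)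
    (s : ℝ) (hs : 1 ≤ s) : Integrable (𝓕⁻ (cutoff φ₁ φ₂ s)) ∧ Continuous (𝓕⁻ (cutoff φ₁ φ₂ s)) ∧
      𝓕 (𝓕⁻ (cutoff φ₁ φ₂ s)) = cutoff φ₁ φ₂ s := by
  obtain ⟨ψ, hψ⟩ := cutoff_schwartz φ₁ φ₂ h1 h2 h3 h4 s hs
  rw [← hψ, ← SchwartzMap.fourierInv_coe]
  refine ⟨SchwartzMap.integrable _, SchwartzMap.continuous _, ?_⟩
  rw [← SchwartzMap.fourier_coe, FourierTransform.fourier_fourierInv_eq]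

lemma conv_norm_int (u v : R3 → ℂ) (hu : Integrable u) (hv : Integrable v) :
    ∫ x, ‖MeasureTheory.convolution u v (ContinuousLinearMap.mul ℂ ℂ) volume x‖ ≤ (∫ x, ‖u x‖) * ∫ x, ‖v x‖ := by
  have e := integral_convolution (ContinuousLinearMap.mul ℝ ℝ) (μ := (volume : Measure R3)) (ν := volume) hu.norm hv.norm
  rw [ContinuousLinearMap.mul_apply'] at e
  rw [← e]
  apply integral_mono (hu.integrable_convolution _ hv).norm (hu.norm.integrable_convolution _ hv.norm)
  intro x
  refine (norm_integral_le_integral_norm _).trans_eq ?_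
  simp [MeasureTheory.convolution]

lemma kern (φ₁ : ℝ → ℝ) (φ₂ : ℝ × ℝ → ℝ) 
    (h1 : ContDiff ℝ (⊤ : ℕ∞) φ₁) (h2 : Function.support φ₁ ⊆ Metric.closedBall 0 2)
    (h3 : ContDiff ℝ (⊤ : ℕ∞) φ₂) (h4 : Function.support φ₂ ⊆ Metric.closedBall 0 2)
    (s : ℝ) (hs : 1 ≤ s) (w : R3 → ℝ) (c : ℝ) (hw0 : ∀ x, 0 ≤ w x) (hw : Integrable w) (hc : ∫ x, w x ≤ c)
    (K : R3 → ℂ) (hK : K = fun x => (w x : ℂ) - MeasureTheory.convolution (fun x => (w x : ℂ)) (𝓕⁻ (cutoff φ₁ φ₂ s))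
       (ContinuousLinearMap.mul ℂ ℂ) volume x) :
    Integrable K ∧ ∫ x, ‖K x‖ ≤ c * (1 + ∫ x, ‖𝓕⁻ (cutoff φ₁ φ₂ 1) x‖) ∧
    ∀ ξ, 𝓕 K ξ ≠ 0 → 𝓕 (fun x => (w x : ℂ)) ξ ≠ 0 ∧ cutoff φ₁ φ₂ s ξ ≠ 1 := by
  obtain ⟨hi, hcont, hF⟩ := cutoff_inv φ₁ φ₂ h1 h2 h3 h4 s hs
  have hwi : Integrable (fun x => (w x : ℂ)) := hw.ofReal
  have hci := hwi.integrable_convolution (ContinuousLinearMap.mul ℂ ℂ) hi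
  have hwn : ∫ x, ‖(w x : ℂ)‖ ≤ c := by
    simpa [abs_of_nonneg (hw0 _)] using hc
  subst hK
  refine ⟨hwi.sub hci, ?_, ?_⟩
  · calc _ ≤ ∫ x, (‖(w x : ℂ)‖ + ‖MeasureTheory.convolution (fun x => (w x : ℂ)) (𝓕⁻ (cutoff φ₁ φ₂ s))
       (ContinuousLinearMap.mul ℂ ℂ) volume x‖) := 
          integral_mono (hwi.sub hci).norm (hwi.norm.add hci.norm) (fun x => norm_sub_le _ _)
      _ = _ := integral_add hwi.norm hci.norm
      _ ≤ c + c * ∫ x, ‖𝓕⁻ (cutoff φ₁ φ₂ 1) x‖ := by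
          gcongr
          refine (conv_norm_int _ _ hwi hi).trans ?_
          rw [cutoff_inv_norm φ₁ φ₂ s (by linarith)]
          gcongr
      _ = _ := by ring
  · intro ξ hξ
    have e : 𝓕 (fun x => (w x : ℂ) - MeasureTheory.convolution (fun x => (w x : ℂ)) (𝓕⁻ (cutoff φ₁ φ₂ s))
       (ContinuousLinearMap.mul ℂ ℂ) volume x) ξ = 𝓕 (fun x => (w x : ℂ)) ξ * (1 - cutoff φ₁ φ₂ s ξ) := by
      have := Real.fourier_mul_convolution_eq hwi hi ξ
      rw [hF] at this
      rw [mul_sub, mul_one, ← this]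
      simp only [Real.fourier_eq, smul_sub]
      rw [integral_sub]
      · exact (Real.fourierIntegral_convergent_iff ξ).2 hwi
      · exact (Real.fourierIntegral_convergent_iff ξ).2 hci
    rw [e] at hξ
    exact ⟨left_ne_zero_of_mul hξ, fun h => right_ne_zero_of_mul hξ (by rw [h, sub_self])⟩

lemma ident (n : ℕ) (f : ℕ → R3 → ℂ) (w : ℕ → R3 → ℂ) (ρ : R3 → ℂ) (B : ℝ) (hf : ∀ l, Integrable (f l))
    (hfB : ∀ l x, ‖f l x‖ ≤ B) (hw : ∀ l, Integrable (w l)) (hρ : Integrable ρ) (x : R3) :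
    (∑ l ∈ Finset.range n, MeasureTheory.convolution (f l) (w l) (ContinuousLinearMap.mul ℂ ℂ) volume x) -
      MeasureTheory.convolution (fun y => ∑ l ∈ Finset.range n,
        MeasureTheory.convolution (f l) (w l) (ContinuousLinearMap.mul ℂ ℂ) volume y) ρ
          (ContinuousLinearMap.mul ℂ ℂ) volume x =
    ∑ l ∈ Finset.range n, MeasureTheory.convolution (f l) (fun y => w l y -
      MeasureTheory.convolution (w l) ρ (ContinuousLinearMap.mul ℂ ℂ) volume y)
        (ContinuousLinearMap.mul ℂ ℂ) volume x := by
  have hfw := fun l => (hf l).integrable_convolution (ContinuousLinearMap.mul ℂ ℂ) (hw l)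
  have hwρ := fun l => (hw l).integrable_convolution (ContinuousLinearMap.mul ℂ ℂ) hρ
  have e1 : MeasureTheory.convolution (fun y => ∑ l ∈ Finset.range n,
        MeasureTheory.convolution (f l) (w l) (ContinuousLinearMap.mul ℂ ℂ) volume y) ρ
          (ContinuousLinearMap.mul ℂ ℂ) volume x = ∑ l ∈ Finset.range n, 
        MeasureTheory.convolution (MeasureTheory.convolution (f l) (w l) (ContinuousLinearMap.mul ℂ ℂ) volume) ρ
          (ContinuousLinearMap.mul ℂ ℂ) volume x := by
    have : ∀ l ∈ Finset.range n, Integrable (fun t => (ContinuousLinearMap.mul ℂ ℂ) 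
        (MeasureTheory.convolution (f l) (w l) (ContinuousLinearMap.mul ℂ ℂ) volume t) (ρ (x - t))) := fun l _ =>
      conv_exists _ ρ (B * ∫ x, ‖w l x‖) (hfw l).1 
        (conv_bound (f l) (w l) B _ (hfB l) (hw l) le_rfl) hρ x
    unfold MeasureTheory.convolution at this ⊢
    rw [← integral_finsetSum _ this]
    congr 1
    ext t
    simp only [ContinuousLinearMap.mul_apply', Finset.sum_mul]
  rw [e1, ← Finset.sum_sub_distrib]
  refine Finset.sum_congr rfl fun l _ => ?_
  have e2 : MeasureTheory.convolution (MeasureTheory.convolution (f l) (w l) (ContinuousLinearMap.mul ℂ ℂ) volume) ρ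
          (ContinuousLinearMap.mul ℂ ℂ) volume x = MeasureTheory.convolution (f l) (MeasureTheory.convolution (w l) ρ
          (ContinuousLinearMap.mul ℂ ℂ) volume)
          (ContinuousLinearMap.mul ℂ ℂ) volume x := by
    apply convolution_assoc
    · intro a b c; simp [mul_assoc]
    · exact (hf l).1
    · exact (hw l).1
    · exact hρ.1
    · exact Filter.Eventually.of_forall fun y => conv_exists _ _ B (hf l).1 (hfB l) (hw l) y
    · exact (hw l).norm.ae_convolution_exists _ hρ.norm
    · have := (hw l).norm.integrable_convolution (ContinuousLinearMap.mul ℝ ℝ) hρ.norm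
      unfold ConvolutionExistsAt
      simp only [ContinuousLinearMap.mul_apply']
      refine (this.comp_sub_left x).bdd_mul (c := B) (hf l).1.norm (Filter.Eventually.of_forall ?_)
      intro y; rw [norm_norm]; exact hfB l y
  rw [e2]
  have i1 := conv_exists _ _ B (hf l).1 (hfB l) (hw l) x
  have i2 := conv_exists _ _ B (hf l).1 (hfB l) (hwρ l) x
  unfold ConvolutionExistsAt at i1 i2
  generalize MeasureTheory.convolution (w l) ρ (ContinuousLinearMap.mul ℂ ℂ) volume = v at *
  unfold MeasureTheory.convolution
  rw [← integral_sub i1 i2]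
  simp [mul_sub]

lemma numer (R κ ε r : ℝ) (A : ℕ) (hR : 2 ≤ R) (hε : 0 < ε) (hκ : 1 ≤ κ) (h1 : R ^ ((1:ℝ)/3) ≤ r)
    (h2 : r ≤ R ^ ((1:ℝ)/2)) (hA : (A:ℝ) ≤ 28 * R ^ ε) (p C : ℝ) (hp : p = 2 + 2 / (Real.log r / Real.log (R / r)))
    (hC : C = 224 * κ ^ 2 * (2 * κ) ^ 4) :
    1 ≤ r ∧ r ^ 2 ≤ R ∧ 2 < p ∧ p/(p-2)*(4*(A*κ^2))*(2*κ*r)^(p-2) ≤ C * R ^ (C * ε) * r * R := by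
  have hR1 : 1 < R ^ ((1:ℝ)/3) := Real.one_lt_rpow (by linarith) (by norm_num)
  have hr1 : 1 < r := hR1.trans_le h1
  have hr2 : r ^ 2 ≤ R := by
    calc r ^ 2 ≤ (R ^ ((1:ℝ)/2)) ^ 2 := by gcongr
      _ = R := by rw [← Real.rpow_natCast, ← Real.rpow_mul (by linarith)]; norm_num
  have hr3 : R ≤ r ^ 3 := by
    calc R = (R ^ ((1:ℝ)/3)) ^ 3 := by rw [← Real.rpow_natCast, ← Real.rpow_mul (by linarith)]; norm_num
      _ ≤ r ^ 3 := by gcongr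
  have hl : 0 < Real.log r := Real.log_pos hr1
  have hq1 : r ≤ R / r := by rw [le_div_iff₀ (by linarith)]; nlinarith
  have hq2 : R / r ≤ r ^ 2 := by rw [div_le_iff₀ (by linarith)]; nlinarith
  have hl2 : Real.log r ≤ Real.log (R / r) := Real.log_le_log (by linarith) hq1
  have hl3 : Real.log (R / r) ≤ 2 * Real.log r := by
    have := Real.log_le_log (by linarith) hq2
    rwa [Real.log_pow] at this
  obtain ⟨q, hq⟩ : ∃ q, q = 2 / (Real.log r / Real.log (R / r)) := ⟨_, rfl⟩
  rw [← hq] at hp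
  have hql : q * Real.log r = 2 * Real.log (R / r) := by
    have : Real.log (R / r) ≠ 0 := by linarith
    rw [hq]; field_simp
  have hq2' : 2 ≤ q := by by_contra h; push Not at h; nlinarith
  have hq4 : q ≤ 4 := by by_contra h; push Not at h; nlinarith
  have hrq : r ^ q ≤ r * R := by
    have : r ^ q = (R / r) ^ 2 := by
      rw [Real.rpow_def_of_pos (by linarith), mul_comm, hql, ← Real.exp_log (by positivity : 0 < (R/r)^2), Real.log_pow]
      norm_num
    rw [this, div_pow, div_le_iff₀ (by positivity)]
    nlinarith
  have hC1 : 1 ≤ C := by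
    rw [hC]
    have : 1 ≤ κ ^ 2 := one_le_pow₀ hκ
    have : 1 ≤ (2 * κ) ^ 4 := one_le_pow₀ (by linarith)
    nlinarith
  refine ⟨hr1.le, hr2, by linarith, ?_⟩
  have e : p - 2 = q := by linarith
  rw [e]
  have hRe : R ^ ε ≤ R ^ (C * ε) := Real.rpow_le_rpow_of_exponent_le (by linarith) (by nlinarith)
  calc p / q * (4 * (A * κ ^ 2)) * (2 * κ * r) ^ q 
      ≤ 2 * (4 * (28 * R ^ (C * ε) * κ ^ 2)) * ((2 * κ) ^ 4 * (r * R)) := by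
        rw [Real.mul_rpow (by positivity) (by linarith)]
        gcongr
        · rw [div_le_iff₀ (by linarith)]; linarith
        · linarith
        · have := Real.rpow_le_rpow_of_exponent_le (by linarith : 1 ≤ 2 * κ) hq4
          refine this.trans_eq ?_
          exact_mod_cast Real.rpow_natCast (2 * κ) 4
    _ = _ := by rw [hC]; ring

/-- **Lemma 2.17 (High lemma II).** For `R^{1/3} ≤ r ≤ min(R^{1/2}, R^β)` and
`β₁ = log r / log(R/r)`, the `(2 + 2/β₁)`-th moment of the high part of the pruned square
function at scale `r` is bounded by `C R^{Cε} r R ∑_γ ‖h_γ‖_{4+4/β₁}^{4+4/β₁}`. -/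
theorem high_lemma_II :
    ∀ ε > (0:ℝ), ∀ c : ℝ, 1 ≤ c →
    ∀ φ₁ : ℝ → ℝ, ∀ φ₂ : ℝ × ℝ → ℝ,
    ContDiff ℝ (⊤ : ℕ∞) φ₁ → (∀ x : ℝ, |x| ≤ 1 → φ₁ x = 1) →
    Function.support φ₁ ⊆ Metric.closedBall 0 2 →
    ContDiff ℝ (⊤ : ℕ∞) φ₂ → (∀ x : ℝ × ℝ, ‖x‖ ≤ 1 → φ₂ x = 1) →
    Function.support φ₂ ⊆ Metric.closedBall 0 2 →
    ∃ C > (0:ℝ), ∀ R β : ℝ, ∀ r r' : ℕ, 2 ≤ R → β ∈ Set.Icc (1/3 : ℝ) 1 →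
    R ^ ((1:ℝ)/3) ≤ (r:ℝ) → (r:ℝ) ≤ min (R ^ ((1:ℝ)/2)) (R ^ β) →
    (r:ℝ) ≤ (r':ℝ) → (r':ℝ) ≤ R ^ β → (r':ℝ) ≤ R ^ ε * r →
    ∀ h : ℕ → SchwartzMap R3 ℂ,
    (∀ l, Function.support (𝓕 ⇑(h l)) ⊆ dilate c (smallCapI R r l)) →
    ∀ ω : ℕ → R3 → ℝ,
    (∀ l, (∀ x, 0 ≤ ω l x) ∧ Integrable (ω l) ∧ (∫ x, ω l x) ≤ c ∧
        Function.support (𝓕 (fun x => ((ω l x : ℝ) : ℂ))) ⊆ recenter (smallCapI R r l)) →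
    (∫ x : R3,
        ‖(∑ l ∈ Finset.range r, piece (⇑(h l)) (ω l) x) -
            lowPart φ₁ φ₂ (r' : ℝ) (fun y => ∑ l ∈ Finset.range r, piece (⇑(h l)) (ω l) y) x‖
          ^ (2 + 2 / (Real.log r / Real.log (R / r)))) ≤
      C * R ^ (C * ε) * (r:ℝ) * R *
        ∑ l ∈ Finset.range r,
          ∫ x : R3, ‖(h l) x‖ ^ (4 + 4 / (Real.log r / Real.log (R / r))) := by
  intro ε hε c hc φ₁ φ₂ s1 o1 b1 s2 o2 b2
  set M := ∫ x, ‖𝓕⁻ (cutoff φ₁ φ₂ 1) x‖ with hM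
  have hM0 : 0 ≤ M := integral_nonneg fun x => norm_nonneg _
  set κ := c * (1 + M) with hκ
  have hκ1 : 1 ≤ κ := by rw [hκ]; nlinarith
  refine ⟨224 * κ ^ 2 * (2 * κ) ^ 4, by positivity, ?_⟩
  intro R β r r' hR _ hr1 hr2 hrr _ hr' h _ ω hω
  have hRe : 1 ≤ R ^ ε := Real.one_le_rpow (by linarith) hε.le
  set A := ⌊28 * R ^ ε⌋₊ with hA
  have hAle : (A:ℝ) ≤ 28 * R ^ ε := Nat.floor_le (by positivity)
  obtain ⟨p, hp⟩ : ∃ p, p = 2 + 2 / (Real.log r / Real.log (R / r)) := ⟨_, rfl⟩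
  obtain ⟨hr0, hrR, hp2, hnum⟩ := numer R κ ε r A hR hε hκ1 hr1 (hr2.trans (min_le_left _ _)) hAle p _ hp rfl
  have hr0' : 1 ≤ r := by exact_mod_cast hr0
  have h2p : 4 + 4 / (Real.log r / Real.log (R / r)) = 2 * p := by rw [hp]; ring
  rw [h2p, ← hp]
  set f : ℕ → R3 → ℝ := fun l x => if l < r then ‖h l x‖ ^ 2 else 0 with hf
  set ρ := 𝓕⁻ (cutoff φ₁ φ₂ r') with hρ
  have hρi : Integrable ρ := (cutoff_inv φ₁ φ₂ s1 b1 s2 b2 r' (hr0.trans hrr)).1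
  set K : ℕ → R3 → ℂ := fun l x => (ω l x : ℂ) - MeasureTheory.convolution (fun x => (ω l x : ℂ)) ρ
       (ContinuousLinearMap.mul ℂ ℂ) volume x with hK
  have hk := fun l => kern φ₁ φ₂ s1 b1 s2 b2 r' (hr0.trans hrr) (ω l) c (hω l).1 (hω l).2.1 (hω l).2.2.1 (K l) rfl
  have hfm : ∀ l, Measurable (f l) := by
    intro l
    by_cases hl : l < r
    · simp only [hf, hl, if_true]; exact ((h l).continuous.norm.pow 2).measurable
    · simp only [hf, hl, if_false]; exact measurable_const
  have hf0 : ∀ l x, 0 ≤ f l x := by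
    intro l x; simp only [hf]; split_ifs <;> positivity
  have hfi : ∀ l, Integrable (f l) := by
    intro l
    by_cases hl : l < r
    · simp only [hf, hl, if_true]
      exact ((h l).memLp 2 volume).integrable_norm_pow two_ne_zero
    · simp only [hf, hl, if_false]; exact integrable_zero _ _ _
  set B : ℝ := ∑ l ∈ Finset.range r, (SchwartzMap.seminorm ℝ 0 0 (h l)) ^ 2 with hB
  have hfB : ∀ l x, f l x ≤ B := by
    intro l x
    by_cases hl : l < r
    · simp only [hf, hl, if_true]
      calc ‖h l x‖ ^ 2 ≤ (SchwartzMap.seminorm ℝ 0 0 (h l)) ^ 2 := by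
            gcongr; exact SchwartzMap.norm_le_seminorm ℝ (h l) x
        _ ≤ B := Finset.single_le_sum (f := fun l => (SchwartzMap.seminorm ℝ 0 0 (h l)) ^ 2)
            (fun i _ => by positivity) (Finset.mem_range.2 hl)
    · simp only [hf, hl, if_false]; exact Finset.sum_nonneg (fun i _ => by positivity)
  have hS := strong (Finset.range r) f K κ B r p A hfm hf0 hfi hfB (fun l => (hk l).1) (fun l => (hk l).2.1)
    (by linarith) (by simp) (by linarith) (by
      intro ξ
      apply Nat.le_floor
      apply overlap φ₁ φ₂ o1 o2 R (R ^ ε) r r' hr0' hrR hRe hrr hr' ξ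
      intro l hl
      rw [Finset.mem_filter, Finset.mem_range] at hl
      obtain ⟨k1, k2⟩ := (hk l).2.2 ξ hl.2
      exact ⟨hl.1, (hω l).2.2.2 k1, k2⟩) hp2
  have hpiece : ∀ x, ∀ l ∈ Finset.range r, piece (⇑(h l)) (ω l) x =
      MeasureTheory.convolution (fun x => (f l x : ℂ)) (fun x => (ω l x : ℂ)) (ContinuousLinearMap.mul ℂ ℂ) volume x := by
    intro x l hl
    rw [Finset.mem_range] at hl
    simp only [piece, hf, hl, if_true]
  have hG : ∀ x, (∑ l ∈ Finset.range r, piece (⇑(h l)) (ω l) x) -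
            lowPart φ₁ φ₂ (r' : ℝ) (fun y => ∑ l ∈ Finset.range r, piece (⇑(h l)) (ω l) y) x =
      ∑ l ∈ Finset.range r, MeasureTheory.convolution (fun x => (f l x:ℂ)) (K l) (ContinuousLinearMap.mul ℂ ℂ) volume x := by
    intro x
    have := ident r (fun l x => (f l x : ℂ)) (fun l x => (ω l x : ℂ)) ρ B (fun l => (hfi l).ofReal)
      (fun l x => by rw [Complex.norm_real, Real.norm_of_nonneg (hf0 l x)]; exact hfB l x)
      (fun l => (hω l).2.1.ofReal) hρi x
    refine Eq.trans ?_ this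
    congr 1
    · exact Finset.sum_congr rfl (hpiece x)
    · unfold lowPart
      congr 1
      ext y
      exact Finset.sum_congr rfl (hpiece y)
  simp_rw [hG]
  have hfp : ∀ l ∈ Finset.range r, ∫⁻ x, ENNReal.ofReal (f l x ^ p) =
      ENNReal.ofReal (∫ x, ‖h l x‖ ^ (2 * p)) := by
    intro l hl
    rw [Finset.mem_range] at hl
    have hi : Integrable (fun x => ‖h l x‖ ^ (2 * p)) := by
      have := ((h l).memLp (ENNReal.ofReal (2 * p)) volume).integrable_norm_rpow
        (by simp; linarith) ENNReal.ofReal_ne_top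
      rwa [ENNReal.toReal_ofReal (by linarith)] at this
    rw [ofReal_integral_eq_lintegral_ofReal hi (Filter.Eventually.of_forall fun x => by positivity)]
    congr 1
    ext x
    simp only [hf, hl, if_true]
    rw [Real.rpow_mul (norm_nonneg _)]
    norm_num
  rw [Finset.sum_congr rfl hfp, ← ENNReal.ofReal_sum_of_nonneg (fun i _ => integral_nonneg fun x => by positivity),
    ← ENNReal.ofReal_mul' (Finset.sum_nonneg fun i _ => integral_nonneg fun x => by positivity)] at hS
  have hR0 : 0 ≤ ∑ l ∈ Finset.range r, ∫ x : R3, ‖(h l) x‖ ^ (2 * p) :=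
    Finset.sum_nonneg fun i _ => integral_nonneg fun x => by positivity
  refine le_trans ?_ (mul_le_mul_of_nonneg_right hnum hR0)
  have hc0 : 0 ≤ p/(p-2)*(4*(A*κ^2))*(2*κ*r)^(p-2) := by
    have : 0 < p - 2 := by linarith
    positivity
  by_cases hi : Integrable (fun x => ‖∑ l ∈ Finset.range r, MeasureTheory.convolution (fun x => (f l x:ℂ)) (K l)
      (ContinuousLinearMap.mul ℂ ℂ) volume x‖ ^ p)
  · rw [← ofReal_integral_eq_lintegral_ofReal hi (Filter.Eventually.of_forall fun x => by positivity)] at hS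
    exact (ENNReal.ofReal_le_ofReal_iff (mul_nonneg hc0 hR0)).1 hS
  · rw [integral_undef hi]
    exact mul_nonneg hc0 hR0
end
end

section
/- Fix β ∈ [1/3,1] and set p_c = 6 + 2/β. Suppose that for every ε > 0 there is a constant C_ε > 0 such that for all R ≥ 2 and all Schwartz functions f : ℝ³ → ℂ with Fourier transform supported in M³(R^β,R) one has ∫_{ℝ³} |f|^{p_c} ≤ C_ε R^ε R^{2β+1} ∑_γ ‖f_γ‖_{L^{p_c}(ℝ³)}^{p_c}. Then for every p ≥ 2 and every ε > 0 there is a constant C'_ε > 0 such that for all R ≥ 2 and all such f one has ∫_{ℝ³} |f|^p ≤ C'_ε R^ε (R^{β(p/2 − 1)} + R^{β(p−4) − 1}) ∑_γ ‖f_γ‖_{L^p(ℝ³)}^p. -/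
open MeasureTheory Real Complex Set Finset
open scoped FourierTransform

noncomputable section

/-- The anisotropic small cap neighborhood `M³(R^β, R)` of the moment curve. -/
def M3 (R β : ℝ) : Set R3 :=
  {ξ | ξ 0 ∈ Set.Icc (0:ℝ) 1 ∧ |ξ 1 - (ξ 0)^2| ≤ R ^ (-2*β) ∧
       |ξ 2 - 3*(ξ 0)*(ξ 1) + 2*(ξ 0)^3| ≤ R⁻¹}

/-- The `l`-th small cap `γ_l` partitioning `M³(R^β, R)`. -/
def smallCap (R β : ℝ) (l : ℕ) : Set R3 :=
  {ξ | (l : ℝ) * R ^ (-β) ≤ ξ 0 ∧ ξ 0 < ((l : ℝ) + 1) * R ^ (-β) ∧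
       |ξ 1 - (ξ 0)^2| ≤ R ^ (-2*β) ∧ |ξ 2 - 3*(ξ 0)*(ξ 1) + 2*(ξ 0)^3| ≤ R⁻¹}

/-- Fourier projection of `f` onto a frequency set `A`. -/
def fproj (A : Set R3) (f : R3 → ℂ) : R3 → ℂ :=
  𝓕⁻ (A.indicator (𝓕 f))

open scoped ENNReal

lemma aux_map_equiv (V : R3 ≃L[ℝ] R3) :
    Measure.map V (volume : Measure R3) =
      ENNReal.ofReal (|LinearMap.det (V : R3 →ₗ[ℝ] R3)|⁻¹) • volume := by
  have h := Measure.map_linearMap_addHaar_eq_smul_addHaar (volume : Measure R3)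
    (f := (V : R3 →ₗ[ℝ] R3)) (LinearEquiv.isUnit_det' V.toLinearEquiv).ne_zero
  rw [abs_inv] at h
  exact h

lemma aux_det_pos (V : R3 ≃L[ℝ] R3) : 0 < |LinearMap.det (V : R3 →ₗ[ℝ] R3)| :=
  abs_pos.2 (LinearEquiv.isUnit_det' V.toLinearEquiv).ne_zero

lemma aux_integral_comp (V : R3 ≃L[ℝ] R3) (G : R3 → ℂ) :
    ∫ x, G (V x) = ((|LinearMap.det (V : R3 →ₗ[ℝ] R3)|⁻¹ : ℝ) : ℂ) * ∫ x, G x := by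
  have h := integral_map_equiv (μ := (volume : Measure R3)) V.toHomeomorph.toMeasurableEquiv G
  have h2 : Measure.map (V.toHomeomorph.toMeasurableEquiv) (volume : Measure R3) =
      ENNReal.ofReal (|LinearMap.det (V : R3 →ₗ[ℝ] R3)|⁻¹) • volume := aux_map_equiv V
  rw [h2, integral_smul_measure, ENNReal.toReal_ofReal (by positivity)] at h
  rw [← Complex.real_smul, h]
  rfl

lemma aux_lintegral_comp (V : R3 ≃L[ℝ] R3) (G : R3 → ℝ≥0∞) :
    ∫⁻ x, G (V x) = ENNReal.ofReal (|LinearMap.det (V : R3 →ₗ[ℝ] R3)|⁻¹) * ∫⁻ x, G x := by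
  have h := lintegral_map_equiv (μ := (volume : Measure R3)) G V.toHomeomorph.toMeasurableEquiv
  have h2 : Measure.map (V.toHomeomorph.toMeasurableEquiv) (volume : Measure R3) =
      ENNReal.ofReal (|LinearMap.det (V : R3 →ₗ[ℝ] R3)|⁻¹) • volume := aux_map_equiv V
  rw [h2, lintegral_smul_measure] at h
  rw [← smul_eq_mul, h]
  rfl

/-- the dual linear map -/
def dualEquiv (V : R3 ≃L[ℝ] R3) : R3 ≃L[ℝ] R3 :=
  ContinuousLinearEquiv.equivOfInverse (ContinuousLinearMap.adjoint (V.symm : R3 →L[ℝ] R3))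
    (ContinuousLinearMap.adjoint (V : R3 →L[ℝ] R3))
    (by
      intro x
      rw [← ContinuousLinearMap.comp_apply, ← ContinuousLinearMap.adjoint_comp]
      refine ext_inner_left ℝ (fun y => ?_)
      rw [ContinuousLinearMap.adjoint_inner_right]
      simp)
    (by
      intro x
      rw [← ContinuousLinearMap.comp_apply, ← ContinuousLinearMap.adjoint_comp]
      refine ext_inner_left ℝ (fun y => ?_)
      rw [ContinuousLinearMap.adjoint_inner_right]
      simp)

lemma aux_inner_dual (V : R3 ≃L[ℝ] R3) (x y : R3) :
    inner ℝ (V.symm x) y = inner ℝ x (dualEquiv V y) := by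
  show _ = inner ℝ x (ContinuousLinearMap.adjoint (V.symm : R3 →L[ℝ] R3) y)
  rw [ContinuousLinearMap.adjoint_inner_right]
  rfl

lemma aux_det_dual (V : R3 ≃L[ℝ] R3) :
    |LinearMap.det (dualEquiv V : R3 →ₗ[ℝ] R3)| = |LinearMap.det (V : R3 →ₗ[ℝ] R3)|⁻¹ := by
  have h1 : (dualEquiv V : R3 →ₗ[ℝ] R3) = LinearMap.adjoint (V.symm : R3 →ₗ[ℝ] R3) := by
    rfl
  have h2 : LinearMap.det (LinearMap.adjoint (V.symm : R3 →ₗ[ℝ] R3)) =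
      LinearMap.det (V.symm : R3 →ₗ[ℝ] R3) := by
    have b := EuclideanSpace.basisFun (Fin 3) ℝ
    rw [← LinearMap.det_toMatrix b.toBasis, ← LinearMap.det_toMatrix b.toBasis,
      LinearMap.toMatrix_adjoint, Matrix.det_conjTranspose]
    simp
  have h3 : LinearMap.det (V.symm : R3 →ₗ[ℝ] R3) * LinearMap.det (V : R3 →ₗ[ℝ] R3) = 1 :=
    LinearEquiv.det_symm_mul_det V.toLinearEquiv
  rw [h1, h2, ← abs_inv, eq_inv_of_mul_eq_one_left h3]

lemma aux_norm_fourierInv (V : R3 ≃L[ℝ] R3) (c : R3) (u : R3 → ℂ) (x : R3) :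
    ‖𝓕⁻ (fun ξ => u (V ξ + c)) x‖ =
      |LinearMap.det (V : R3 →ₗ[ℝ] R3)|⁻¹ * ‖𝓕⁻ u (dualEquiv V x)‖ := by
  have h1 : 𝓕⁻ (fun ξ => u (V ξ + c)) x =
      ∫ ξ, (fun ζ => (𝐞 (inner ℝ (V.symm ζ) x)) • u (ζ + c)) (V ξ) := by
    rw [Real.fourierInv_eq]; simp
  rw [h1, aux_integral_comp V (fun ζ => (𝐞 (inner ℝ (V.symm ζ) x)) • u (ζ + c)), norm_mul, Complex.norm_real, Real.norm_eq_abs,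
    abs_of_pos (inv_pos.2 (aux_det_pos V))]
  congr 1
  have h2 : ∫ ζ, (𝐞 (inner ℝ (V.symm ζ) x)) • u (ζ + c) =
      ∫ ζ, (𝐞 (inner ℝ (V.symm (ζ - c)) x)) • u ζ := by
    rw [← integral_add_right_eq_self (fun ζ => (𝐞 (inner ℝ (V.symm (ζ - c)) x)) • u ζ) c]; simp
  rw [h2, Real.fourierInv_eq]
  have h3 : ∀ ζ, (𝐞 (inner ℝ (V.symm (ζ - c)) x)) • u ζ =
     (𝐞 (- inner ℝ (V.symm c) x)) • ((𝐞 (inner ℝ ζ (dualEquiv V x))) • u ζ) := by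
    intro ζ
    rw [smul_smul, ← AddChar.map_add_eq_mul, map_sub, inner_sub_left, aux_inner_dual V ζ]
    congr 2; ring_nf
  simp_rw [h3, Circle.smul_def (𝐞 (- inner ℝ (V.symm c) x))]
  rw [integral_smul, norm_smul, Circle.norm_coe, one_mul]

lemma aux_lintegral_fourierInv (V : R3 ≃L[ℝ] R3) (c : R3) (u : R3 → ℂ) (q : ℝ) (hq : 0 ≤ q) :
    ∫⁻ x, ‖𝓕⁻ (fun ξ => u (V ξ + c)) x‖ₑ ^ q =
      ENNReal.ofReal (|LinearMap.det (V : R3 →ₗ[ℝ] R3)| ^ (1 - q)) *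
        ∫⁻ x, ‖𝓕⁻ u x‖ₑ ^ q := by
  have hd := aux_det_pos V
  set d := |LinearMap.det (V : R3 →ₗ[ℝ] R3)| with hdd
  have h : ∀ x, ‖𝓕⁻ (fun ξ => u (V ξ + c)) x‖ₑ ^ q = 
      ENNReal.ofReal (d⁻¹ ^ q) * (fun y => ‖𝓕⁻ u y‖ₑ ^ q) (dualEquiv V x) := by
    intro x
    rw [← ofReal_norm, aux_norm_fourierInv, ENNReal.ofReal_mul (by positivity), 
      ENNReal.mul_rpow_of_nonneg _ _ hq, ENNReal.ofReal_rpow_of_nonneg (by positivity) hq]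
    simp [hdd]
  simp_rw [h]
  rw [lintegral_const_mul' _ _ ENNReal.ofReal_ne_top, aux_lintegral_comp (dualEquiv V) (fun y => ‖𝓕⁻ u y‖ₑ ^ q), aux_det_dual, ← mul_assoc,
    ← ENNReal.ofReal_mul (by positivity), ← hdd]
  congr 2
  rw [inv_inv, Real.inv_rpow hd.le, Real.rpow_sub hd, Real.rpow_one]
  field_simp


/-- measurable bounded families -/
def Good (g : ℕ → R3 → ℂ) : Prop := ∀ l, Measurable (g l) ∧ ∃ M : ℝ, ∀ x, ‖g l x‖ ≤ M

/-- high part -/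
def ghi (t : ℝ) (g : ℕ → R3 → ℂ) : ℕ → R3 → ℂ := fun l x => if t < ‖g l x‖ then g l x else 0

/-- low part -/
def glo (t : ℝ) (g : ℕ → R3 → ℂ) : ℕ → R3 → ℂ := fun l x => if t < ‖g l x‖ then 0 else g l x

lemma ghi_add_glo (t : ℝ) (g : ℕ → R3 → ℂ) : ghi t g + glo t g = g := by
  ext l x
  simp only [ghi, glo, Pi.add_apply]
  split_ifs <;> simp

lemma Good.ghi {g : ℕ → R3 → ℂ} (hg : Good g) (t : ℝ) : Good (ghi t g) := by
  intro l
  obtain ⟨hm, M, hM⟩ := hg l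
  refine ⟨Measurable.ite (measurableSet_lt measurable_const hm.norm) hm measurable_const, |M|, ?_⟩
  intro x
  simp only [_root_.ghi]
  split_ifs
  · exact (hM x).trans (le_abs_self _)
  · simp

lemma Good.glo {g : ℕ → R3 → ℂ} (hg : Good g) (t : ℝ) : Good (glo t g) := by
  intro l
  obtain ⟨hm, M, hM⟩ := hg l
  refine ⟨Measurable.ite (measurableSet_lt measurable_const hm.norm) measurable_const hm, |M|, ?_⟩
  intro x
  simp only [_root_.glo]
  split_ifs
  · simp
  · exact (hM x).trans (le_abs_self _)

lemma enorm_rpow_eq (z : ℂ) {q : ℝ} (hq : 0 ≤ q) : ‖z‖ₑ ^ q = ENNReal.ofReal (‖z‖ ^ q) := by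
  rw [← ofReal_norm, ENNReal.ofReal_rpow_of_nonneg (norm_nonneg _) hq]

lemma aux_cheb (u : R3 → ℂ) (hu : Measurable u) {q t : ℝ} (hq : 0 < q) (ht : 0 < t) :
    volume {x | t / 2 < ‖u x‖} ≤ ENNReal.ofReal ((t / 2) ^ (-q)) * ∫⁻ x, ‖u x‖ₑ ^ q := by
  have h0 : 0 < t / 2 := by positivity
  have h1 := mul_meas_ge_le_lintegral (μ := (volume : Measure R3)) (f := fun x => ‖u x‖ₑ ^ q)
    (hu.enorm.pow_const q) (ENNReal.ofReal ((t / 2) ^ q))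
  have h2 : {x | t / 2 < ‖u x‖} ⊆ {x | ENNReal.ofReal ((t / 2) ^ q) ≤ ‖u x‖ₑ ^ q} := by
    intro x hx
    simp only [Set.mem_setOf_eq] at hx ⊢
    rw [enorm_rpow_eq _ hq.le]
    exact ENNReal.ofReal_le_ofReal (Real.rpow_le_rpow h0.le hx.le hq.le)
  have h3 : ENNReal.ofReal ((t / 2) ^ (-q)) * ENNReal.ofReal ((t / 2) ^ q) = 1 := by
    rw [← ENNReal.ofReal_mul (by positivity), ← Real.rpow_add h0]; simp
  calc volume {x | t / 2 < ‖u x‖} ≤ volume {x | ENNReal.ofReal ((t / 2) ^ q) ≤ ‖u x‖ₑ ^ q} :=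
        measure_mono h2
    _ = ENNReal.ofReal ((t / 2) ^ (-q)) * (ENNReal.ofReal ((t / 2) ^ q) *
        volume {x | ENNReal.ofReal ((t / 2) ^ q) ≤ ‖u x‖ₑ ^ q}) := by
        rw [← mul_assoc, h3, one_mul]
    _ ≤ _ := by gcongr

/-- kernels -/
def khi (p q c t s : ℝ) : ℝ≥0∞ :=
  ENNReal.ofReal (t ^ (p - 1) * (t / 2) ^ (-q)) * (if c * t < s then ENNReal.ofReal (s ^ q) else 0)

/-- kernels -/
def klo (p q c t s : ℝ) : ℝ≥0∞ :=
  ENNReal.ofReal (t ^ (p - 1) * (t / 2) ^ (-q)) * (if c * t < s then 0 else ENNReal.ofReal (s ^ q))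

lemma aux_pow_id {p q t : ℝ} (ht : 0 < t) :
    t ^ (p - 1) * (t / 2) ^ (-q) = 2 ^ q * t ^ (p - 1 - q) := by
  rw [Real.div_rpow ht.le (by norm_num), Real.rpow_neg (by norm_num : (0:ℝ) ≤ 2),
    Real.rpow_sub ht (p - 1) q, Real.rpow_neg ht.le]
  field_simp

lemma khi_int {p q c s : ℝ} (hqp : q < p) (hq : 0 < q) (hc : 0 < c) (hs : 0 ≤ s) :
    ∫⁻ t in Set.Ioi (0:ℝ), khi p q c t s ≤
      ENNReal.ofReal (2 ^ q * c ^ (q - p) / (p - q)) * ENNReal.ofReal (s ^ p) := by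
  rcases hs.eq_or_lt with rfl | hs
  · rw [setLIntegral_congr_fun (g := fun _ => 0) measurableSet_Ioi]
    · simp
    · intro t ht
      simp only [khi]
      rw [if_neg, mul_zero]
      have : 0 < c * t := mul_pos hc ht
      linarith
  have h1 : ∫⁻ t in Set.Ioi (0:ℝ), khi p q c t s =
      ∫⁻ t in Set.Ioi (0:ℝ), (Set.Iio (s / c)).indicator
        (fun t => ENNReal.ofReal (2 ^ q * s ^ q * t ^ (p - 1 - q))) t := by
    refine setLIntegral_congr_fun measurableSet_Ioi ?_
    intro t ht
    simp only [khi, Set.indicator, Set.mem_Iio, lt_div_iff₀ hc, mul_comm t c]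
    split_ifs
    · rw [aux_pow_id ht, ← ENNReal.ofReal_mul (by have : 0 < t := ht; positivity)]
      congr 1; ring
    · simp
  rw [h1, setLIntegral_indicator measurableSet_Iio, Set.inter_comm, Set.Ioi_inter_Iio]
  have hsc : 0 < s / c := by positivity
  have hint : IntervalIntegrable (fun t : ℝ => 2 ^ q * s ^ q * t ^ (p - 1 - q)) volume 0 (s / c) :=
    (intervalIntegral.intervalIntegrable_rpow' (by linarith)).const_mul _
  have hint2 := (intervalIntegrable_iff_integrableOn_Ioo_of_le hsc.le).1 hint
  rw [← ofReal_integral_eq_lintegral_ofReal hint2, ← ENNReal.ofReal_mul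
    (div_nonneg (by positivity) (by linarith)), ← integral_Ioc_eq_integral_Ioo,
    ← intervalIntegral.integral_of_le hsc.le, intervalIntegral.integral_const_mul,
    integral_rpow (Or.inl (by linarith))]
  · apply ENNReal.ofReal_le_ofReal
    rw [Real.zero_rpow (by linarith), Real.div_rpow hs.le hc.le,
      show p - 1 - q + 1 = p - q by ring, show q - p = -(p - q) by ring, Real.rpow_neg hc.le,
      show s ^ p = s ^ q * s ^ (p - q) by rw [← Real.rpow_add hs]; ring_nf]
    apply le_of_eq
    field_simp
    ring
  · filter_upwards [self_mem_ae_restrict measurableSet_Ioo] with t ht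
    have : 0 < t := ht.1
    simp only [Pi.zero_apply]; positivity

lemma klo_int {p q c s : ℝ} (hqp : p < q) (hp : 0 < p) (hc : 0 < c) (hs : 0 ≤ s) :
    ∫⁻ t in Set.Ioi (0:ℝ), klo p q c t s ≤
      ENNReal.ofReal (2 ^ q * c ^ (q - p) / (q - p)) * ENNReal.ofReal (s ^ p) := by
  rcases hs.eq_or_lt with rfl | hs
  · rw [setLIntegral_congr_fun (g := fun _ => 0) measurableSet_Ioi]
    · simp
    · intro t ht
      simp [klo, Real.zero_rpow (hp.trans hqp).ne']
  have hsc : 0 < s / c := by positivity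
  have h1 : ∫⁻ t in Set.Ioi (0:ℝ), klo p q c t s =
      ∫⁻ t in Set.Ioi (0:ℝ), (Set.Ici (s / c)).indicator
        (fun t => ENNReal.ofReal (2 ^ q * s ^ q * t ^ (p - 1 - q))) t := by
    refine setLIntegral_congr_fun measurableSet_Ioi ?_
    intro t ht
    simp only [klo, Set.indicator, Set.mem_Ici, div_le_iff₀ hc, mul_comm t c]
    by_cases h : c * t < s
    · rw [if_pos h, if_neg (by linarith)]; simp
    · rw [if_neg h, if_pos (by linarith)]
      rw [aux_pow_id ht, ← ENNReal.ofReal_mul (by have : 0 < t := ht; positivity)]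
      congr 1; ring
  have hI : Set.Ici (s / c) ∩ Set.Ioi (0:ℝ) = Set.Ici (s / c) :=
    Set.inter_eq_left.2 (fun x hx => lt_of_lt_of_le hsc hx)
  rw [h1, setLIntegral_indicator measurableSet_Ici, hI, setLIntegral_congr Ioi_ae_eq_Ici.symm]
  have hint : IntegrableOn (fun t : ℝ => 2 ^ q * s ^ q * t ^ (p - 1 - q)) (Set.Ioi (s / c)) :=
    (integrableOn_Ioi_rpow_of_lt (by linarith) hsc).const_mul _
  rw [← ofReal_integral_eq_lintegral_ofReal hint, ← ENNReal.ofReal_mul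
    (div_nonneg (by positivity) (by linarith)), integral_const_mul,
    integral_Ioi_rpow_of_lt (by linarith) hsc]
  · apply ENNReal.ofReal_le_ofReal
    have h2 : q - p ≠ 0 := by linarith
    have h3 : p - q ≠ 0 := by linarith
    rw [Real.div_rpow hs.le hc.le,
      show p - 1 - q + 1 = p - q by ring, show q - p = -(p - q) by ring, Real.rpow_neg hc.le,
      show s ^ p = s ^ q * s ^ (p - q) by rw [← Real.rpow_add hs]; ring_nf]
    apply le_of_eq
    field_simp
  · filter_upwards [self_mem_ae_restrict measurableSet_Ioi] with t ht
    have : 0 < t := hsc.trans ht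
    simp only [Pi.zero_apply]; positivity

lemma khi_meas (p q c : ℝ) : Measurable (fun z : ℝ × ℝ => khi p q c z.1 z.2) := by
  unfold khi
  refine Measurable.mul (by fun_prop) ?_
  exact Measurable.ite (measurableSet_lt (by fun_prop) (by fun_prop)) (by fun_prop) measurable_const

lemma klo_meas (p q c : ℝ) : Measurable (fun z : ℝ × ℝ => klo p q c z.1 z.2) := by
  unfold klo
  refine Measurable.mul (by fun_prop) ?_
  exact Measurable.ite (measurableSet_lt (by fun_prop) (by fun_prop)) measurable_const (by fun_prop)

lemma kernel_int {k : ℝ → ℝ → ℝ≥0∞} (hk : Measurable (fun z : ℝ × ℝ => k z.1 z.2))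
    {p D : ℝ} (hp : 0 ≤ p)
    (hD : ∀ s, 0 ≤ s → ∫⁻ t in Set.Ioi (0:ℝ), k t s ≤ ENNReal.ofReal D * ENNReal.ofReal (s ^ p))
    (I : Finset ℕ) (g : ℕ → R3 → ℂ) (hg : ∀ l, Measurable (g l)) :
    ∫⁻ t in Set.Ioi (0:ℝ), ∑ l ∈ I, ∫⁻ x, k t ‖g l x‖ ≤
      ENNReal.ofReal D * ∑ l ∈ I, ∫⁻ x, ‖g l x‖ₑ ^ p := by
  have hm : ∀ l, Measurable (fun z : ℝ × R3 => k z.1 ‖g l z.2‖) := fun l =>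
    hk.comp (measurable_fst.prodMk ((hg l).norm.comp measurable_snd))
  rw [lintegral_finsetSum _ (fun l _ => (hm l).lintegral_prod_right'), Finset.mul_sum]
  refine Finset.sum_le_sum fun l _ => ?_
  rw [lintegral_lintegral_swap (hm l).aemeasurable,
    ← lintegral_const_mul _ ((hg l).enorm.pow_const p)]
  refine lintegral_mono fun x => ?_
  rw [enorm_rpow_eq _ hp]
  exact hD _ (norm_nonneg _)


/-- Strong type `(q,q)` bound. -/
def Bd (T : (ℕ → R3 → ℂ) → R3 → ℂ) (I : Finset ℕ) (q B : ℝ) : Prop :=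
  ∀ g, Good g → ∫⁻ x, ‖T g x‖ₑ ^ q ≤ ENNReal.ofReal B * ∑ l ∈ I, ∫⁻ x, ‖g l x‖ₑ ^ q

lemma aux_hi_level {T : (ℕ → R3 → ℂ) → R3 → ℂ} {I : Finset ℕ}
    (hmeas : ∀ g, Good g → Measurable (T g)) {p q B c t : ℝ} (hq : 0 < q) (ht : 0 < t)
    (hB : Bd T I q B) {g : ℕ → R3 → ℂ} (hg : Good g) :
    volume {x | t / 2 < ‖T (ghi (c * t) g) x‖} * ENNReal.ofReal (t ^ (p - 1)) ≤
      ENNReal.ofReal B * ∑ l ∈ I, ∫⁻ x, khi p q c t ‖g l x‖ := by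
  have h := (aux_cheb _ (hmeas _ (hg.ghi (c * t))) hq ht).trans
    (mul_le_mul_right (hB _ (hg.ghi (c * t))) _)
  refine (mul_le_mul_left h _).trans (le_of_eq ?_)
  have e : ∀ l, ∫⁻ x, khi p q c t ‖g l x‖ = ENNReal.ofReal (t ^ (p - 1) * (t / 2) ^ (-q)) *
      ∫⁻ x, ‖ghi (c * t) g l x‖ₑ ^ q := by
    intro l
    rw [← lintegral_const_mul' _ _ ENNReal.ofReal_ne_top]
    refine lintegral_congr fun x => ?_
    simp only [khi, ghi]
    congr 1
    split_ifs
    · rw [enorm_rpow_eq _ hq.le]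
    · simp [hq]
  simp_rw [e]
  rw [← Finset.mul_sum, ENNReal.ofReal_mul (by positivity)]
  ring

lemma aux_lo_level {T : (ℕ → R3 → ℂ) → R3 → ℂ} {I : Finset ℕ}
    (hmeas : ∀ g, Good g → Measurable (T g)) {p q B c t : ℝ} (hq : 0 < q) (ht : 0 < t)
    (hB : Bd T I q B) {g : ℕ → R3 → ℂ} (hg : Good g) :
    volume {x | t / 2 < ‖T (glo (c * t) g) x‖} * ENNReal.ofReal (t ^ (p - 1)) ≤
      ENNReal.ofReal B * ∑ l ∈ I, ∫⁻ x, klo p q c t ‖g l x‖ := by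
  have h := (aux_cheb _ (hmeas _ (hg.glo (c * t))) hq ht).trans
    (mul_le_mul_right (hB _ (hg.glo (c * t))) _)
  refine (mul_le_mul_left h _).trans (le_of_eq ?_)
  have e : ∀ l, ∫⁻ x, klo p q c t ‖g l x‖ = ENNReal.ofReal (t ^ (p - 1) * (t / 2) ^ (-q)) *
      ∫⁻ x, ‖glo (c * t) g l x‖ₑ ^ q := by
    intro l
    rw [← lintegral_const_mul' _ _ ENNReal.ofReal_ne_top]
    refine lintegral_congr fun x => ?_
    simp only [klo, glo]
    congr 1
    split_ifs
    · simp [hq]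
    · rw [enorm_rpow_eq _ hq.le]
  simp_rw [e]
  rw [← Finset.mul_sum, ENNReal.ofReal_mul (by positivity)]
  ring

lemma aux_level_split {T : (ℕ → R3 → ℂ) → R3 → ℂ}
    (hadd : ∀ g g', Good g → Good g' → T (g + g') = T g + T g')
    {g : ℕ → R3 → ℂ} (hg : Good g) (s t : ℝ) :
    {x | t < ‖T g x‖} ⊆ {x | t / 2 < ‖T (ghi s g) x‖} ∪ {x | t / 2 < ‖T (glo s g) x‖} := by
  intro x hx
  have h : T g = T (ghi s g) + T (glo s g) := by
    rw [← hadd _ _ (hg.ghi s) (hg.glo s), ghi_add_glo]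
  have hx' : t < ‖T g x‖ := hx
  rw [h, Pi.add_apply] at hx'
  have := norm_add_le (T (ghi s g) x) (T (glo s g) x)
  by_contra hcon
  have h1 : ¬ (t / 2 < ‖T (ghi s g) x‖) := fun h => hcon (Or.inl h)
  have h2 : ¬ (t / 2 < ‖T (glo s g) x‖) := fun h => hcon (Or.inr h)
  linarith

lemma sum_k_meas {k : ℝ → ℝ → ℝ≥0∞} (hk : Measurable (fun z : ℝ × ℝ => k z.1 z.2))
    (I : Finset ℕ) {g : ℕ → R3 → ℂ} (hg : Good g) :
    Measurable (fun t => ∑ l ∈ I, ∫⁻ x, k t ‖g l x‖) := by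
  refine Finset.measurable_sum _ fun l _ => ?_
  exact Measurable.lintegral_prod_right' (f := fun z : ℝ × R3 => k z.1 ‖g l z.2‖)
    (hk.comp (measurable_fst.prodMk ((hg l).1.norm.comp measurable_snd)))

lemma marc_mid {T : (ℕ → R3 → ℂ) → R3 → ℂ} {I : Finset ℕ}
    (hadd : ∀ g g', Good g → Good g' → T (g + g') = T g + T g')
    (hmeas : ∀ g, Good g → Measurable (T g)) {p q₀ q₁ B₀ B₁ c : ℝ} (hq₀ : 0 < q₀) (h0 : q₀ < p)
    (h1 : p < q₁) (hc : 0 < c) (hB₀ : 0 ≤ B₀) (hB₁ : 0 ≤ B₁)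
    (hb₀ : Bd T I q₀ B₀) (hb₁ : Bd T I q₁ B₁) :
    Bd T I p (p * (B₀ * (2 ^ q₀ * c ^ (q₀ - p) / (p - q₀)) +
      B₁ * (2 ^ q₁ * c ^ (q₁ - p) / (q₁ - p)))) := by
  intro g hg
  have hp : 0 < p := hq₀.trans h0
  have hpos0 : 0 ≤ 2 ^ q₀ * c ^ (q₀ - p) / (p - q₀) := div_nonneg (by positivity) (by linarith)
  have hpos1 : 0 ≤ 2 ^ q₁ * c ^ (q₁ - p) / (q₁ - p) := div_nonneg (by positivity) (by linarith)
  have hTm := hmeas g hg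
  simp_rw [enorm_rpow_eq (T g _) hp.le]
  rw [lintegral_rpow_eq_lintegral_meas_lt_mul volume (Filter.Eventually.of_forall fun x => norm_nonneg _)
    hTm.norm.aemeasurable hp, ENNReal.ofReal_mul hp.le, mul_assoc]
  gcongr
  calc ∫⁻ t in Set.Ioi (0:ℝ), volume {x | t < ‖T g x‖} * ENNReal.ofReal (t ^ (p - 1))
      ≤ ∫⁻ t in Set.Ioi (0:ℝ), ((ENNReal.ofReal B₀ * ∑ l ∈ I, ∫⁻ x, khi p q₀ c t ‖g l x‖) +
          ENNReal.ofReal B₁ * ∑ l ∈ I, ∫⁻ x, klo p q₁ c t ‖g l x‖) := by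
        refine setLIntegral_mono' measurableSet_Ioi fun t ht => ?_
        refine le_trans ?_ (add_le_add (aux_hi_level (c := c) hmeas hq₀ ht hb₀ hg)
          (aux_lo_level (c := c) hmeas (hp.trans h1) ht hb₁ hg))
        rw [← add_mul]
        gcongr
        exact (measure_mono (aux_level_split hadd hg (c * t) t)).trans (measure_union_le _ _)
    _ = (ENNReal.ofReal B₀ * ∫⁻ t in Set.Ioi (0:ℝ), ∑ l ∈ I, ∫⁻ x, khi p q₀ c t ‖g l x‖) +
          ENNReal.ofReal B₁ * ∫⁻ t in Set.Ioi (0:ℝ), ∑ l ∈ I, ∫⁻ x, klo p q₁ c t ‖g l x‖ := by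
        have m0 := sum_k_meas (khi_meas p q₀ c) I hg
        have m1 := sum_k_meas (klo_meas p q₁ c) I hg
        rw [lintegral_add_left (m0.const_mul _), lintegral_const_mul _ m0,
          lintegral_const_mul _ m1]
    _ ≤ ENNReal.ofReal B₀ * (ENNReal.ofReal (2 ^ q₀ * c ^ (q₀ - p) / (p - q₀)) * 
            ∑ l ∈ I, ∫⁻ x, ‖g l x‖ₑ ^ p) +
        ENNReal.ofReal B₁ * (ENNReal.ofReal (2 ^ q₁ * c ^ (q₁ - p) / (q₁ - p)) *
            ∑ l ∈ I, ∫⁻ x, ‖g l x‖ₑ ^ p) := by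
        gcongr
        · exact kernel_int (khi_meas p q₀ c) hp.le (fun s hs => khi_int h0 hq₀ hc hs) I g
            (fun l => (hg l).1)
        · exact kernel_int (klo_meas p q₁ c) hp.le (fun s hs => klo_int h1 hp hc hs) I g
            (fun l => (hg l).1)
    _ = _ := by
        rw [ENNReal.ofReal_add (mul_nonneg hB₀ hpos0) (mul_nonneg hB₁ hpos1),
          ENNReal.ofReal_mul hB₀, ENNReal.ofReal_mul hB₁]
        ring

lemma marc_high {T : (ℕ → R3 → ℂ) → R3 → ℂ} {I : Finset ℕ}
    (hadd : ∀ g g', Good g → Good g' → T (g + g') = T g + T g')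
    (hmeas : ∀ g, Good g → Measurable (T g)) {p q₀ B₀ A : ℝ} (hq₀ : 0 < q₀) (h0 : q₀ < p)
    (hB₀ : 0 ≤ B₀) (hA : 0 < A)
    (hb₀ : Bd T I q₀ B₀)
    (hinf : ∀ g, Good g → ∀ M : ℝ, (∀ l x, ‖g l x‖ ≤ M) → ∀ x, ‖T g x‖ ≤ A * M) :
    Bd T I p (p * (B₀ * (2 ^ q₀ * (1 / (2 * A)) ^ (q₀ - p) / (p - q₀)))) := by
  intro g hg
  have hp : 0 < p := hq₀.trans h0
  set c := 1 / (2 * A) with hc'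
  have hc : 0 < c := by positivity
  have hpos0 : 0 ≤ 2 ^ q₀ * c ^ (q₀ - p) / (p - q₀) := div_nonneg (by positivity) (by linarith)
  have hTm := hmeas g hg
  simp_rw [enorm_rpow_eq (T g _) hp.le]
  rw [lintegral_rpow_eq_lintegral_meas_lt_mul volume (Filter.Eventually.of_forall fun x => norm_nonneg _)
    hTm.norm.aemeasurable hp, ENNReal.ofReal_mul hp.le, mul_assoc]
  gcongr
  calc ∫⁻ t in Set.Ioi (0:ℝ), volume {x | t < ‖T g x‖} * ENNReal.ofReal (t ^ (p - 1))
      ≤ ∫⁻ t in Set.Ioi (0:ℝ), (ENNReal.ofReal B₀ * ∑ l ∈ I, ∫⁻ x, khi p q₀ c t ‖g l x‖) := by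
        refine setLIntegral_mono' measurableSet_Ioi fun t ht => ?_
        refine le_trans ?_ (aux_hi_level (c := c) hmeas hq₀ ht hb₀ hg)
        refine mul_le_mul_left (measure_mono ?_) _
        intro x hx
        rcases aux_level_split hadd hg (c * t) t hx with h | h
        · exact h
        · exfalso
          have ht' : 0 < t := ht
          have h2 := hinf _ (hg.glo (c * t)) (c * t) (by
            intro l y
            simp only [glo]
            split_ifs with h3
            · simp; positivity
            · linarith) x
          have h3 : A * (c * t) = t / 2 := by rw [hc']; field_simp
          have h4 : t / 2 < ‖T (glo (c * t) g) x‖ := h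
          linarith
    _ = ENNReal.ofReal B₀ * ∫⁻ t in Set.Ioi (0:ℝ), ∑ l ∈ I, ∫⁻ x, khi p q₀ c t ‖g l x‖ := by
        rw [lintegral_const_mul _ (sum_k_meas (khi_meas p q₀ c) I hg)]
    _ ≤ ENNReal.ofReal B₀ * (ENNReal.ofReal (2 ^ q₀ * c ^ (q₀ - p) / (p - q₀)) * 
            ∑ l ∈ I, ∫⁻ x, ‖g l x‖ₑ ^ p) := by
        gcongr
        exact kernel_int (khi_meas p q₀ c) hp.le (fun s hs => khi_int h0 hq₀ hc hs) I g
            (fun l => (hg l).1)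
    _ = _ := by
        rw [ENNReal.ofReal_mul hB₀]
        ring


/-- convolution -/
def cv (K g : R3 → ℂ) (x : R3) : ℂ := ∫ y, K (x - y) * g y

lemma sw_fourierInv_coe (φ : SchwartzMap R3 ℂ) : 𝓕⁻ (φ : R3 → ℂ) = ((𝓕⁻ φ : SchwartzMap R3 ℂ) : R3 → ℂ) :=
  (SchwartzMap.fourierInv_coe φ).symm

lemma sw_fourier_coe (φ : SchwartzMap R3 ℂ) : 𝓕 (φ : R3 → ℂ) = ((𝓕 φ : SchwartzMap R3 ℂ) : R3 → ℂ) :=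
  (SchwartzMap.fourier_coe φ).symm

lemma cv_fourierInv (φ : SchwartzMap R3 ℂ) {h : R3 → ℂ} (hh : Integrable h) (x : R3) :
    cv (𝓕⁻ (φ : R3 → ℂ)) (𝓕⁻ h) x = 𝓕⁻ (fun ξ => φ ξ * h ξ) x := by
  set u : R3 → ℂ := fun y => (𝓕⁻ φ : SchwartzMap R3 ℂ) (x - y) with hu
  have hui : Integrable u := (𝓕⁻ φ : SchwartzMap R3 ℂ).integrable.comp_sub_left x
  have key := VectorFourier.integral_fourierIntegral_smul_eq_flip (e := 𝐞) (μ := (volume : Measure R3))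
    (ν := (volume : Measure R3)) (L := -innerₗ R3) (f := h) (g := u) Real.continuous_fourierChar
    (by
      show Continuous fun p : R3 × R3 => -inner ℝ p.1 p.2
      fun_prop) hh hui
  have e1 : cv (𝓕⁻ (φ : R3 → ℂ)) (𝓕⁻ h) x =
      ∫ ξ, (VectorFourier.fourierIntegral 𝐞 volume (-innerₗ R3) h ξ) • u ξ := by
    rw [sw_fourierInv_coe]
    refine integral_congr_ae (Filter.Eventually.of_forall fun y => ?_)
    show (𝓕⁻ φ : SchwartzMap R3 ℂ) (x - y) * 𝓕⁻ h y = _ • _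
    rw [smul_eq_mul, mul_comm]
    rfl
  rw [e1, key, Real.fourierInv_eq]
  refine integral_congr_ae (Filter.Eventually.of_forall fun ξ => ?_)
  have e2 : VectorFourier.fourierIntegral 𝐞 volume (-innerₗ R3).flip u ξ =
      (𝐞 (inner ℝ ξ x)) • φ ξ := by
    have e3 : VectorFourier.fourierIntegral 𝐞 volume (-innerₗ R3).flip u ξ =
        ∫ y, (fun z => (𝐞 (inner ℝ (x - z) ξ)) • (𝓕⁻ φ : SchwartzMap R3 ℂ) z) (x - y) := by
      simp [VectorFourier.fourierIntegral, hu, real_inner_comm]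
    rw [e3, integral_sub_left_eq_self (fun z => (𝐞 (inner ℝ (x - z) ξ)) • (𝓕⁻ φ : SchwartzMap R3 ℂ) z)]
    have e4 : ∀ z, (𝐞 (inner ℝ (x - z) ξ)) • (𝓕⁻ φ : SchwartzMap R3 ℂ) z =
        ((𝐞 (inner ℝ ξ x) : Circle) : ℂ) • ((𝐞 (-inner ℝ z ξ)) • (𝓕⁻ φ : SchwartzMap R3 ℂ) z) := by
      intro z
      rw [← Circle.smul_def, smul_smul, ← AddChar.map_add_eq_mul, inner_sub_left,
        real_inner_comm, sub_eq_add_neg]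
    simp_rw [e4]
    rw [integral_smul, Circle.smul_def, ← Real.fourier_eq, sw_fourier_coe]
    simp
  simp only [e2, smul_eq_mul, Circle.smul_def]
  ring

/-- Smoothed projection of a Schwartz function. -/
def cvS (φ g : SchwartzMap R3 ℂ) : SchwartzMap R3 ℂ :=
  𝓕⁻ (SchwartzMap.smulLeftCLM ℂ (φ : R3 → ℂ) (𝓕 g))

lemma fourier_cvS (φ g : SchwartzMap R3 ℂ) (ξ : R3) :
    𝓕 (cvS φ g : R3 → ℂ) ξ = φ ξ * (𝓕 g : SchwartzMap R3 ℂ) ξ := by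
  rw [sw_fourier_coe, cvS]
  simp [SchwartzMap.smulLeftCLM_apply_apply φ.hasTemperateGrowth]

lemma cvS_apply (φ g : SchwartzMap R3 ℂ) (x : R3) :
    cvS φ g x = cv (𝓕⁻ (φ : R3 → ℂ)) g x := by
  have h := cv_fourierInv φ (𝓕 g : SchwartzMap R3 ℂ).integrable x
  have h2 : 𝓕⁻ ((𝓕 g : SchwartzMap R3 ℂ) : R3 → ℂ) = g := by
    rw [sw_fourierInv_coe]; simp
  rw [h2] at h
  rw [h, cvS, ← sw_fourierInv_coe]
  have h3 : ((SchwartzMap.smulLeftCLM ℂ (φ : R3 → ℂ) (𝓕 g) : SchwartzMap R3 ℂ) : R3 → ℂ) =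
      fun ξ => φ ξ * (𝓕 g : SchwartzMap R3 ℂ) ξ := by
    ext ξ
    simp [SchwartzMap.smulLeftCLM_apply_apply φ.hasTemperateGrowth]
  rw [h3]

lemma young (K : SchwartzMap R3 ℂ) {g : R3 → ℂ} (hgm : Measurable g) {q : ℝ} (hq : 1 < q) :
    ∫⁻ x, ‖cv K g x‖ₑ ^ q ≤ (∫⁻ x, ‖K x‖ₑ) ^ q * ∫⁻ x, ‖g x‖ₑ ^ q := by
  have hq0 : 0 < q := by linarith
  have hK : Measurable fun x => ‖K x‖ₑ := K.continuous.measurable.enorm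
  have hg : Measurable fun x => ‖g x‖ₑ := hgm.enorm
  set A := ∫⁻ x, ‖K x‖ₑ with hA
  set q' := q.conjExponent with hq'
  have hc : q'.HolderConjugate q := (Real.HolderConjugate.conjExponent hq).symm
  have hpt : ∀ x, ‖cv K g x‖ₑ ^ q ≤ A ^ (q - 1) * ∫⁻ y, ‖K (x - y)‖ₑ * ‖g y‖ₑ ^ q := by
    intro x
    have hKx : Measurable fun y => ‖K (x - y)‖ₑ := hK.comp (measurable_const.sub measurable_id)
    have h1 : ‖cv K g x‖ₑ ≤ ∫⁻ y, ‖K (x - y)‖ₑ * ‖g y‖ₑ := by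
      refine (enorm_integral_le_lintegral_enorm _).trans (le_of_eq ?_)
      simp [enorm_mul]
    have h2 : ∫⁻ y, ‖K (x - y)‖ₑ * ‖g y‖ₑ ≤
        (∫⁻ y, ‖K (x - y)‖ₑ) ^ (1 / q') * (∫⁻ y, ‖K (x - y)‖ₑ * ‖g y‖ₑ ^ q) ^ (1 / q) := by
      have := ENNReal.lintegral_mul_le_Lp_mul_Lq (volume : Measure R3) hc
        (f := fun y => ‖K (x - y)‖ₑ ^ (1 / q')) (g := fun y => ‖K (x - y)‖ₑ ^ (1 / q) * ‖g y‖ₑ)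
        (hKx.pow_const _).aemeasurable ((hKx.pow_const _).mul hg).aemeasurable
      have hne : q' ≠ 0 := hc.ne_zero
      have hsum : 1 / q' + 1 / q = 1 := by
        have := hc.inv_add_inv_eq_one
        simpa [one_div] using this
      have e1 : ∀ y, ((fun y => ‖K (x - y)‖ₑ ^ (1 / q')) *
          (fun y => ‖K (x - y)‖ₑ ^ (1 / q) * ‖g y‖ₑ)) y = ‖K (x - y)‖ₑ * ‖g y‖ₑ := by
        intro y
        simp only [Pi.mul_apply]
        rw [← mul_assoc, ← ENNReal.rpow_add_of_nonneg _ _ (by have := hc.pos; positivity)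
          (by positivity), hsum, ENNReal.rpow_one]
      have e2 : ∀ y, (‖K (x - y)‖ₑ ^ (1 / q')) ^ q' = ‖K (x - y)‖ₑ := by
        intro y
        rw [← ENNReal.rpow_mul, one_div_mul_cancel hne, ENNReal.rpow_one]
      have e3 : ∀ y, (‖K (x - y)‖ₑ ^ (1 / q) * ‖g y‖ₑ) ^ q = ‖K (x - y)‖ₑ * ‖g y‖ₑ ^ q := by
        intro y
        rw [ENNReal.mul_rpow_of_nonneg _ _ hq0.le, ← ENNReal.rpow_mul,
          one_div_mul_cancel hq0.ne', ENNReal.rpow_one]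
      simp_rw [e1, e2, e3] at this
      exact this
    have h3 : ∫⁻ y, ‖K (x - y)‖ₑ = A := by
      rw [hA]
      exact lintegral_sub_left_eq_self (fun y => ‖K y‖ₑ) x
    rw [h3] at h2
    calc ‖cv K g x‖ₑ ^ q ≤ (A ^ (1 / q') * (∫⁻ y, ‖K (x - y)‖ₑ * ‖g y‖ₑ ^ q) ^ (1 / q)) ^ q := by
          gcongr; exact h1.trans h2
      _ = _ := by
          rw [ENNReal.mul_rpow_of_nonneg _ _ hq0.le, ← ENNReal.rpow_mul, ← ENNReal.rpow_mul,
            one_div_mul_cancel hq0.ne', ENNReal.rpow_one]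
          congr 2
          have := hc.inv_add_inv_eq_one
          have h5 : 1 / q' = 1 - q⁻¹ := by rw [one_div]; linarith
          rw [h5]; field_simp
  have hm : Measurable (fun z : R3 × R3 => ‖K (z.1 - z.2)‖ₑ * ‖g z.2‖ₑ ^ q) :=
    (hK.comp (measurable_fst.sub measurable_snd)).mul ((hg.comp measurable_snd).pow_const _)
  have hAt : A ≠ ⊤ := K.integrable.2.ne
  calc ∫⁻ x, ‖cv K g x‖ₑ ^ q ≤ ∫⁻ x, A ^ (q - 1) * ∫⁻ y, ‖K (x - y)‖ₑ * ‖g y‖ₑ ^ q :=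
        lintegral_mono hpt
    _ = A ^ (q - 1) * ∫⁻ y, ∫⁻ x, ‖K (x - y)‖ₑ * ‖g y‖ₑ ^ q := by
        rw [lintegral_const_mul' _ _ (ENNReal.rpow_ne_top_of_nonneg (by linarith) hAt),
          lintegral_lintegral_swap hm.aemeasurable]
    _ = A ^ (q - 1) * ∫⁻ y, A * ‖g y‖ₑ ^ q := by
        congr 1
        refine lintegral_congr fun y => ?_
        have hKy : Measurable fun x => ‖K (x - y)‖ₑ := hK.comp (measurable_id.sub measurable_const)
        rw [lintegral_mul_const _ hKy, hA]
        congr 1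
        exact lintegral_sub_right_eq_self (fun x => ‖K x‖ₑ) y
    _ = A ^ q * ∫⁻ y, ‖g y‖ₑ ^ q := by
        rw [lintegral_const_mul' _ _ hAt, ← mul_assoc]
        congr 1
        nth_rewrite 2 [← ENNReal.rpow_one A]
        rw [← ENNReal.rpow_add_of_nonneg _ _ (by linarith) (by norm_num)]
        congr 1; ring


/-- The smoothed operator. -/
def TT (K : ℕ → SchwartzMap R3 ℂ) (I : Finset ℕ) (g : ℕ → R3 → ℂ) : R3 → ℂ :=
  fun x => ∑ l ∈ I, cv (K l) (g l) x

lemma cv_int (K : SchwartzMap R3 ℂ) {g : R3 → ℂ} (hm : Measurable g) {M : ℝ}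
    (hM : ∀ x, ‖g x‖ ≤ M) (x : R3) : Integrable fun y => K (x - y) * g y :=
  (K.integrable.comp_sub_left x).mul_bdd hm.aestronglyMeasurable
    (Filter.Eventually.of_forall hM)

lemma cv_meas (K : SchwartzMap R3 ℂ) {g : R3 → ℂ} (hm : Measurable g) : Measurable (cv K g) := by
  have : Measurable (fun z : R3 × R3 => K (z.1 - z.2) * g z.2) :=
    (K.continuous.measurable.comp (measurable_fst.sub measurable_snd)).mul (hm.comp measurable_snd)
  exact (this.stronglyMeasurable.integral_prod_right (ν := (volume : Measure R3))).measurable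

lemma cv_bound (K : SchwartzMap R3 ℂ) {g : R3 → ℂ} {M A : ℝ}
    (hM : ∀ x, ‖g x‖ ≤ M) (hA : ∫ x, ‖K x‖ ≤ A) (x : R3) : ‖cv K g x‖ ≤ A * M := by
  have hM0 : 0 ≤ M := (norm_nonneg _).trans (hM 0)
  have hi : Integrable fun y => ‖K (x - y)‖ * M := ((K.integrable.comp_sub_left x).norm).mul_const M
  calc ‖cv K g x‖ ≤ ∫ y, ‖K (x - y)‖ * M := by
        refine norm_integral_le_of_norm_le hi (Filter.Eventually.of_forall fun y => ?_)
        rw [norm_mul]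
        exact mul_le_mul_of_nonneg_left (hM y) (norm_nonneg _)
    _ = (∫ y, ‖K y‖) * M := by
        rw [integral_mul_const, integral_sub_left_eq_self (fun y => ‖K y‖)]
    _ ≤ A * M := mul_le_mul_of_nonneg_right hA hM0

lemma cv_sub (K : SchwartzMap R3 ℂ) {g g' : R3 → ℂ} (hm : Measurable g) {M M' : ℝ}
    (hM : ∀ x, ‖g x‖ ≤ M) (hm' : Measurable g') (hM' : ∀ x, ‖g' x‖ ≤ M') (x : R3) :
    cv K (g - g') x = cv K g x - cv K g' x := by
  unfold cv
  rw [← integral_sub (cv_int K hm hM x) (cv_int K hm' hM' x)]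
  simp [mul_sub]

lemma TT_add (K : ℕ → SchwartzMap R3 ℂ) (I : Finset ℕ) (g g' : ℕ → R3 → ℂ) (hg : Good g)
    (hg' : Good g') : TT K I (g + g') = TT K I g + TT K I g' := by
  ext x
  simp only [TT, Pi.add_apply, ← Finset.sum_add_distrib]
  refine Finset.sum_congr rfl fun l _ => ?_
  obtain ⟨hm, M, hM⟩ := hg l
  obtain ⟨hm', M', hM'⟩ := hg' l
  unfold cv
  rw [← integral_add (cv_int (K l) hm hM x) (cv_int (K l) hm' hM' x)]
  simp [mul_add]

lemma TT_meas (K : ℕ → SchwartzMap R3 ℂ) (I : Finset ℕ) (g : ℕ → R3 → ℂ) (hg : Good g) :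
    Measurable (TT K I g) := by
  unfold TT
  exact Finset.measurable_fun_sum _ fun l _ => cv_meas (K l) (hg l).1

lemma TT_bound (K : ℕ → SchwartzMap R3 ℂ) (I : Finset ℕ) {A : ℝ} (hA : ∀ l, ∫ x, ‖K l x‖ ≤ A)
    (g : ℕ → R3 → ℂ) (M : ℝ) (hM : ∀ l x, ‖g l x‖ ≤ M) (x : R3) :
    ‖TT K I g x‖ ≤ (I.card * A) * M := by
  refine (norm_sum_le _ _).trans ?_
  refine (Finset.sum_le_sum fun l _ => cv_bound (K l) (hM l) (hA l) x).trans (le_of_eq ?_)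
  rw [Finset.sum_const, nsmul_eq_mul]; ring

lemma eL_pow (u : R3 → ℂ) {q : ℝ} (hq : 0 < q) :
    eLpNorm u (ENNReal.ofReal q) volume ^ q = ∫⁻ x, ‖u x‖ₑ ^ q := by
  rw [eLpNorm_eq_lintegral_rpow_enorm_toReal (by simpa using hq) (by simp),
    ENNReal.toReal_ofReal hq.le, ← ENNReal.rpow_mul, one_div_mul_cancel hq.ne', ENNReal.rpow_one]

lemma eL_eq (u : R3 → ℂ) {q : ℝ} (hq : 0 < q) :
    eLpNorm u (ENNReal.ofReal q) volume = (∫⁻ x, ‖u x‖ₑ ^ q) ^ q⁻¹ := by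
  rw [← eL_pow u hq, ← ENNReal.rpow_mul, mul_inv_cancel₀ hq.ne', ENNReal.rpow_one]

lemma sw_approx {u : R3 → ℂ} {q : ℝ≥0∞} (hq : 1 ≤ q) (hq' : q ≠ ⊤) (hu : MemLp u q volume)
    {δ : ℝ≥0∞} (hδ : δ ≠ 0) : ∃ s : SchwartzMap R3 ℂ, eLpNorm (u - (s : R3 → ℂ)) q volume ≤ δ := by
  obtain ⟨η, hη, hηδ⟩ : ∃ η : ℝ, 0 < η ∧ ENNReal.ofReal η ≤ δ := by
    by_cases h : δ = ⊤
    · exact ⟨1, one_pos, by simp [h]⟩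
    · exact ⟨δ.toReal, ENNReal.toReal_pos hδ h, by rw [ENNReal.ofReal_toReal h]⟩
  obtain ⟨g, h1, h2, h3⟩ := hu.exist_eLpNorm_sub_le hq' hq hη
  exact ⟨h1.toSchwartzMap h2, h3.trans hηδ⟩

lemma young_eL (K : SchwartzMap R3 ℂ) {g : R3 → ℂ} (hgm : Measurable g) {q : ℝ} (hq : 1 < q) :
    eLpNorm (cv K g) (ENNReal.ofReal q) volume ≤
      (∫⁻ x, ‖K x‖ₑ) * eLpNorm g (ENNReal.ofReal q) volume := by
  have hq0 : 0 < q := by linarith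
  rw [eL_eq _ hq0, eL_eq _ hq0]
  calc _ ≤ ((∫⁻ x, ‖K x‖ₑ) ^ q * ∫⁻ x, ‖g x‖ₑ ^ q) ^ q⁻¹ := by
        gcongr; exact young K hgm hq
    _ = _ := by
        rw [ENNReal.mul_rpow_of_nonneg _ _ (by positivity), ← ENNReal.rpow_mul,
          mul_inv_cancel₀ hq0.ne', ENNReal.rpow_one]

lemma dens (K : ℕ → SchwartzMap R3 ℂ) (I : Finset ℕ) {q B : ℝ} (hq : 1 < q) (hB : 0 < B)
    (hS : ∀ s : ℕ → SchwartzMap R3 ℂ, ∫⁻ x, ‖TT K I (fun l => s l) x‖ₑ ^ q ≤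
      ENNReal.ofReal B * ∑ l ∈ I, ∫⁻ x, ‖s l x‖ₑ ^ q) : Bd (TT K I) I q B := by
  intro g hg
  have hq0 : 0 < q := by linarith
  set Q := ENNReal.ofReal q with hQ
  have hQ1 : 1 ≤ Q := by rw [hQ]; simpa using hq.le
  have hQt : Q ≠ ⊤ := by simp [hQ]
  by_cases htop : (∑ l ∈ I, ∫⁻ x, ‖g l x‖ₑ ^ q) = ⊤
  · rw [htop, ENNReal.mul_top (by simpa using hB)]; exact le_top
  have hmem : ∀ l ∈ I, MemLp (g l) Q volume := by
    intro l hl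
    refine ⟨(hg l).1.aestronglyMeasurable, ?_⟩
    have : ∫⁻ x, ‖g l x‖ₑ ^ q ≠ ⊤ := (ENNReal.sum_ne_top.1 htop) l hl
    rw [hQ, eL_eq _ hq0]
    exact ENNReal.rpow_lt_top_of_nonneg (by positivity) this
  have hmemS : ∀ s : SchwartzMap R3 ℂ, MemLp s Q volume := fun s => s.memLp Q volume
  -- approximate bound
  have key : ∀ δ : ℝ≥0∞, δ ≠ 0 → eLpNorm (TT K I g) Q volume ≤
      (ENNReal.ofReal B * ∑ l ∈ I, (eLpNorm (g l) Q volume + δ) ^ q) ^ q⁻¹ +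
        (∑ l ∈ I, ∫⁻ x, ‖K l x‖ₑ) * δ := by
    intro δ hδ
    have : ∀ l, ∃ s : SchwartzMap R3 ℂ, l ∈ I → eLpNorm (g l - (s : R3 → ℂ)) Q volume ≤ δ := by
      intro l
      by_cases hl : l ∈ I
      · obtain ⟨s, hs⟩ := sw_approx hQ1 hQt (hmem l hl) hδ
        exact ⟨s, fun _ => hs⟩
      · exact ⟨0, fun h => absurd h hl⟩
    choose s hs using this
    have hsb : ∀ l, ∃ M : ℝ, ∀ x, ‖s l x‖ ≤ M := fun l =>
      ⟨_, fun x => (s l).norm_le_seminorm ℝ x⟩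
    have hsG : Good fun l => s l := fun l => ⟨(s l).continuous.measurable, hsb l⟩
    have e : TT K I g = TT K I (fun l => s l) + fun x => ∑ l ∈ I, cv (K l) (g l - (s l : R3 → ℂ)) x := by
      ext x
      simp only [TT, Pi.add_apply, ← Finset.sum_add_distrib]
      refine Finset.sum_congr rfl fun l _ => ?_
      obtain ⟨hm, M, hM⟩ := hg l
      obtain ⟨M', hM'⟩ := hsb l
      rw [cv_sub (K l) hm hM (s l).continuous.measurable hM' x]; ring
    have hmd : ∀ l, Measurable (g l - (s l : R3 → ℂ)) := fun l => (hg l).1.sub (s l).continuous.measurable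
    have e2 : (fun x => ∑ l ∈ I, cv (K l) (g l - (s l : R3 → ℂ)) x) = ∑ l ∈ I, cv (K l) (g l - (s l : R3 → ℂ)) := by
      ext x; simp
    rw [e]
    refine (eLpNorm_add_le (TT_meas K I _ hsG).aestronglyMeasurable ?_ hQ1).trans
      (add_le_add ?_ ?_)
    · exact (Finset.measurable_sum _ fun l _ => cv_meas (K l) (hmd l)).aestronglyMeasurable
    · rw [hQ, eL_eq _ hq0]
      gcongr
      refine (hS s).trans ?_
      gcongr with l hl
      rw [← eL_pow _ hq0, ← hQ]
      gcongr
      have : (s l : R3 → ℂ) = g l - (g l - (s l : R3 → ℂ)) := by simp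
      rw [this]
      refine (eLpNorm_sub_le (hmem l hl).1 (hmd l).aestronglyMeasurable hQ1).trans ?_
      gcongr
      exact hs l hl
    · rw [e2]
      refine (eLpNorm_sum_le (fun l _ => (cv_meas (K l) (hmd l)).aestronglyMeasurable) hQ1).trans ?_
      rw [Finset.sum_mul]
      refine Finset.sum_le_sum fun l hl => ?_
      refine (young_eL (K l) (hmd l) hq).trans ?_
      gcongr
      exact hs l hl
  have hKt : (∑ l ∈ I, ∫⁻ x, ‖K l x‖ₑ) ≠ ⊤ :=
    ENNReal.sum_ne_top.2 fun l _ => (K l).integrable.2.ne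
  have hlim : Filter.Tendsto (fun n : ℕ => (ENNReal.ofReal B *
      ∑ l ∈ I, (eLpNorm (g l) Q volume + (n : ℝ≥0∞)⁻¹) ^ q) ^ q⁻¹ +
        (∑ l ∈ I, ∫⁻ x, ‖K l x‖ₑ) * (n : ℝ≥0∞)⁻¹) Filter.atTop
      (nhds ((ENNReal.ofReal B *
      ∑ l ∈ I, (eLpNorm (g l) Q volume + 0) ^ q) ^ q⁻¹ +
        (∑ l ∈ I, ∫⁻ x, ‖K l x‖ₑ) * 0)) := by
    have h0 := ENNReal.tendsto_inv_nat_nhds_zero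
    refine Filter.Tendsto.add ?_ (ENNReal.Tendsto.const_mul h0 (Or.inr hKt))
    refine (ENNReal.continuous_rpow_const.tendsto _).comp ?_
    refine ENNReal.Tendsto.const_mul ?_ (Or.inr (by simp))
    refine tendsto_finsetSum _ fun l _ => ?_
    exact (ENNReal.continuous_rpow_const.tendsto _).comp (tendsto_const_nhds.add h0)
  have hfin := ge_of_tendsto' hlim fun n => key _ (by simp)
  simp only [add_zero, mul_zero] at hfin
  rw [← eL_pow _ hq0, ← hQ]
  calc _ ≤ ((ENNReal.ofReal B * ∑ l ∈ I, (eLpNorm (g l) Q volume) ^ q) ^ q⁻¹) ^ q := by gcongr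
    _ = _ := by
      rw [← ENNReal.rpow_mul, inv_mul_cancel₀ hq0.ne', ENNReal.rpow_one]
      simp_rw [hQ, eL_pow _ hq0]


/-- Affine maps adapted to the moment curve. -/
def Wm (a v1 v2 v3 : ℝ) (ξ : R3) : R3 :=
  !₂[v1 * (ξ 0 - a), v2 * (ξ 1 - 2 * a * ξ 0 + a ^ 2),
    v3 * (ξ 2 - 3 * a * ξ 1 + 3 * a ^ 2 * ξ 0 - a ^ 3)]

/-- The linear part. -/
def Vm (a v1 v2 v3 : ℝ) (h1 : v1 ≠ 0) (h2 : v2 ≠ 0) (h3 : v3 ≠ 0) : R3 ≃L[ℝ] R3 :=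
  LinearEquiv.toContinuousLinearEquiv
  { toFun := fun ξ => !₂[v1 * ξ 0, v2 * (ξ 1 - 2 * a * ξ 0),
      v3 * (ξ 2 - 3 * a * ξ 1 + 3 * a ^ 2 * ξ 0)]
    map_add' := by
      intro x y; ext i; fin_cases i <;> simp <;> ring
    map_smul' := by
      intro c x; ext i; fin_cases i <;> simp <;> ring
    invFun := fun η => !₂[η 0 / v1, η 1 / v2 + 2 * a * (η 0 / v1),
      η 2 / v3 + 3 * a * (η 1 / v2 + 2 * a * (η 0 / v1)) - 3 * a ^ 2 * (η 0 / v1)]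
    left_inv := by
      intro x; ext i; fin_cases i <;> simp <;> field_simp <;> ring
    right_inv := by
      intro x; ext i; fin_cases i <;> simp <;> field_simp <;> ring }

lemma Wm_eq (a v1 v2 v3 : ℝ) (h1 : v1 ≠ 0) (h2 : v2 ≠ 0) (h3 : v3 ≠ 0) (ξ : R3) :
    Wm a v1 v2 v3 ξ = Vm a v1 v2 v3 h1 h2 h3 ξ + !₂[-(v1 * a), v2 * a ^ 2, -(v3 * a ^ 3)] := by
  ext i; fin_cases i <;> simp [Wm, Vm] <;> ring

lemma Wm_schwartz (a v1 v2 v3 : ℝ) (h1 : v1 ≠ 0) (h2 : v2 ≠ 0) (h3 : v3 ≠ 0)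
    (u : SchwartzMap R3 ℂ) : ∃ s : SchwartzMap R3 ℂ, ∀ ξ, s ξ = u (Wm a v1 v2 v3 ξ) := by
  refine ⟨SchwartzMap.compCLMOfContinuousLinearEquiv ℂ (Vm a v1 v2 v3 h1 h2 h3)
    (u.compSubConstCLM ℂ (-!₂[-(v1 * a), v2 * a ^ 2, -(v3 * a ^ 3)])), fun ξ => ?_⟩
  rw [Wm_eq a v1 v2 v3 h1 h2 h3]
  simp [SchwartzMap.compSubConstCLM_apply, sub_neg_eq_add]

lemma Wm_lint (a v1 v2 v3 : ℝ) (h1 : v1 ≠ 0) (h2 : v2 ≠ 0) (h3 : v3 ≠ 0) (q : ℝ) (hq : 0 ≤ q) :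
    ∃ d : ℝ, 0 < d ∧ ∀ u : R3 → ℂ, ∫⁻ x, ‖𝓕⁻ (fun ξ => u (Wm a v1 v2 v3 ξ)) x‖ₑ ^ q =
      ENNReal.ofReal (d ^ (1 - q)) * ∫⁻ x, ‖𝓕⁻ u x‖ₑ ^ q := by
  refine ⟨_, aux_det_pos (Vm a v1 v2 v3 h1 h2 h3), fun u => ?_⟩
  simp_rw [Wm_eq a v1 v2 v3 h1 h2 h3]
  exact aux_lintegral_fourierInv _ _ u q hq

lemma exists_bump : ∃ φ : SchwartzMap R3 ℂ, (∀ ξ, ‖ξ‖ ≤ 10 → φ ξ = 1) ∧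
    (∀ ξ, φ ξ ≠ 0 → ‖ξ‖ ≤ 11) ∧ ∀ ξ, ‖φ ξ‖ ≤ 1 := by
  let b : ContDiffBump (0 : R3) := ⟨10, 11, by norm_num, by norm_num⟩
  have hc : HasCompactSupport (fun ξ : R3 => ((b ξ : ℝ) : ℂ)) :=
    b.hasCompactSupport.comp_left (g := fun x : ℝ => (x : ℂ)) (by simp)
  have hd : ContDiff ℝ (⊤ : ℕ∞) (fun ξ : R3 => ((b ξ : ℝ) : ℂ)) :=
    Complex.ofRealCLM.contDiff.comp b.contDiff
  refine ⟨hc.toSchwartzMap hd, ?_, ?_, ?_⟩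
  · intro ξ hξ
    show ((b ξ : ℝ) : ℂ) = 1
    rw [b.one_of_mem_closedBall (by simpa using hξ)]; simp
  · intro ξ hξ
    by_contra hn
    apply hξ
    show ((b ξ : ℝ) : ℂ) = 0
    rw [b.zero_of_le_dist (by simpa using (not_le.1 hn).le)]; simp
  · intro ξ
    show ‖((b ξ : ℝ) : ℂ)‖ ≤ 1
    rw [Complex.norm_real, Real.norm_of_nonneg b.nonneg]
    exact b.le_one

/-- Map normalizing the cap `l`. -/
def Wl (R β : ℝ) (l : ℕ) : R3 → R3 :=
  Wm (l * R ^ (-β)) (R ^ (-β))⁻¹ ((R ^ (-β)) ^ 2)⁻¹ R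

/-- Compression map. -/
def Wj (R β : ℝ) (j : ℕ) : R3 → R3 :=
  Wm (-((j - 50) * R ^ (-β) / 100)) 100 (100 ^ 2) (100 ^ 3)

lemma dlt_facts {R β : ℝ} (hβ : β ∈ Set.Icc (1/3 : ℝ) 1) (hR : 2 ≤ R) :
    0 < R ^ (-β) ∧ R ^ (-β) ≤ 1 ∧ (R ^ (-β)) ^ 3 ≤ R⁻¹ ∧ R ^ (-2 * β) = (R ^ (-β)) ^ 2 ∧
      R ^ β * R ^ (-β) = 1 := by
  have hR0 : 0 < R := by linarith
  have hR1 : 1 ≤ R := by linarith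
  refine ⟨by positivity, Real.rpow_le_one_of_one_le_of_nonpos hR1 (by linarith [hβ.1]), ?_, ?_, ?_⟩
  · rw [← Real.rpow_natCast, ← Real.rpow_mul hR0.le, ← Real.rpow_neg_one]
    apply Real.rpow_le_rpow_of_exponent_le hR1
    have := hβ.1
    push_cast; linarith
  · rw [← Real.rpow_natCast, ← Real.rpow_mul hR0.le]
    congr 1; push_cast; ring
  · rw [← Real.rpow_add hR0]; simp

lemma geo_inv {δ R a : ℝ} (hδ : 0 < δ) (hR : 0 < R) (ζ : R3) :
    ζ 0 = a + δ * (Wm a δ⁻¹ (δ ^ 2)⁻¹ R ζ 0) ∧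
    ζ 1 - ζ 0 ^ 2 = δ ^ 2 * (Wm a δ⁻¹ (δ ^ 2)⁻¹ R ζ 1 - (Wm a δ⁻¹ (δ ^ 2)⁻¹ R ζ 0) ^ 2) ∧
    ζ 2 - 3 * ζ 0 * ζ 1 + 2 * ζ 0 ^ 3 = R⁻¹ * Wm a δ⁻¹ (δ ^ 2)⁻¹ R ζ 2 -
      3 * δ ^ 3 * (Wm a δ⁻¹ (δ ^ 2)⁻¹ R ζ 0) * (Wm a δ⁻¹ (δ ^ 2)⁻¹ R ζ 1) +
      2 * δ ^ 3 * (Wm a δ⁻¹ (δ ^ 2)⁻¹ R ζ 0) ^ 3 := by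
  simp only [Wm]
  refine ⟨?_, ?_, ?_⟩ <;> simp <;> field_simp <;> ring

lemma geo_cap {R β : ℝ} (hβ : β ∈ Set.Icc (1/3 : ℝ) 1) (hR : 2 ≤ R) {l : ℕ} {ξ : R3}
    (h : ξ ∈ smallCap R β l) : ‖Wl R β l ξ‖ ≤ 10 := by
  obtain ⟨h0, h1, h3, h2, -⟩ := dlt_facts hβ hR
  obtain ⟨c0, c1, c2, c3⟩ := h
  rw [h2] at c2
  have hR0 : 0 < R := by linarith
  obtain ⟨e0, e1, e2⟩ := geo_inv (a := l * R ^ (-β)) h0 hR0 ξ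
  unfold Wl
  set η := Wm (l * R ^ (-β)) (R ^ (-β))⁻¹ ((R ^ (-β)) ^ 2)⁻¹ R ξ
  set δ := R ^ (-β)
  have d0 : 0 ≤ η 0 := by
    by_contra hn; nlinarith [not_le.1 hn]
  have d1 : η 0 ≤ 1 := by
    by_contra hn; nlinarith [not_le.1 hn]
  rw [e1, abs_mul, abs_of_pos (by positivity)] at c2
  have c2' : |η 1 - η 0 ^ 2| ≤ 1 := by
    have : 0 < δ ^ 2 := by positivity
    by_contra hn; nlinarith [not_le.1 hn]
  rw [e2] at c3
  have a1 := abs_le.1 c2'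
  have hη1 : |η 1| ≤ 2 := abs_le.2 ⟨by nlinarith, by nlinarith⟩
  have hη2 : |η 2| ≤ 9 := by
    have t : |-3 * η 0 * η 1 + 2 * η 0 ^ 3| ≤ 8 := by
      have b1 := abs_le.1 hη1
      have b2 : |η 0 * η 1| ≤ 2 := by
        rw [abs_mul, abs_of_nonneg d0]; nlinarith [abs_nonneg (η 1)]
      have b3 := abs_le.1 b2
      have b4 : 0 ≤ η 0 ^ 3 := by positivity
      have b5 : η 0 ^ 3 ≤ 1 := pow_le_one₀ d0 d1
      exact abs_le.2 ⟨by nlinarith, by nlinarith⟩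
    have t2 : |R⁻¹ * η 2| ≤ R⁻¹ * 9 := by
      have : R⁻¹ * η 2 = (R⁻¹ * η 2 - 3 * δ ^ 3 * η 0 * η 1 + 2 * δ ^ 3 * η 0 ^ 3) -
        δ ^ 3 * (-3 * η 0 * η 1 + 2 * η 0 ^ 3) := by ring
      rw [this]
      refine (abs_sub _ _).trans ?_
      rw [abs_mul, abs_of_pos (show 0 < δ ^ 3 by positivity)]
      have : δ ^ 3 * |-3 * η 0 * η 1 + 2 * η 0 ^ 3| ≤ R⁻¹ * 8 := by
        gcongr
      linarith
    rw [abs_mul, abs_of_pos (show 0 < R⁻¹ by positivity)] at t2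
    exact le_of_mul_le_mul_left t2 (by positivity)
  rw [EuclideanSpace.norm_eq, Fin.sum_univ_three]
  apply Real.sqrt_le_iff.2
  refine ⟨by norm_num, ?_⟩
  simp only [Real.norm_eq_abs]
  rw [abs_of_nonneg d0]
  nlinarith [abs_nonneg (η 1), abs_nonneg (η 2)]

set_option maxHeartbeats 1000000 in
lemma geo_main {R β : ℝ} (hβ : β ∈ Set.Icc (1/3 : ℝ) 1) (hR : 2 ≤ R) {j m : ℕ}
    (hm : j + 100 * m < ⌈R ^ β⌉₊) {ξ : R3}
    (h : ‖Wl R β (j + 100 * m) (Wj R β j ξ)‖ ≤ 11) : ξ ∈ smallCap R β m ∧ ξ ∈ M3 R β := by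
  obtain ⟨h0, h1, h3, h2, h4⟩ := dlt_facts hβ hR
  have hR0 : 0 < R := by linarith
  have hl : ((j + 100 * m : ℕ) : ℝ) < R ^ β := Nat.lt_ceil.1 hm
  push_cast at hl
  have hl' : ((j : ℝ) + 100 * m) * R ^ (-β) < 1 := by
    rw [← h4]; exact mul_lt_mul_of_pos_right hl h0
  obtain ⟨e0, e1, e2⟩ := geo_inv (a := ((j + 100 * m : ℕ) : ℝ) * R ^ (-β)) h0 hR0 (Wj R β j ξ)
  unfold Wl at h
  set η := Wm (((j + 100 * m : ℕ) : ℝ) * R ^ (-β)) (R ^ (-β))⁻¹ ((R ^ (-β)) ^ 2)⁻¹ R (Wj R β j ξ)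
  have hη : ∀ i, |η i| ≤ 11 := fun i => (PiLp.norm_apply_le η i).trans h
  have f0 : Wj R β j ξ 0 = 100 * ξ 0 + (j - 50) * R ^ (-β) := by
    simp [Wj, Wm]; ring
  have f1 : Wj R β j ξ 1 - Wj R β j ξ 0 ^ 2 = 100 ^ 2 * (ξ 1 - ξ 0 ^ 2) := by
    simp [Wj, Wm]; ring
  have f2 : Wj R β j ξ 2 - 3 * Wj R β j ξ 0 * Wj R β j ξ 1 + 2 * Wj R β j ξ 0 ^ 3 =
      100 ^ 3 * (ξ 2 - 3 * ξ 0 * ξ 1 + 2 * ξ 0 ^ 3) := by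
    simp [Wj, Wm]; ring
  rw [f0] at e0
  rw [f1] at e1
  rw [f2] at e2
  push_cast at e0
  have n0 := hη 0
  have n1 := hη 1
  have n2 := hη 2
  set δ := R ^ (-β) with hδ
  clear_value η
  have m0 := abs_le.1 n0
  have x0 : 100 * ξ 0 = δ * (100 * m + 50 + η 0) := by linarith
  have q0 : |η 0 ^ 2| ≤ 121 := by
    rw [abs_pow]; nlinarith [abs_nonneg (η 0)]
  have q1 : |ξ 1 - ξ 0 ^ 2| ≤ δ ^ 2 := by
    have : |100 ^ 2 * (ξ 1 - ξ 0 ^ 2)| ≤ δ ^ 2 * 132 := by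
      rw [e1, abs_mul, abs_of_pos (show 0 < δ ^ 2 by positivity)]
      gcongr
      refine (abs_sub _ _).trans ?_
      linarith
    rw [abs_mul, abs_of_pos (show (0:ℝ) < 100 ^ 2 by positivity)] at this
    linarith [sq_nonneg δ]
  have q2 : |ξ 2 - 3 * ξ 0 * ξ 1 + 2 * ξ 0 ^ 3| ≤ R⁻¹ := by
    have k1 : |η 0 * η 1| ≤ 121 := by
      rw [abs_mul]; nlinarith [abs_nonneg (η 0), abs_nonneg (η 1)]
    have k2 : |η 0 ^ 3| ≤ 1331 := by
      rw [abs_pow]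
      calc |η 0| ^ 3 ≤ 11 ^ 3 := by gcongr
        _ = 1331 := by norm_num
    have k3 : |-3 * (η 0 * η 1) + 2 * η 0 ^ 3| ≤ 3025 := by
      have u1 := abs_le.1 k1
      have u2 := abs_le.1 k2
      exact abs_le.2 ⟨by linarith, by linarith⟩
    have : |100 ^ 3 * (ξ 2 - 3 * ξ 0 * ξ 1 + 2 * ξ 0 ^ 3)| ≤ R⁻¹ * 3036 := by
      have w : R⁻¹ * η 2 - 3 * δ ^ 3 * η 0 * η 1 + 2 * δ ^ 3 * η 0 ^ 3 =
        R⁻¹ * η 2 + δ ^ 3 * (-3 * (η 0 * η 1) + 2 * η 0 ^ 3) := by ring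
      rw [e2, w]
      refine (abs_add_le _ _).trans ?_
      rw [abs_mul, abs_mul, abs_of_pos (show 0 < δ ^ 3 by positivity),
        abs_of_pos (show 0 < R⁻¹ by positivity)]
      have : δ ^ 3 * |-3 * (η 0 * η 1) + 2 * η 0 ^ 3| ≤ R⁻¹ * 3025 := by
        gcongr
      have : R⁻¹ * |η 2| ≤ R⁻¹ * 11 := by gcongr
      linarith
    rw [abs_mul, abs_of_pos (show (0:ℝ) < 100 ^ 3 by positivity)] at this
    have : 0 < R⁻¹ := by positivity
    linarith
  have hmd : 100 * (m : ℝ) * δ < 1 := by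
    have : 0 ≤ (j : ℝ) * δ := by positivity
    nlinarith
  have hmd0 : 0 ≤ (m : ℝ) * δ := by positivity
  have hp1 : 0 ≤ δ * (η 0 + 11) := mul_nonneg h0.le (by linarith)
  have hp2 : 0 ≤ δ * (11 - η 0) := mul_nonneg h0.le (by linarith)
  refine ⟨⟨?_, ?_, by rw [h2]; exact q1, q2⟩, ⟨⟨?_, ?_⟩, by rw [h2]; exact q1, q2⟩⟩
  · rw [← hδ]; linarith
  · rw [← hδ]; linarith
  · linarith
  · linarith


/-- Index class. -/
def Ij (R β : ℝ) (j : ℕ) : Finset ℕ := (Finset.range ⌈R ^ β⌉₊).filter (fun l => l % 100 = j)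

lemma sum_Ij {M : Type*} [AddCommMonoid M] (R β : ℝ) {j : ℕ} (hj : j < 100) (a : ℕ → M) :
    ∑ m ∈ Finset.range ⌈R ^ β⌉₊, (if j + 100 * m < ⌈R ^ β⌉₊ then a (j + 100 * m) else 0) =
      ∑ l ∈ Ij R β j, a l := by
  rw [← Finset.sum_filter]
  refine Finset.sum_nbij' (fun m => j + 100 * m) (fun l => l / 100) ?_ ?_ ?_ ?_ ?_
  · intro m hm
    simp only [Finset.mem_filter, Finset.mem_range, Ij] at hm ⊢
    omega
  · intro l hl
    simp only [Finset.mem_filter, Finset.mem_range, Ij] at hl ⊢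
    omega
  · intro m hm; omega
  · intro l hl
    simp only [Finset.mem_filter, Finset.mem_range, Ij] at hl
    omega
  · intro m hm; rfl

lemma sw_lint (s : SchwartzMap R3 ℂ) {q : ℝ} (hq : 0 < q) :
    ∫⁻ x, ‖s x‖ₑ ^ q = ENNReal.ofReal (∫ x, ‖s x‖ ^ q) := by
  rw [ofReal_integral_eq_lintegral_ofReal]
  · simp_rw [enorm_rpow_eq _ hq.le]
  · have := (s.memLp (ENNReal.ofReal q) volume).integrable_norm_rpow (by simpa using hq) (by simp)
    rwa [ENNReal.toReal_ofReal hq.le] at this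
  · exact Filter.Eventually.of_forall fun x => by positivity

lemma cap_disj {R β : ℝ} (hR : 2 ≤ R) {m m' : ℕ} {ξ : R3} (h : ξ ∈ smallCap R β m)
    (h' : ξ ∈ smallCap R β m') : m = m' := by
  have h0 : 0 < R ^ (-β) := by positivity
  have a := lt_of_mul_lt_mul_right (h.1.trans_lt h'.2.1) h0.le
  have b := lt_of_mul_lt_mul_right (h'.1.trans_lt h.2.1) h0.le
  norm_cast at a b
  omega

lemma lemA {R β D q : ℝ} (hβ : β ∈ Set.Icc (1/3 : ℝ) 1) (hR : 2 ≤ R) (hD : 0 ≤ D) (hq : 0 < q)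
    (hyp : ∀ f : SchwartzMap R3 ℂ, Function.support (𝓕 ⇑f) ⊆ M3 R β →
      (∫ x : R3, ‖f x‖ ^ q) ≤ D *
          ∑ l ∈ Finset.range ⌈R ^ β⌉₊, ∫ x : R3, ‖fproj (smallCap R β l) (⇑f) x‖ ^ q)
    {j : ℕ} (hj : j < 100) (h : ℕ → SchwartzMap R3 ℂ)
    (hs : ∀ l ξ, 𝓕 (h l : R3 → ℂ) ξ ≠ 0 → ‖Wl R β l ξ‖ ≤ 11) :
    ∫⁻ x, ‖∑ l ∈ Ij R β j, h l x‖ₑ ^ q ≤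
      ENNReal.ofReal D * ∑ l ∈ Ij R β j, ∫⁻ x, ‖h l x‖ₑ ^ q := by
  set n := ⌈R ^ β⌉₊ with hn
  have hH : ∀ m, ∃ s : SchwartzMap R3 ℂ, ∀ ξ, s ξ =
      if j + 100 * m < n then (𝓕 (h (j + 100 * m)) : SchwartzMap R3 ℂ) (Wj R β j ξ) else 0 := by
    intro m
    obtain ⟨s, hs⟩ := Wm_schwartz (-((j - 50) * R ^ (-β) / 100)) 100 (100 ^ 2) (100 ^ 3)
      (by norm_num) (by norm_num) (by norm_num) (𝓕 (h (j + 100 * m)) : SchwartzMap R3 ℂ)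
    by_cases hm : j + 100 * m < n
    · exact ⟨s, fun ξ => by rw [if_pos hm]; exact hs ξ⟩
    · exact ⟨0, fun ξ => by rw [if_neg hm]; rfl⟩
  choose H hH using hH
  have hcap : ∀ m ξ, H m ξ ≠ 0 → ξ ∈ smallCap R β m ∧ ξ ∈ M3 R β := by
    intro m ξ hne
    rw [hH] at hne
    by_cases hm : j + 100 * m < n
    · rw [if_pos hm] at hne
      refine geo_main hβ hR hm (hs _ _ ?_)
      rwa [sw_fourier_coe]
    · simp [hm] at hne
  set G : SchwartzMap R3 ℂ := ∑ m ∈ Finset.range n, H m with hG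
  have hGa : ∀ ξ, G ξ = ∑ m ∈ Finset.range n, H m ξ := by
    intro ξ; rw [hG, _root_.sum_apply]
  set F : SchwartzMap R3 ℂ := 𝓕⁻ G with hF
  have hFF : 𝓕 (F : R3 → ℂ) = G := by rw [sw_fourier_coe, hF]; simp
  have hsupp : Function.support (𝓕 ⇑F) ⊆ M3 R β := by
    intro ξ hξ
    rw [hFF, Function.mem_support, hGa] at hξ
    obtain ⟨m, -, hm⟩ := Finset.exists_ne_zero_of_sum_ne_zero hξ
    exact (hcap m ξ hm).2
  have hind : ∀ m ∈ Finset.range n, (smallCap R β m).indicator (𝓕 (F : R3 → ℂ)) = H m := by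
    intro m hm
    ext ξ
    rw [hFF]
    by_cases hξ : ξ ∈ smallCap R β m
    · rw [Set.indicator_of_mem hξ, hGa]
      refine Finset.sum_eq_single_of_mem m hm fun m' _ hne => ?_
      by_contra h0
      exact hne (cap_disj hR (hcap m' ξ h0).1 hξ)
    · rw [Set.indicator_of_notMem hξ]
      by_contra h0
      exact hξ (hcap m ξ (Ne.symm h0)).1
  have hproj : ∀ m ∈ Finset.range n, fproj (smallCap R β m) F = (𝓕⁻ (H m) : SchwartzMap R3 ℂ) := by
    intro m hm
    rw [fproj, hind m hm, sw_fourierInv_coe]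
  obtain ⟨d, hd, hsc⟩ := Wm_lint (-((j - 50) * R ^ (-β) / 100)) 100 (100 ^ 2) (100 ^ 3)
      (by norm_num) (by norm_num) (by norm_num) q hq.le
  have key := hyp F hsupp
  have key2 : ∫⁻ x, ‖F x‖ₑ ^ q ≤ ENNReal.ofReal D * ∑ m ∈ Finset.range n,
      ∫⁻ x, ‖(𝓕⁻ (H m) : SchwartzMap R3 ℂ) x‖ₑ ^ q := by
    simp_rw [sw_lint _ hq]
    rw [← ENNReal.ofReal_sum_of_nonneg (fun m _ => by positivity), ← ENNReal.ofReal_mul hD]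
    apply ENNReal.ofReal_le_ofReal
    refine key.trans (le_of_eq ?_)
    congr 1
    refine Finset.sum_congr rfl fun m hm => ?_
    rw [hproj m hm]
  have hinv : ∀ l, 𝓕⁻ ((𝓕 (h l) : SchwartzMap R3 ℂ) : R3 → ℂ) = h l := by
    intro l; rw [sw_fourierInv_coe]; simp
  have hterm : ∀ m, ∫⁻ x, ‖(𝓕⁻ (H m) : SchwartzMap R3 ℂ) x‖ₑ ^ q =
      ENNReal.ofReal (d ^ (1 - q)) *
        if j + 100 * m < n then ∫⁻ x, ‖h (j + 100 * m) x‖ₑ ^ q else 0 := by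
    intro m
    by_cases hm : j + 100 * m < n
    · rw [if_pos hm]
      have e : (H m : R3 → ℂ) = fun ξ => (𝓕 (h (j + 100 * m)) : SchwartzMap R3 ℂ)
          (Wm (-((j - 50) * R ^ (-β) / 100)) 100 (100 ^ 2) (100 ^ 3) ξ) := by
        ext ξ; rw [hH, if_pos hm]; rfl
      rw [← sw_fourierInv_coe, e, hsc, hinv]
    · rw [if_neg hm]
      have : H m = 0 := by ext ξ; rw [hH, if_neg hm]; rfl
      rw [this]
      have h0 : (𝓕⁻ (0 : SchwartzMap R3 ℂ) : SchwartzMap R3 ℂ) = 0 := by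
        exact map_zero (FourierTransform.fourierCLE ℂ (SchwartzMap R3 ℂ)).symm
      rw [h0]
      simp [hq]
  have hlhs : ∫⁻ x, ‖F x‖ₑ ^ q = ENNReal.ofReal (d ^ (1 - q)) *
      ∫⁻ x, ‖∑ l ∈ Ij R β j, h l x‖ₑ ^ q := by
    set S : SchwartzMap R3 ℂ := ∑ l ∈ Ij R β j, 𝓕 (h l) with hS
    have e : (G : R3 → ℂ) = fun ξ => S
          (Wm (-((j - 50) * R ^ (-β) / 100)) 100 (100 ^ 2) (100 ^ 3) ξ) := by
      ext ξ
      rw [hGa, hS, _root_.sum_apply, ← sum_Ij R β hj]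
      refine Finset.sum_congr rfl fun m _ => ?_
      rw [hH]; rfl
    rw [hF, ← sw_fourierInv_coe, e, hsc]
    congr 1
    refine lintegral_congr fun x => ?_
    rw [sw_fourierInv_coe, hS]
    have : (𝓕⁻ (∑ l ∈ Ij R β j, 𝓕 (h l)) : SchwartzMap R3 ℂ) = ∑ l ∈ Ij R β j, h l := by
      have := map_sum (FourierTransform.fourierCLE ℂ (SchwartzMap R3 ℂ)).symm
        (fun l => 𝓕 (h l)) (Ij R β j)
      refine this.trans (Finset.sum_congr rfl fun l _ => ?_)
      simp
    rw [this, _root_.sum_apply]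
  rw [hlhs] at key2
  simp_rw [hterm] at key2
  rw [← Finset.mul_sum, sum_Ij R β hj (fun l => ∫⁻ x, ‖h l x‖ₑ ^ q), mul_left_comm] at key2
  refine (ENNReal.mul_le_mul_iff_right ?_ ?_).1 key2
  · have : 0 < d ^ (1 - q) := by positivity
    simpa using this
  · simp

lemma sw_planch (s : SchwartzMap R3 ℂ) :
    ∫⁻ x, ‖s x‖ₑ ^ (2:ℝ) = ∫⁻ x, ‖(𝓕 s : SchwartzMap R3 ℂ) x‖ₑ ^ (2:ℝ) := by
  rw [sw_lint _ two_pos, sw_lint _ two_pos]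
  have := s.integral_norm_sq_fourier
  congr 1
  simp_rw [Real.rpow_two]
  exact this.symm

lemma lemB {R β : ℝ} (hβ : β ∈ Set.Icc (1/3 : ℝ) 1) (hR : 2 ≤ R)
    {j : ℕ} (h : ℕ → SchwartzMap R3 ℂ)
    (hs : ∀ l ξ, 𝓕 (h l : R3 → ℂ) ξ ≠ 0 → ‖Wl R β l ξ‖ ≤ 11) :
    ∫⁻ x, ‖∑ l ∈ Ij R β j, h l x‖ₑ ^ (2:ℝ) ≤
      ∑ l ∈ Ij R β j, ∫⁻ x, ‖h l x‖ₑ ^ (2:ℝ) := by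
  have e : ∀ x, ∑ l ∈ Ij R β j, h l x = (∑ l ∈ Ij R β j, h l : SchwartzMap R3 ℂ) x := by
    intro x; rw [_root_.sum_apply]
  simp_rw [e]
  rw [sw_planch]
  simp_rw [sw_planch (h _)]
  have e2 : (𝓕 (∑ l ∈ Ij R β j, h l) : SchwartzMap R3 ℂ) = ∑ l ∈ Ij R β j, 𝓕 (h l) :=
    map_sum (FourierTransform.fourierCLE ℂ (SchwartzMap R3 ℂ)) (fun l => (h l)) (Ij R β j)
  rw [e2, ← lintegral_finsetSum]
  swap
  · intro l _
    exact ((𝓕 (h l) : SchwartzMap R3 ℂ).continuous.measurable.enorm).pow_const _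
  refine lintegral_mono fun ξ => ?_
  simp only
  rw [_root_.sum_apply]
  by_cases hz : ∀ l ∈ Ij R β j, (𝓕 (h l) : SchwartzMap R3 ℂ) ξ = 0
  · rw [Finset.sum_eq_zero hz]; simp
  push Not at hz
  obtain ⟨l, hl, hlne⟩ := hz
  have : ∑ l ∈ Ij R β j, (𝓕 (h l) : SchwartzMap R3 ℂ) ξ = (𝓕 (h l) : SchwartzMap R3 ℂ) ξ := by
    refine Finset.sum_eq_single_of_mem l hl fun l' hl' hne => ?_
    by_contra h0
    apply hne
    obtain ⟨d0, -, -, -, -⟩ := dlt_facts hβ hR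
    have a1 := hs l ξ (by rwa [sw_fourier_coe])
    have a2 := hs l' ξ (by rwa [sw_fourier_coe])
    have b1 := (PiLp.norm_apply_le (Wl R β l ξ) 0).trans a1
    have b2 := (PiLp.norm_apply_le (Wl R β l' ξ) 0).trans a2
    obtain ⟨c1, -, -⟩ := geo_inv (a := l * R ^ (-β)) d0 (show 0 < R by linarith) ξ
    obtain ⟨c2, -, -⟩ := geo_inv (a := l' * R ^ (-β)) d0 (show 0 < R by linarith) ξ
    rw [Real.norm_eq_abs, abs_le] at b1 b2
    unfold Wl at b1 b2
    rw [c1] at c2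
    have c3 : (l : ℝ) - l' = Wm (l' * R ^ (-β)) (R ^ (-β))⁻¹ ((R ^ (-β)) ^ 2)⁻¹ R ξ 0 -
        Wm (l * R ^ (-β)) (R ^ (-β))⁻¹ ((R ^ (-β)) ^ 2)⁻¹ R ξ 0 := by
      apply mul_left_cancel₀ d0.ne'
      linarith
    have u1 : (l : ℝ) < l' + 100 := by linarith [b1.1, b1.2, b2.1, b2.2]
    have u2 : (l' : ℝ) < l + 100 := by linarith [b1.1, b1.2, b2.1, b2.2]
    norm_cast at u1 u2
    simp only [Finset.mem_filter, Ij] at hl hl'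
    omega
  rw [this]
  exact Finset.single_le_sum (f := fun l => ‖(𝓕 (h l) : SchwartzMap R3 ℂ) ξ‖ₑ ^ (2:ℝ))
    (fun _ _ => zero_le) hl


/-- Admissible families of cutoffs. -/
def Fam (R β A : ℝ) (φ : ℕ → SchwartzMap R3 ℂ) : Prop :=
  (∀ l ξ, ξ ∈ smallCap R β l → φ l ξ = 1) ∧ (∀ l ξ, φ l ξ ≠ 0 → ‖Wl R β l ξ‖ ≤ 11) ∧
  (∀ l ξ, ‖φ l ξ‖ ≤ 1) ∧ ∀ l, ∫⁻ x, ‖(𝓕⁻ (φ l) : SchwartzMap R3 ℂ) x‖ₑ ≤ ENNReal.ofReal A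

lemma exists_fam {β : ℝ} (hβ : β ∈ Set.Icc (1/3 : ℝ) 1) :
    ∃ A : ℝ, 0 < A ∧ ∀ R : ℝ, 2 ≤ R → ∃ φ, Fam R β A φ := by
  obtain ⟨φ, h1, h2, h3⟩ := exists_bump
  set a := ∫⁻ x, ‖(𝓕⁻ φ : SchwartzMap R3 ℂ) x‖ₑ with ha
  have hat : a ≠ ⊤ := (𝓕⁻ φ : SchwartzMap R3 ℂ).integrable.2.ne
  refine ⟨a.toReal + 1, by positivity, fun R hR => ?_⟩
  obtain ⟨d0, -, -, -, -⟩ := dlt_facts hβ hR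
  have hR0 : R ≠ 0 := by linarith
  have : ∀ l : ℕ, ∃ s : SchwartzMap R3 ℂ, ∀ ξ, s ξ = φ (Wl R β l ξ) := fun l =>
    Wm_schwartz _ _ _ _ (inv_ne_zero d0.ne') (inv_ne_zero (pow_ne_zero _ d0.ne')) hR0 φ
  choose s hs using this
  refine ⟨s, ?_, ?_, ?_, ?_⟩
  · intro l ξ hξ
    rw [hs]; exact h1 _ (geo_cap hβ hR hξ)
  · intro l ξ hξ
    rw [hs] at hξ; exact h2 _ hξ
  · intro l ξ
    rw [hs]; exact h3 _
  · intro l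
    obtain ⟨d, hd, hsc⟩ := Wm_lint (l * R ^ (-β)) (R ^ (-β))⁻¹ ((R ^ (-β)) ^ 2)⁻¹ R
      (inv_ne_zero d0.ne') (inv_ne_zero (pow_ne_zero _ d0.ne')) hR0 1 zero_le_one
    have := hsc φ
    simp only [ENNReal.rpow_one, sub_self, Real.rpow_zero, ENNReal.ofReal_one, one_mul] at this
    have e : (s l : R3 → ℂ) = fun ξ => φ (Wm (l * R ^ (-β)) (R ^ (-β))⁻¹ ((R ^ (-β)) ^ 2)⁻¹ R ξ) := by
      ext ξ; rw [hs]; rfl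
    rw [← sw_fourierInv_coe, e, this, sw_fourierInv_coe, ← ha]
    calc a = ENNReal.ofReal a.toReal := (ENNReal.ofReal_toReal hat).symm
      _ ≤ _ := ENNReal.ofReal_le_ofReal (by linarith)

/-- kernels -/
def Kf (φ : ℕ → SchwartzMap R3 ℂ) (l : ℕ) : SchwartzMap R3 ℂ := 𝓕⁻ (φ l)

lemma Bd_base {R β A q B : ℝ} (hA : 0 < A) (hq : 1 < q) (hB : 0 < B)
    {φ : ℕ → SchwartzMap R3 ℂ} (hφ : Fam R β A φ) {j : ℕ}
    (hb : ∀ h : ℕ → SchwartzMap R3 ℂ,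
      (∀ l ξ, 𝓕 (h l : R3 → ℂ) ξ ≠ 0 → ‖Wl R β l ξ‖ ≤ 11) →
      ∫⁻ x, ‖∑ l ∈ Ij R β j, h l x‖ₑ ^ q ≤
      ENNReal.ofReal B * ∑ l ∈ Ij R β j, ∫⁻ x, ‖h l x‖ₑ ^ q) :
    Bd (TT (Kf φ) (Ij R β j)) (Ij R β j) q (B * A ^ q) := by
  have hq0 : 0 < q := by linarith
  refine dens (Kf φ) _ hq (by positivity) fun s => ?_
  have e : ∀ l, (cvS (φ l) (s l) : R3 → ℂ) = cv (Kf φ l) (s l) := by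
    intro l
    ext x
    rw [cvS_apply, sw_fourierInv_coe]; rfl
  have h1 := hb (fun l => cvS (φ l) (s l)) (by
    intro l ξ hne
    rw [fourier_cvS] at hne
    exact hφ.2.1 l ξ (left_ne_zero_of_mul hne))
  simp only [e] at h1
  refine h1.trans ?_
  rw [ENNReal.ofReal_mul hB.le, mul_assoc]
  gcongr
  rw [Finset.mul_sum]
  refine Finset.sum_le_sum fun l _ => ?_
  refine (young (Kf φ l) (s l).continuous.measurable hq).trans ?_
  gcongr
  rw [← ENNReal.ofReal_rpow_of_pos hA]
  gcongr
  exact hφ.2.2.2 l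

lemma Bd.mono {T : (ℕ → R3 → ℂ) → R3 → ℂ} {I : Finset ℕ} {q B B' : ℝ} (h : Bd T I q B)
    (hB : B ≤ B') : Bd T I q B' := by
  intro g hg
  refine (h g hg).trans ?_
  gcongr

lemma Fam.int_le {R β A : ℝ} (hA : 0 < A) {φ : ℕ → SchwartzMap R3 ℂ} (hφ : Fam R β A φ) (l : ℕ) :
    ∫ x, ‖Kf φ l x‖ ≤ A := by
  have := hφ.2.2.2 l
  rw [integral_norm_eq_lintegral_enorm (Kf φ l).continuous.aestronglyMeasurable]
  exact ENNReal.toReal_le_of_le_ofReal hA.le this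

lemma card_Ij {R β : ℝ} (hβ : β ∈ Set.Icc (1/3 : ℝ) 1) (hR : 2 ≤ R) (j : ℕ) :
    ((Ij R β j).card : ℝ) ≤ 2 * R ^ β := by
  have h1 : (Ij R β j).card ≤ ⌈R ^ β⌉₊ := by
    refine (Finset.card_filter_le _ _).trans (by simp)
  have h2 : (1:ℝ) ≤ R ^ β := Real.one_le_rpow (by linarith) (by linarith [hβ.1])
  have h3 := Nat.ceil_lt_add_one (show 0 ≤ R ^ β by positivity)
  have h4 : ((Ij R β j).card : ℝ) ≤ (⌈R ^ β⌉₊ : ℝ) := by exact_mod_cast h1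
  linarith

lemma lemP {β A : ℝ} (hβ : β ∈ Set.Icc (1/3 : ℝ) 1) (hA : 0 < A)
    (hyp : ∀ ε > (0:ℝ), ∃ C > (0:ℝ), ∀ R : ℝ, 2 ≤ R →
      ∀ f : SchwartzMap R3 ℂ, Function.support (𝓕 ⇑f) ⊆ M3 R β →
      (∫ x : R3, ‖f x‖ ^ (6 + 2/β)) ≤
        C * R ^ ε * R ^ (2*β + 1) *
          ∑ l ∈ Finset.range ⌈R ^ β⌉₊,
            ∫ x : R3, ‖fproj (smallCap R β l) (⇑f) x‖ ^ (6 + 2/β))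
    (p : ℝ) (hp : 2 ≤ p) (ε : ℝ) (hε : 0 < ε) :
    ∃ C0 > (0:ℝ), ∀ R : ℝ, 2 ≤ R → ∀ φ, Fam R β A φ → ∀ j < 100,
      Bd (TT (Kf φ) (Ij R β j)) (Ij R β j) p
        (C0 * R ^ ε * (R ^ (β * (p/2 - 1)) + R ^ (β * (p - 4) - 1))) := by
  have hβ0 : 0 < β := by linarith [hβ.1]
  obtain ⟨C, hC, hyp⟩ := hyp ε hε
  set q := 6 + 2 / β with hqdef
  have hβq : β * q = 6 * β + 2 := by rw [hqdef]; field_simp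
  have hq2 : 6 < q := by
    have : 0 < 2 / β := by positivity
    linarith
  have b2 : ∀ R : ℝ, 2 ≤ R → ∀ φ, Fam R β A φ → ∀ j < 100,
      Bd (TT (Kf φ) (Ij R β j)) (Ij R β j) 2 (A ^ (2:ℝ)) := by
    intro R hR φ hφ j hj
    have := Bd_base (q := 2) (B := 1) hA one_lt_two one_pos hφ (j := j) (fun h hs => by
      simpa using lemB hβ hR h hs)
    simpa using this
  have bq : ∀ R : ℝ, 2 ≤ R → ∀ φ, Fam R β A φ → ∀ j < 100,
      Bd (TT (Kf φ) (Ij R β j)) (Ij R β j) q (C * R ^ ε * R ^ (2*β+1) * A ^ q) := by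
    intro R hR φ hφ j hj
    have hR0 : 0 < R := by linarith
    exact Bd_base hA (by linarith) (by positivity) hφ (fun h hs =>
      lemA hβ hR (by positivity) (by linarith) (hyp R hR) hj h hs)
  rcases hp.eq_or_lt with rfl | hp2
  · refine ⟨A ^ (2:ℝ), by positivity, fun R hR φ hφ j hj => (b2 R hR φ hφ j hj).mono ?_⟩
    have hR0 : 0 < R := by linarith
    have h1 : 1 ≤ R ^ ε := Real.one_le_rpow (by linarith) hε.le
    have h2 : R ^ (β * (2 / 2 - 1)) = 1 := by norm_num
    rw [h2, mul_assoc]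
    have h3 : 0 < R ^ (β * (2 - 4) - 1) := by positivity
    have h4 : 0 < A ^ (2:ℝ) := by positivity
    have : 1 ≤ R ^ ε * (1 + R ^ (β * (2 - 4) - 1)) := by nlinarith
    exact le_mul_of_one_le_right h4.le this
  rcases lt_trichotomy p q with hpq | hpq | hpq
  · have hd1 : 0 < p - 2 := by linarith
    have hd2 : 0 < q - p := by linarith
    refine ⟨p * (A ^ (2:ℝ) * (2 ^ (2:ℝ) / (p - 2)) + C * A ^ q * (2 ^ q / (q - p))), by positivity,
      fun R hR φ hφ j hj => ?_⟩
    have hR0 : 0 < R := by linarith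
    have h1 : 1 ≤ R ^ ε := Real.one_le_rpow (by linarith) hε.le
    have := marc_mid (c := R ^ (-β / 2)) (TT_add (Kf φ) (Ij R β j)) (TT_meas (Kf φ) (Ij R β j)) two_pos hp2 hpq
      (by positivity) (by positivity) (by positivity) (b2 R hR φ hφ j hj) (bq R hR φ hφ j hj)
    refine this.mono ?_
    have e1 : (R ^ (-β / 2)) ^ (2 - p) = R ^ (β * (p / 2 - 1)) := by
      rw [← Real.rpow_mul hR0.le]; congr 1; ring
    have e2 : R ^ (2 * β + 1) * (R ^ (-β / 2)) ^ (q - p) = R ^ (β * (p / 2 - 1)) := by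
      rw [← Real.rpow_mul hR0.le, ← Real.rpow_add hR0]; congr 1; linarith
    set X := R ^ (β * (p / 2 - 1)) with hX
    have hX0 : 0 < X := by positivity
    have hY0 : 0 < R ^ (β * (p - 4) - 1) := by positivity
    calc p * (A ^ (2:ℝ) * (2 ^ (2:ℝ) * (R ^ (-β / 2)) ^ (2 - p) / (p - 2)) +
          C * R ^ ε * R ^ (2 * β + 1) * A ^ q * (2 ^ q * (R ^ (-β / 2)) ^ (q - p) / (q - p)))
        = p * (A ^ (2:ℝ) * (2 ^ (2:ℝ) / (p - 2)) * ((R ^ (-β / 2)) ^ (2 - p)) +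
          C * A ^ q * (2 ^ q / (q - p)) * R ^ ε * (R ^ (2 * β + 1) * (R ^ (-β / 2)) ^ (q - p))) := by
          ring
      _ = p * (A ^ (2:ℝ) * (2 ^ (2:ℝ) / (p - 2)) * 1 +
          C * A ^ q * (2 ^ q / (q - p)) * R ^ ε) * X := by rw [e1, e2]; ring
      _ ≤ p * (A ^ (2:ℝ) * (2 ^ (2:ℝ) / (p - 2)) * R ^ ε +
          C * A ^ q * (2 ^ q / (q - p)) * R ^ ε) * X := by gcongr
      _ = p * (A ^ (2:ℝ) * (2 ^ (2:ℝ) / (p - 2)) + C * A ^ q * (2 ^ q / (q - p))) * R ^ ε * X := by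
          ring
      _ ≤ _ := by
          gcongr
          linarith
  · refine ⟨C * A ^ q, by positivity, fun R hR φ hφ j hj => ?_⟩
    have hR0 : 0 < R := by linarith
    rw [hpq]
    refine (bq R hR φ hφ j hj).mono ?_
    have e : β * (q - 4) - 1 = 2 * β + 1 := by linarith
    rw [e]
    have : 0 < R ^ (β * (q / 2 - 1)) := by positivity
    calc C * R ^ ε * R ^ (2 * β + 1) * A ^ q = C * A ^ q * R ^ ε * (R ^ (2 * β + 1)) := by ring
      _ ≤ _ := by gcongr; linarith
  · have hd : 0 < p - q := by linarith
    refine ⟨p * (C * A ^ q * (2 ^ q * (4 * A) ^ (p - q) / (p - q))), by positivity,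
      fun R hR φ hφ j hj => ?_⟩
    have hR0 : 0 < R := by linarith
    have := marc_high (A := 2 * A * R ^ β) (TT_add (Kf φ) (Ij R β j)) (TT_meas (Kf φ) (Ij R β j))
      (by linarith) hpq (by positivity) (by positivity) (bq R hR φ hφ j hj) (by
        intro g hg M hM x
        have hM0 : 0 ≤ M := (norm_nonneg _).trans (hM 0 0)
        refine (TT_bound (Kf φ) (Ij R β j) (hφ.int_le hA) g M hM x).trans ?_
        refine mul_le_mul_of_nonneg_right ?_ hM0
        calc ((Ij R β j).card : ℝ) * A ≤ (2 * R ^ β) * A :=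
              mul_le_mul_of_nonneg_right (card_Ij hβ hR j) hA.le
          _ = _ := by ring)
    refine this.mono ?_
    have e1 : R ^ (2 * β + 1) * (1 / (2 * (2 * A * R ^ β))) ^ (q - p) =
        (4 * A) ^ (p - q) * R ^ (β * (p - 4) - 1) := by
      have : (1 / (2 * (2 * A * R ^ β))) = ((4 * A) * R ^ β)⁻¹ := by rw [one_div]; congr 1; ring
      rw [this, Real.inv_rpow (by positivity), ← Real.rpow_neg (by positivity), neg_sub,
        Real.mul_rpow (by positivity) (by positivity), ← Real.rpow_mul hR0.le, mul_left_comm,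
        ← Real.rpow_add hR0]
      congr 2; linarith
    have hX0 : 0 < R ^ (β * (p / 2 - 1)) := by positivity
    calc p * (C * R ^ ε * R ^ (2 * β + 1) * A ^ q *
          (2 ^ q * (1 / (2 * (2 * A * R ^ β))) ^ (q - p) / (p - q)))
        = p * (C * A ^ q * (2 ^ q * (R ^ (2 * β + 1) * (1 / (2 * (2 * A * R ^ β))) ^ (q - p)) / (p - q))) * R ^ ε := by
          ring
      _ = p * (C * A ^ q * (2 ^ q * (4 * A) ^ (p - q) / (p - q))) * R ^ ε * R ^ (β * (p - 4) - 1) := by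
          rw [e1]; ring
      _ ≤ _ := by gcongr; linarith


lemma cap_meas (R β : ℝ) (l : ℕ) : MeasurableSet (smallCap R β l) := by
  have c : ∀ i : Fin 3, Measurable fun ξ : R3 => ξ i := fun i => by fun_prop
  have c0 := c 0
  have c1 := c 1
  have c2 := c 2
  have e : smallCap R β l = {ξ : R3 | (l : ℝ) * R ^ (-β) ≤ ξ 0} ∩ ({ξ : R3 | ξ 0 < ((l : ℝ) + 1) * R ^ (-β)} ∩
      ({ξ : R3 | |ξ 1 - (ξ 0)^2| ≤ R ^ (-2*β)} ∩ {ξ : R3 | |ξ 2 - 3*(ξ 0)*(ξ 1) + 2*(ξ 0)^3| ≤ R⁻¹})) := by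
    ext ξ; rfl
  rw [e]
  refine (measurableSet_le measurable_const c0).inter
    ((measurableSet_lt c0 measurable_const).inter ((measurableSet_le ?_ measurable_const).inter
      (measurableSet_le ?_ measurable_const)))
  · exact (c1.sub (c0.pow_const 2)).abs
  · exact ((c2.sub ((c0.const_mul 3).mul c1)).add ((c0.pow_const 3).const_mul 2)).abs

lemma fourierInv_norm_le (h : R3 → ℂ) (x : R3) : ‖𝓕⁻ h x‖ ≤ ∫ ξ, ‖h ξ‖ := by
  rw [Real.fourierInv_eq]
  refine (norm_integral_le_integral_norm _).trans (le_of_eq ?_)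
  simp [Circle.norm_smul]

lemma fourierInv_cont {h : R3 → ℂ} (hh : Integrable h) : Continuous (𝓕⁻ h) := by
  have e : 𝓕⁻ h = fun x => 𝓕 h (-x) := by
    ext x; rw [Real.fourierInv_eq_fourier_neg]
  rw [e]
  exact (VectorFourier.fourierIntegral_continuous Real.continuous_fourierChar
    (by exact continuous_inner) hh).comp continuous_neg

lemma fourierInv_sub' {h k : R3 → ℂ} (hh : Integrable h) (hk : Integrable k) (x : R3) :
    𝓕⁻ h x - 𝓕⁻ k x = 𝓕⁻ (h - k) x := by
  have e : ∀ u : R3 → ℂ, 𝓕⁻ u x = ∫ v, 𝐞 (inner ℝ v x) • u v := fun u => Real.fourierInv_eq u x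
  have hi : ∀ {u : R3 → ℂ}, Integrable u → Integrable fun v => 𝐞 (inner ℝ v x) • u v := by
    intro u hu
    refine hu.norm.mono' ?_ (Filter.Eventually.of_forall fun v => by simp [Circle.norm_smul])
    have : Continuous fun v : R3 => 𝐞 (inner ℝ v x) :=
      Real.continuous_fourierChar.comp (by fun_prop)
    exact this.aestronglyMeasurable.smul hu.1
  rw [e, e, e, ← integral_sub (hi hh) (hi hk)]
  simp [smul_sub]

lemma fourierInv_sum' (s : Finset ℕ) {h : ℕ → R3 → ℂ} (hh : ∀ l, Integrable (h l)) (x : R3) :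
    𝓕⁻ (fun ξ => ∑ l ∈ s, h l ξ) x = ∑ l ∈ s, 𝓕⁻ (h l) x := by
  have e : ∀ u : R3 → ℂ, 𝓕⁻ u x = ∫ v, 𝐞 (inner ℝ v x) • u v := fun u => Real.fourierInv_eq u x
  have hi : ∀ {u : R3 → ℂ}, Integrable u → Integrable fun v => 𝐞 (inner ℝ v x) • u v := by
    intro u hu
    refine hu.norm.mono' ?_ (Filter.Eventually.of_forall fun v => by simp [Circle.norm_smul])
    have : Continuous fun v : R3 => 𝐞 (inner ℝ v x) :=
      Real.continuous_fourierChar.comp (by fun_prop)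
    exact this.aestronglyMeasurable.smul hu.1
  simp_rw [e]
  rw [← integral_finsetSum _ fun l _ => hi (hh l)]
  simp [Finset.smul_sum]

/-- `L²` finiteness of sharp projections. -/
lemma l2_fin {h : R3 → ℂ} {φ : SchwartzMap R3 ℂ} (hh : Integrable h) (h2 : MemLp h 2 volume)
    (hφ : ∀ ξ, φ ξ * h ξ = h ξ) (hφ1 : ∀ ξ, ‖φ ξ‖ ≤ 1) :
    ∫⁻ x, ‖𝓕⁻ h x‖ₑ ^ (2:ℝ) < ⊤ := by
  have hδ : ∀ n : ℕ, ((n : ℝ≥0∞) + 1)⁻¹ ≠ 0 := fun n => by simp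
  choose s hs using fun n : ℕ => sw_approx (by norm_num) (by norm_num) h2 (hδ n)
  set k : ℕ → SchwartzMap R3 ℂ := fun n => SchwartzMap.smulLeftCLM ℂ (φ : R3 → ℂ) (s n) with hk
  have hka : ∀ n ξ, k n ξ = φ ξ * s n ξ := by
    intro n ξ
    simp [hk, SchwartzMap.smulLeftCLM_apply_apply φ.hasTemperateGrowth]
  have hφ2 : eLpNorm φ 2 volume ≠ ⊤ := (φ.memLp 2 volume).eLpNorm_ne_top
  -- pointwise convergence
  have hL1 : ∀ n, eLpNorm (h - (k n : R3 → ℂ)) 1 volume ≤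
      eLpNorm φ 2 volume * ((n : ℝ≥0∞) + 1)⁻¹ := by
    intro n
    have e : h - (k n : R3 → ℂ) = (φ : R3 → ℂ) • (h - (s n : R3 → ℂ)) := by
      ext ξ
      simp only [Pi.sub_apply, Pi.smul_apply', smul_eq_mul, hka, mul_sub, hφ]
    rw [e]
    refine (eLpNorm_smul_le_mul_eLpNorm (p := 2) (q := 2) (r := 1)
      (h2.1.sub (s n).continuous.aestronglyMeasurable) φ.continuous.aestronglyMeasurable).trans ?_
    gcongr
    exact hs n
  have hpt : ∀ x n, ‖𝓕⁻ h x - (𝓕⁻ (k n) : SchwartzMap R3 ℂ) x‖ₑ ≤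
      eLpNorm φ 2 volume * ((n : ℝ≥0∞) + 1)⁻¹ := by
    intro x n
    refine le_trans ?_ (hL1 n)
    rw [← sw_fourierInv_coe, fourierInv_sub' hh (k n).integrable, eLpNorm_one_eq_lintegral_enorm]
    rw [Real.fourierInv_eq]
    refine (enorm_integral_le_lintegral_enorm _).trans (le_of_eq ?_)
    refine lintegral_congr fun v => ?_
    rw [← ofReal_norm, ← ofReal_norm, Circle.norm_smul]
  have hδ0 : Filter.Tendsto (fun n : ℕ => eLpNorm φ 2 volume * ((n : ℝ≥0∞) + 1)⁻¹) Filter.atTop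
      (nhds 0) := by
    have h0 : Filter.Tendsto (fun n : ℕ => ((n : ℝ≥0∞) + 1)⁻¹) Filter.atTop (nhds 0) := by
      have := (Filter.tendsto_add_atTop_iff_nat 1).2 ENNReal.tendsto_inv_nat_nhds_zero
      simpa using this
    have := ENNReal.Tendsto.const_mul h0 (Or.inr hφ2)
    simpa using this
  have hlim : ∀ x, Filter.Tendsto (fun n => (𝓕⁻ (k n) : SchwartzMap R3 ℂ) x) Filter.atTop
      (nhds (𝓕⁻ h x)) := by
    intro x
    rw [tendsto_iff_edist_tendsto_0]
    refine tendsto_of_tendsto_of_tendsto_of_le_of_le tendsto_const_nhds hδ0 (fun _ => zero_le)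
      fun n => ?_
    simp only
    rw [edist_comm, edist_eq_enorm_sub]
    exact hpt x n
  have hb : ∀ n, ∫⁻ x, ‖(𝓕⁻ (k n) : SchwartzMap R3 ℂ) x‖ₑ ^ (2:ℝ) ≤
      (eLpNorm h 2 volume + 1) ^ (2:ℝ) := by
    intro n
    have e0 : (ENNReal.ofReal 2) = 2 := by simp
    rw [sw_planch]
    have e1 : (𝓕 (𝓕⁻ (k n) : SchwartzMap R3 ℂ) : SchwartzMap R3 ℂ) = k n := by simp
    rw [e1, ← eL_pow _ two_pos, e0]
    gcongr
    calc eLpNorm (k n) 2 volume ≤ eLpNorm (s n) 2 volume := by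
          refine eLpNorm_mono fun ξ => ?_
          rw [hka, norm_mul]
          exact mul_le_of_le_one_left (norm_nonneg _) (hφ1 ξ)
      _ = eLpNorm (h - (h - (s n : R3 → ℂ))) 2 volume := by congr 1; ext ξ; simp
      _ ≤ eLpNorm h 2 volume + eLpNorm (h - (s n : R3 → ℂ)) 2 volume :=
          eLpNorm_sub_le h2.1 (h2.1.sub (s n).continuous.aestronglyMeasurable) (by norm_num)
      _ ≤ _ := by
          gcongr
          refine (hs n).trans ?_
          rw [ENNReal.inv_le_one]; exact le_add_self
  have hfat : ∫⁻ x, ‖𝓕⁻ h x‖ₑ ^ (2:ℝ) ≤ (eLpNorm h 2 volume + 1) ^ (2:ℝ) := by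
    have e : ∀ x, ‖𝓕⁻ h x‖ₑ ^ (2:ℝ) = Filter.liminf
        (fun n => ‖(𝓕⁻ (k n) : SchwartzMap R3 ℂ) x‖ₑ ^ (2:ℝ)) Filter.atTop := by
      intro x
      refine (Filter.Tendsto.liminf_eq ?_).symm
      exact (ENNReal.continuous_rpow_const.tendsto _).comp ((continuous_enorm.tendsto _).comp (hlim x))
    simp_rw [e]
    refine (lintegral_liminf_le fun n =>
      ((𝓕⁻ (k n) : SchwartzMap R3 ℂ).continuous.measurable.enorm).pow_const _).trans ?_
    refine Filter.liminf_le_of_le (by isBoundedDefault) fun b hb' => ?_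
    obtain ⟨n, hn⟩ := hb'.exists
    exact hn.trans (hb n)
  refine hfat.trans_lt ?_
  exact ENNReal.rpow_lt_top_of_nonneg (by norm_num) (ENNReal.add_ne_top.2 ⟨h2.eLpNorm_ne_top, by simp⟩)

lemma lp_fin {u : R3 → ℂ} {M : ℝ} (hM : ∀ x, ‖u x‖ ≤ M) (h : ∫⁻ x, ‖u x‖ₑ ^ (2:ℝ) < ⊤) {p : ℝ}
    (hp : 2 ≤ p) : ∫⁻ x, ‖u x‖ₑ ^ p < ⊤ := by
  have hM0 : 0 ≤ M := (norm_nonneg _).trans (hM 0)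
  calc ∫⁻ x, ‖u x‖ₑ ^ p ≤ ∫⁻ x, (ENNReal.ofReal M) ^ (p - 2) * ‖u x‖ₑ ^ (2:ℝ) := by
        refine lintegral_mono fun x => ?_
        have : p = (p - 2) + 2 := by ring
        conv_lhs => rw [this, ENNReal.rpow_add_of_nonneg _ _ (by linarith) (by norm_num)]
        gcongr
        rw [← ofReal_norm]
        exact ENNReal.ofReal_le_ofReal (hM x)
    _ = (ENNReal.ofReal M) ^ (p - 2) * ∫⁻ x, ‖u x‖ₑ ^ (2:ℝ) :=
        lintegral_const_mul' _ _ (ENNReal.rpow_ne_top_of_nonneg (by linarith) (by simp))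
    _ < ⊤ := ENNReal.mul_lt_top (ENNReal.rpow_lt_top_of_nonneg (by linarith) (by simp)) h

lemma fhat_sum {R β : ℝ} (hβ : β ∈ Set.Icc (1/3 : ℝ) 1) (hR : 2 ≤ R) (f : SchwartzMap R3 ℂ)
    (hf : Function.support (𝓕 ⇑f) ⊆ M3 R β) (ξ : R3) :
    (𝓕 (f : R3 → ℂ)) ξ = ∑ l ∈ Finset.range ⌈R ^ β⌉₊, (smallCap R β l).indicator (𝓕 (f : R3 → ℂ)) ξ := by
  by_cases h0 : 𝓕 (f : R3 → ℂ) ξ = 0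
  · rw [h0]
    refine (Finset.sum_eq_zero fun l _ => ?_).symm
    by_cases hξ : ξ ∈ smallCap R β l
    · rw [Set.indicator_of_mem hξ, h0]
    · rw [Set.indicator_of_notMem hξ]
  obtain ⟨⟨a0, a1⟩, a2, a3⟩ := hf h0
  obtain ⟨d0, -, -, -, d4⟩ := dlt_facts hβ hR
  have hlt : ξ 0 < 1 := by
    refine lt_of_le_of_ne a1 fun h1 => h0 ?_
    have hc : Continuous fun t : ℝ => 𝓕 (f : R3 → ℂ) (ξ + t • EuclideanSpace.single 0 1) := by
      rw [sw_fourier_coe]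
      exact (𝓕 f : SchwartzMap R3 ℂ).continuous.comp (by fun_prop)
    have t1 : Filter.Tendsto (fun t : ℝ => 𝓕 (f : R3 → ℂ) (ξ + t • EuclideanSpace.single 0 1))
        (nhdsWithin 0 (Set.Ioi 0)) (nhds (𝓕 (f : R3 → ℂ) ξ)) := by
      have := (hc.tendsto 0).mono_left (nhdsWithin_le_nhds (s := Set.Ioi 0))
      simpa using this
    have t2 : Filter.Tendsto (fun t : ℝ => 𝓕 (f : R3 → ℂ) (ξ + t • EuclideanSpace.single 0 1))
        (nhdsWithin 0 (Set.Ioi 0)) (nhds 0) := by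
      refine tendsto_const_nhds.congr' ?_
      filter_upwards [self_mem_nhdsWithin] with t ht
      by_contra hne
      have := (hf (Ne.symm hne)).1.2
      simp [h1] at this
      exact absurd this (not_le.2 ht)
    exact tendsto_nhds_unique t1 t2
  have hRβ : 0 < R ^ β := by
    have : 0 < R := by linarith
    positivity
  set l := ⌊ξ 0 * R ^ β⌋₊ with hl
  have hle : (l : ℝ) ≤ ξ 0 * R ^ β := Nat.floor_le (by positivity)
  have hlt2 : ξ 0 * R ^ β < l + 1 := Nat.lt_floor_add_one _
  have hln : l ∈ Finset.range ⌈R ^ β⌉₊ := by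
    rw [Finset.mem_range, Nat.lt_ceil]
    nlinarith
  have e : ξ 0 * R ^ β * R ^ (-β) = ξ 0 := by rw [mul_assoc, d4, mul_one]
  have hmem : ξ ∈ smallCap R β l := by
    refine ⟨?_, ?_, a2, a3⟩
    · calc (l : ℝ) * R ^ (-β) ≤ ξ 0 * R ^ β * R ^ (-β) := by gcongr
        _ = ξ 0 := e
    · calc ξ 0 = ξ 0 * R ^ β * R ^ (-β) := e.symm
        _ < _ := by gcongr
  rw [Finset.sum_eq_single_of_mem l hln, Set.indicator_of_mem hmem]
  intro l' _ hne
  rw [Set.indicator_of_notMem]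
  intro h'
  exact hne (cap_disj hR h' hmem)


/-- **Proposition 3.11.** Small cap decoupling at the critical exponent `p_c = 6 + 2/β`
implies small cap decoupling for every `p ≥ 2`. -/
theorem critical_exponent_implies_general
    (β : ℝ) (hβ : β ∈ Set.Icc (1/3 : ℝ) 1)
    (hyp : ∀ ε > (0:ℝ), ∃ C > (0:ℝ), ∀ R : ℝ, 2 ≤ R →
      ∀ f : SchwartzMap R3 ℂ, Function.support (𝓕 ⇑f) ⊆ M3 R β →
      (∫ x : R3, ‖f x‖ ^ (6 + 2/β)) ≤
        C * R ^ ε * R ^ (2*β + 1) *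
          ∑ l ∈ Finset.range ⌈R ^ β⌉₊,
            ∫ x : R3, ‖fproj (smallCap R β l) (⇑f) x‖ ^ (6 + 2/β)) :
    ∀ p : ℝ, 2 ≤ p → ∀ ε > (0:ℝ), ∃ C' > (0:ℝ), ∀ R : ℝ, 2 ≤ R →
      ∀ f : SchwartzMap R3 ℂ, Function.support (𝓕 ⇑f) ⊆ M3 R β →
      (∫ x : R3, ‖f x‖ ^ p) ≤
        C' * R ^ ε * (R ^ (β * (p/2 - 1)) + R ^ (β * (p - 4) - 1)) *
          ∑ l ∈ Finset.range ⌈R ^ β⌉₊,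
            ∫ x : R3, ‖fproj (smallCap R β l) (⇑f) x‖ ^ p := by
  intro p hp ε hε
  have hp0 : 0 < p := by linarith
  obtain ⟨A, hA, hfam⟩ := exists_fam hβ
  obtain ⟨C0, hC0, hP⟩ := lemP hβ hA hyp p hp ε hε
  refine ⟨(100:ℝ) ^ (p - 1) * C0, by positivity, fun R hR f hf => ?_⟩
  have hR0 : 0 < R := by linarith
  obtain ⟨φ, hφ⟩ := hfam R hR
  set n := ⌈R ^ β⌉₊ with hn
  set h : ℕ → R3 → ℂ := fun l => (smallCap R β l).indicator (𝓕 (f : R3 → ℂ)) with hh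
  set g : ℕ → R3 → ℂ := fun l => fproj (smallCap R β l) f with hg
  have hgh : ∀ l, g l = 𝓕⁻ (h l) := fun l => rfl
  have hFi : Integrable (𝓕 (f : R3 → ℂ)) := by
    rw [sw_fourier_coe]; exact (𝓕 f : SchwartzMap R3 ℂ).integrable
  have hF2 : MemLp (𝓕 (f : R3 → ℂ)) 2 volume := by
    rw [sw_fourier_coe]; exact (𝓕 f : SchwartzMap R3 ℂ).memLp 2 volume
  have hhi : ∀ l, Integrable (h l) := fun l => hFi.indicator (cap_meas R β l)
  have hh2 : ∀ l, MemLp (h l) 2 volume := fun l => hF2.indicator (cap_meas R β l)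
  have hφh : ∀ l ξ, φ l ξ * h l ξ = h l ξ := by
    intro l ξ
    by_cases hξ : ξ ∈ smallCap R β l
    · rw [hφ.1 l ξ hξ, one_mul]
    · simp only [hh, Set.indicator_of_notMem hξ, mul_zero]
  have hbd : ∀ l, ∃ M : ℝ, ∀ x, ‖g l x‖ ≤ M := fun l => ⟨_, fun x => fourierInv_norm_le (h l) x⟩
  have hcont : ∀ l, Continuous (g l) := fun l => fourierInv_cont (hhi l)
  have hG : Good g := fun l => ⟨(hcont l).measurable, hbd l⟩
  have hcv : ∀ l x, cv (Kf φ l) (g l) x = g l x := by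
    intro l x
    have := cv_fourierInv (φ l) (hhi l) x
    rw [sw_fourierInv_coe] at this
    simp_rw [hφh] at this
    exact this
  have hfin : ∀ l, ∫⁻ x, ‖g l x‖ₑ ^ p < ⊤ := by
    intro l
    obtain ⟨M, hM⟩ := hbd l
    exact lp_fin hM (l2_fin (hhi l) (hh2 l) (hφh l) (hφ.2.2.1 l)) hp
  have hfsum : ∀ x, f x = ∑ l ∈ Finset.range n, g l x := by
    intro x
    have e1 : f x = 𝓕⁻ (𝓕 (f : R3 → ℂ)) x := by
      rw [sw_fourier_coe, sw_fourierInv_coe]; simp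
    have e2 : 𝓕 (f : R3 → ℂ) = fun ξ => ∑ l ∈ Finset.range n, h l ξ := by
      ext ξ; exact fhat_sum hβ hR f hf ξ
    rw [e1]
    conv_lhs => rw [e2]
    rw [fourierInv_sum' _ hhi]
    rfl
  have hfib : ∀ {M : Type} [AddCommMonoid M] (a : ℕ → M), ∑ j ∈ Finset.range 100, ∑ l ∈ Ij R β j, a l =
      ∑ l ∈ Finset.range n, a l := by
    intro M _ a
    exact Finset.sum_fiberwise_of_maps_to (fun l _ => by
      rw [Finset.mem_range]; omega) a
  have hfT : ∀ x, f x = ∑ j ∈ Finset.range 100, TT (Kf φ) (Ij R β j) g x := by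
    intro x
    rw [hfsum x, ← hfib]
    refine Finset.sum_congr rfl fun j _ => ?_
    simp only [TT, hcv]
  set B := C0 * R ^ ε * (R ^ (β * (p/2 - 1)) + R ^ (β * (p - 4) - 1)) with hB
  have hB0 : 0 ≤ B := by positivity
  have hpt : ∀ x, ‖f x‖ₑ ^ p ≤ ENNReal.ofReal ((100:ℝ) ^ (p - 1)) *
      ∑ j ∈ Finset.range 100, ‖TT (Kf φ) (Ij R β j) g x‖ₑ ^ p := by
    intro x
    rw [hfT x]
    calc _ ≤ (∑ j ∈ Finset.range 100, ‖TT (Kf φ) (Ij R β j) g x‖ₑ) ^ p := by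
          gcongr; exact enorm_sum_le _ _
      _ ≤ _ := by
          refine (ENNReal.rpow_sum_le_const_mul_sum_rpow _ _ (by linarith)).trans (le_of_eq ?_)
          congr 1
          rw [Finset.card_range, ← ENNReal.ofReal_rpow_of_pos (by norm_num)]
          congr 1
          simp
  have hmain : ∫⁻ x, ‖f x‖ₑ ^ p ≤ ENNReal.ofReal ((100:ℝ) ^ (p - 1)) * (ENNReal.ofReal B *
      ∑ l ∈ Finset.range n, ∫⁻ x, ‖g l x‖ₑ ^ p) := by
    refine (lintegral_mono hpt).trans ?_
    rw [lintegral_const_mul' _ _ (by simp), lintegral_finsetSum]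
    swap
    · intro j _
      exact ((TT_meas (Kf φ) (Ij R β j) g hG).enorm).pow_const _
    gcongr
    rw [← hfib, Finset.mul_sum]
    refine Finset.sum_le_sum fun j hj => ?_
    exact hP R hR φ hφ j (Finset.mem_range.1 hj) g hG
  have hconv : ∀ l, ∫⁻ x, ‖g l x‖ₑ ^ p = ENNReal.ofReal (∫ x, ‖g l x‖ ^ p) := by
    intro l
    have hm : Measurable fun x => ‖g l x‖ ^ p := (hcont l).measurable.norm.pow_const _
    rw [ofReal_integral_eq_lintegral_ofReal]
    · simp_rw [enorm_rpow_eq _ hp0.le]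
    · refine ⟨hm.aestronglyMeasurable, ?_⟩
      rw [hasFiniteIntegral_iff_ofReal (Filter.Eventually.of_forall fun x => by positivity)]
      simp_rw [← enorm_rpow_eq _ hp0.le]
      exact hfin l
    · exact Filter.Eventually.of_forall fun x => by positivity
  simp_rw [hconv] at hmain
  rw [sw_lint f hp0, ← ENNReal.ofReal_sum_of_nonneg (fun l _ => by positivity),
    ← ENNReal.ofReal_mul hB0, ← ENNReal.ofReal_mul (by positivity)] at hmain
  have hnn : 0 ≤ ∑ l ∈ Finset.range n, ∫ x, ‖g l x‖ ^ p :=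
    Finset.sum_nonneg fun l _ => by positivity
  have := (ENNReal.ofReal_le_ofReal_iff (by positivity)).1 hmain
  refine this.trans (le_of_eq ?_)
  rw [hB]; ring
end
end
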